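/- Smooth approximate correctors. Assume (H1)–(H4), let λ(p,L) = H̄(p,L) be defined by the ergodicity theorem, and fix p ∈ ℝ^N, P = (p,1), L ∈ ℝ. Then for every sufficiently small η > 0 there exist real numbers λ⁺_η(p,L) and λ⁻_η(p,L), a constant C > 0 independent of η, p, L, and bounded functions V⁺_η and V⁻_η on ℝ⁺×ℝ^{N+1} which are respectively a viscosity supersolution and a viscosity subsolution of λ^±_η + ∂_τ V = L + I_s[V(τ,·,y_{N+1})] − W'(V + P·Y + λ^±_η τ) + σ(τ,y) ∓ o_η(1) on ℝ⁺×ℝ^{N+1}, V(0,Y)=0, where 0 ≤ o_η(1) → 0 as η → 0⁺, such that: λ⁺_η(p,L) → λ(p,L) and λ⁻_η(p,L) → λ(p,L) as η → 0⁺, locally uniformly in (p,L); λ^±_η satisfy properties (i) and (ii) of the effective Hamiltonian (divergence to ±∞ as L → ±∞ and monotonicity in L); |V^±_η(τ,Y)| ≤ C for all (τ,Y); V^±_η are of class C² with respect to y_{N+1} with −1 ≤ ∂_{y_{N+1}}V^±_η ≤ ‖W''‖_∞/η, ‖∂²_{y_{N+1}y_{N+1}}V^±_η‖_∞ ≤ C_η,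 and for every 0 < α < min{1,2s} the Hölder seminorm in y of ∂_{y_{N+1}}V^±_η is bounded by a constant C_{η,α}. -/

import Mathlib

open MeasureTheory Filter Metric Set RealInnerProductSpace

noncomputable section

/-- `ℝ^N` as a Euclidean space. -/
abbrev EN (N : ℕ) := EuclideanSpace ℝ (Fin N)

/-- The singular kernel `g(z/|z|) |z|^{-N-2s}` of the anisotropic Lévy operator. -/
noncomputable def levyKernel (N : ℕ) (s : ℝ) (g : EN N → ℝ) (z : EN N) : ℝ :=
  g (‖z‖⁻¹ • z) * ‖z‖ ^ (-(N : ℝ) - 2 * s)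

/-- `I^{1,r}[φ, x]`: integral over `|z| ≤ r` of the second order increment of `φ`. -/
noncomputable def levyI1 (N : ℕ) (s : ℝ) (g : EN N → ℝ) (φ : EN N → ℝ) (r : ℝ) (x : EN N) : ℝ :=
  ∫ z in {z : EN N | ‖z‖ ≤ r}, (φ (x + z) - φ x - fderiv ℝ φ x z) * levyKernel N s g z

/-- `I^{2,r}[u, x]`: integral over `|z| > r` of the increment of `u`. -/
noncomputable def levyI2 (N : ℕ) (s : ℝ) (g : EN N → ℝ) (u : EN N → ℝ) (r : ℝ) (x : EN N) : ℝ :=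
  ∫ z in {z : EN N | r < ‖z‖}, (u (x + z) - u x) * levyKernel N s g z

/-- The anisotropic Lévy operator `I_s` of order `2s`, defined as a principal value. -/
noncomputable def levyOp (N : ℕ) (s : ℝ) (g : EN N → ℝ) (φ : EN N → ℝ) (x : EN N) : ℝ :=
  limUnder (nhdsWithin 0 (Ioi (0:ℝ)))
    (fun ρ => ∫ y in {y : EN N | ρ < ‖y‖}, (φ (x + y) - φ x) * levyKernel N s g y)

/-- (H1): `g` is continuous, positive on the sphere and even. -/
def H1 (N : ℕ) (g : EN N → ℝ) : Prop :=
  Continuous g ∧ (∀ z : EN N, ‖z‖ = 1 → 0 < g z) ∧ (∀ z : EN N, g (-z) = g z)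

/-- (H2): `W ∈ C^{1,1}(ℝ)` and `W(v+1) = W(v)`. -/
def H2 (W : ℝ → ℝ) : Prop :=
  ContDiff ℝ 1 W ∧ (∃ K : NNReal, LipschitzWith K (deriv W)) ∧ ∀ v, W (v + 1) = W v

/-- (H3): `σ ∈ C^{0,1}(ℝ⁺ × ℝ^N)`, 1-periodic in `t` and ℤ^N-periodic in `x`. -/
def H3 (N : ℕ) (σ : ℝ → EN N → ℝ) : Prop :=
  (∃ K : NNReal, LipschitzWith K (fun q : ℝ × EN N => σ q.1 q.2)) ∧
  (∀ t x, σ (t + 1) x = σ t x) ∧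
  (∀ (k : Fin N → ℤ) (t : ℝ) (x : EN N), σ t (x + (WithLp.equiv 2 (Fin N → ℝ)).symm (fun j => (k j : ℝ))) = σ t x)

/-- (H4): `u₀ ∈ W^{2,∞}(ℝ^N)`. -/
def H4 (N : ℕ) (u₀ : EN N → ℝ) : Prop :=
  ContDiff ℝ 2 u₀ ∧
  ∃ M, ∀ x, |u₀ x| ≤ M ∧ ‖fderiv ℝ u₀ x‖ ≤ M ∧ ‖fderiv ℝ (fderiv ℝ u₀) x‖ ≤ M

/-- Boundedness on `(0,T) × ℝ^N` for every `T > 0`. -/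
def LocBddPos (N : ℕ) (u : ℝ → EN N → ℝ) : Prop :=
  ∀ T > 0, ∃ M, ∀ t ∈ Ioc (0:ℝ) T, ∀ x, |u t x| ≤ M

/-- Viscosity subsolution of `∂_t u = F(t, x, u, ∇_x u, I_s[u(t,·)])` with initial datum `u₀`. -/
def IsSubsol (N : ℕ) (s : ℝ) (g : EN N → ℝ)
    (F : ℝ → EN N → ℝ → (EN N →L[ℝ] ℝ) → ℝ → ℝ)
    (u₀ : EN N → ℝ) (u : ℝ → EN N → ℝ) : Prop :=
  UpperSemicontinuousOn (fun q : ℝ × EN N => u q.1 q.2) (Ici 0 ×ˢ univ) ∧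
  LocBddPos N u ∧
  (∀ x, u 0 x ≤ u₀ x) ∧
  ∀ (t₀ : ℝ) (x₀ : EN N), 0 < t₀ →
    ∀ (φ : ℝ → EN N → ℝ), ContDiff ℝ 2 (fun q : ℝ × EN N => φ q.1 q.2) →
    ∀ τ r : ℝ, 0 < τ → τ < t₀ → 0 < r →
    (∀ t x, t ∈ Ioo (t₀ - τ) (t₀ + τ) → x ∈ ball x₀ r →
      u t x - φ t x ≤ u t₀ x₀ - φ t₀ x₀) →
    deriv (fun t => φ t x₀) t₀ -
      F t₀ x₀ (u t₀ x₀) (fderiv ℝ (fun x => φ t₀ x) x₀)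
        (levyI1 N s g (fun x => φ t₀ x) r x₀ + levyI2 N s g (fun x => u t₀ x) r x₀) ≤ 0

/-- Viscosity supersolution of `∂_t u = F(t, x, u, ∇_x u, I_s[u(t,·)])` with initial datum `u₀`. -/
def IsSupersol (N : ℕ) (s : ℝ) (g : EN N → ℝ)
    (F : ℝ → EN N → ℝ → (EN N →L[ℝ] ℝ) → ℝ → ℝ)
    (u₀ : EN N → ℝ) (u : ℝ → EN N → ℝ) : Prop :=
  LowerSemicontinuousOn (fun q : ℝ × EN N => u q.1 q.2) (Ici 0 ×ˢ univ) ∧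
  LocBddPos N u ∧
  (∀ x, u₀ x ≤ u 0 x) ∧
  ∀ (t₀ : ℝ) (x₀ : EN N), 0 < t₀ →
    ∀ (φ : ℝ → EN N → ℝ), ContDiff ℝ 2 (fun q : ℝ × EN N => φ q.1 q.2) →
    ∀ τ r : ℝ, 0 < τ → τ < t₀ → 0 < r →
    (∀ t x, t ∈ Ioo (t₀ - τ) (t₀ + τ) → x ∈ ball x₀ r →
      u t₀ x₀ - φ t₀ x₀ ≤ u t x - φ t x) →
    0 ≤ deriv (fun t => φ t x₀) t₀ -
      F t₀ x₀ (u t₀ x₀) (fderiv ℝ (fun x => φ t₀ x) x₀)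
        (levyI1 N s g (fun x => φ t₀ x) r x₀ + levyI2 N s g (fun x => u t₀ x) r x₀)

/-- Viscosity solution in `C_b(ℝ⁺ × ℝ^N)`. -/
def IsSol (N : ℕ) (s : ℝ) (g : EN N → ℝ)
    (F : ℝ → EN N → ℝ → (EN N →L[ℝ] ℝ) → ℝ → ℝ)
    (u₀ : EN N → ℝ) (u : ℝ → EN N → ℝ) : Prop :=
  ContinuousOn (fun q : ℝ × EN N => u q.1 q.2) (Ici 0 ×ˢ univ) ∧
  IsSubsol N s g F u₀ u ∧ IsSupersol N s g F u₀ u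

/-- The right-hand side of the cell problem
`∂_τ w = I_s[w(τ,·)] + L − W'(w + p·y) + σ(τ,y)`. -/
def cellF (N : ℕ) (W : ℝ → ℝ) (σ : ℝ → EN N → ℝ) (p : EN N) (L : ℝ) :
    ℝ → EN N → ℝ → (EN N →L[ℝ] ℝ) → ℝ → ℝ :=
  fun τ y v _ I => I + L - deriv W (v + ⟪p, y⟫) + σ τ y

/-- `w(τ,y)/τ → lam` as `τ → +∞`, locally uniformly in `y`. -/
def SlopeLim (N : ℕ) (w : ℝ → EN N → ℝ) (lam : ℝ) : Prop :=
  ∀ ε > 0, ∀ R > 0, ∃ T : ℝ, ∀ τ, T ≤ τ → ∀ y : EN N, ‖y‖ ≤ R → |w τ y / τ - lam| ≤ ε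

end

noncomputable section

/-- Viscosity subsolution of the `(N+1)`-dimensional problem
`∂_t U = F(t, y, y_{N+1}, U, ∇_y φ, ∂_{y_{N+1}} φ, I_s-term, inf_{Y'} U(t,Y'))`,
where `I_s` acts on the `y`-variable only, with initial datum `U₀`. -/
def IsSubsolNp1 (N : ℕ) (s : ℝ) (g : EN N → ℝ)
    (F : ℝ → EN N → ℝ → ℝ → (EN N →L[ℝ] ℝ) → ℝ → ℝ → ℝ → ℝ)
    (U₀ : EN N → ℝ → ℝ) (U : ℝ → EN N → ℝ → ℝ) : Prop :=
  UpperSemicontinuousOn (fun q : ℝ × EN N × ℝ => U q.1 q.2.1 q.2.2) (Ici 0 ×ˢ univ) ∧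
  (∀ T > 0, ∃ M, ∀ t ∈ Ioc (0:ℝ) T, ∀ (y : EN N) (yn : ℝ), |U t y yn| ≤ M) ∧
  (∀ y yn, U 0 y yn ≤ U₀ y yn) ∧
  ∀ (t₀ : ℝ) (y₀ : EN N) (yn₀ : ℝ), 0 < t₀ →
    ∀ (φ : ℝ → EN N → ℝ → ℝ),
      ContDiff ℝ 2 (fun q : ℝ × EN N × ℝ => φ q.1 q.2.1 q.2.2) →
    ∀ τ r : ℝ, 0 < τ → τ < t₀ → 0 < r →
    (∀ t y yn, t ∈ Ioo (t₀ - τ) (t₀ + τ) → ‖y - y₀‖ < r → |yn - yn₀| < r →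
      U t y yn - φ t y yn ≤ U t₀ y₀ yn₀ - φ t₀ y₀ yn₀) →
    deriv (fun t => φ t y₀ yn₀) t₀ -
      F t₀ y₀ yn₀ (U t₀ y₀ yn₀)
        (fderiv ℝ (fun y => φ t₀ y yn₀) y₀)
        (deriv (fun yn => φ t₀ y₀ yn) yn₀)
        (levyI1 N s g (fun y => φ t₀ y yn₀) r y₀ + levyI2 N s g (fun y => U t₀ y yn₀) r y₀)
        (⨅ q : EN N × ℝ, U t₀ q.1 q.2) ≤ 0

/-- Viscosity supersolution of the `(N+1)`-dimensional problem. -/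
def IsSupersolNp1 (N : ℕ) (s : ℝ) (g : EN N → ℝ)
    (F : ℝ → EN N → ℝ → ℝ → (EN N →L[ℝ] ℝ) → ℝ → ℝ → ℝ → ℝ)
    (U₀ : EN N → ℝ → ℝ) (U : ℝ → EN N → ℝ → ℝ) : Prop :=
  LowerSemicontinuousOn (fun q : ℝ × EN N × ℝ => U q.1 q.2.1 q.2.2) (Ici 0 ×ˢ univ) ∧
  (∀ T > 0, ∃ M, ∀ t ∈ Ioc (0:ℝ) T, ∀ (y : EN N) (yn : ℝ), |U t y yn| ≤ M) ∧
  (∀ y yn, U₀ y yn ≤ U 0 y yn) ∧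
  ∀ (t₀ : ℝ) (y₀ : EN N) (yn₀ : ℝ), 0 < t₀ →
    ∀ (φ : ℝ → EN N → ℝ → ℝ),
      ContDiff ℝ 2 (fun q : ℝ × EN N × ℝ => φ q.1 q.2.1 q.2.2) →
    ∀ τ r : ℝ, 0 < τ → τ < t₀ → 0 < r →
    (∀ t y yn, t ∈ Ioo (t₀ - τ) (t₀ + τ) → ‖y - y₀‖ < r → |yn - yn₀| < r →
      U t₀ y₀ yn₀ - φ t₀ y₀ yn₀ ≤ U t y yn - φ t y yn) →
    0 ≤ deriv (fun t => φ t y₀ yn₀) t₀ -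
      F t₀ y₀ yn₀ (U t₀ y₀ yn₀)
        (fderiv ℝ (fun y => φ t₀ y yn₀) y₀)
        (deriv (fun yn => φ t₀ y₀ yn) yn₀)
        (levyI1 N s g (fun y => φ t₀ y yn₀) r y₀ + levyI2 N s g (fun y => U t₀ y yn₀) r y₀)
        (⨅ q : EN N × ℝ, U t₀ q.1 q.2)

/-- Viscosity solution (continuous, bounded on finite time intervals) of the
`(N+1)`-dimensional problem. -/
def IsSolNp1 (N : ℕ) (s : ℝ) (g : EN N → ℝ)
    (F : ℝ → EN N → ℝ → ℝ → (EN N →L[ℝ] ℝ) → ℝ → ℝ → ℝ → ℝ)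
    (U₀ : EN N → ℝ → ℝ) (U : ℝ → EN N → ℝ → ℝ) : Prop :=
  ContinuousOn (fun q : ℝ × EN N × ℝ => U q.1 q.2.1 q.2.2) (Ici 0 ×ˢ univ) ∧
  IsSubsolNp1 N s g F U₀ U ∧ IsSupersolNp1 N s g F U₀ U

/-- `‖W'‖_∞`. -/
noncomputable def supW' (W : ℝ → ℝ) : ℝ := ⨆ v : ℝ, |deriv W v|

/-- `‖σ‖_∞` (over `ℝ⁺ × ℝ^N`). -/
noncomputable def supSigma (N : ℕ) (σ : ℝ → EN N → ℝ) : ℝ :=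
  sSup {r : ℝ | ∃ t x, 0 ≤ t ∧ r = |σ t x|}

end

/-- `‖W''‖_∞`. -/
noncomputable def supW'' (W : ℝ → ℝ) : ℝ := ⨆ v : ℝ, |deriv (deriv W) v|

/-!
Write `Y = (y, b)` with `b = y_{N+1}`. The equation is solved approximately on a long time window
`[0, T]`, starting from zero, and copies of the result are glued along `[0, ∞)`.

*Approximate solutions.* The problem `∂_t U = L + I_s[U] - W'(U + p·y + b) + σ`, `U(0, ·) = 0`, is
discretized by an explicit Euler scheme in which the jumps smaller than `ρ` are removed, so that the
scheme is monotone for small time steps. It is periodic under `b ↦ b + 1` and under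
`(y, b) ↦ (y + m, b - p·m)`, and `U + b` is nondecreasing in `b`; hence `U` oscillates by at most
one in `b` and along the lattice. In the other directions the oscillation is bounded uniformly in
time, in the discretization and in `(p, L)`: from two points at bounded distance, a fixed fraction
of the jumps larger than one can be coupled so as to land at the same place. The slope in `b` lies
in `[-1, e^{KT} - 1]` with `K = ‖W''‖_∞`. Mollification in `Y` and affine interpolation in time
give, for every `δ > 0`, a smooth solution up to an error `δ` with the same bounds.

*Growth.* These functions are smooth in `y` and affine in time on each step, so they can be compared
with the viscosity solution `w` by testing, without a comparison principle between two viscosity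
solutions. As the oscillation is bounded by some `Co`, the values `w(m T, ·)` are sub- and
superadditive in `m` up to a constant, whence `|U(t, Y) - H̄(p, L) t| ≤ C₀` on `[0, T]` with `C₀`
independent of `T`, `p` and `L`. The same comparison gives `|H̄(p, L) - L| ≤ M` and the monotonicity
in `L`.

*Gluing.* Let `T` be an integer of order `log (1/η) / (K + 1)`, so that `e^{KT} - 1 ≤ K/η`, and put
`λ^± = H̄ ± C₀/T`. On `(mT, (m+1)T]` take `V^±(τ, y, b) = U(t, (y, b + m λ^± T)) - λ^± t` with
`t = τ - mT`. Since `σ` has period one in time and `T` is an integer, `V^±` solves the equation up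
to `η` inside each window. At the end of a window `V⁺` jumps upward, because `U(T, ·) ≤ λ⁺ T`, and
`V⁻` jumps downward; both are left-continuous. A test function touching at such a time is
constrained by the left derivative only, which is the one that the super- or subsolution inequality
needs. The bound by `2 C₀` and the regularity in `b` are inherited from `U`.
-/

section BoundedC2

variable {X F : Type*} [NormedAddCommGroup X] [NormedSpace ℝ X]
  [NormedAddCommGroup F] [NormedSpace ℝ F]

lemma norm_taylor_remainder_le_mul_sq {φ : X → F} (hφ : Differentiable ℝ φ) {x z : X} {M : ℝ}
    (hM : ∀ y ∈ closedBall x ‖z‖, ‖fderiv ℝ φ y - fderiv ℝ φ x‖ ≤ M * ‖z‖) :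
    ‖φ (x + z) - φ x - fderiv ℝ φ x z‖ ≤ M * ‖z‖ ^ 2 := by
  have h := (convex_closedBall x ‖z‖).norm_image_sub_le_of_norm_fderiv_le' (𝕜 := ℝ)
    (fun w _ ↦ hφ w) hM (mem_closedBall_self (norm_nonneg z)) (y := x + z) (by simp)
  rwa [add_sub_cancel_left, mul_assoc, ← pow_two] at h

lemma exists_norm_taylor_remainder_le_mul_sq [ProperSpace X] {φ : X → F} (hφ : ContDiff ℝ 2 φ)
    (x : X) (r : ℝ) :
    ∃ M, ∀ z, ‖z‖ ≤ r → ‖φ (x + z) - φ x - fderiv ℝ φ x z‖ ≤ M * ‖z‖ ^ 2 := by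
  have hφ' : ContDiff ℝ 1 (fderiv ℝ φ) := hφ.fderiv_right (by norm_num)
  obtain ⟨M, hM⟩ := (isCompact_closedBall x r).exists_bound_of_continuousOn
    (hφ'.continuous_fderiv (by norm_num)).continuousOn
  refine ⟨M, fun z hz ↦
    norm_taylor_remainder_le_mul_sq (hφ.differentiable (by norm_num)) fun y hy ↦ ?_⟩
  have hsub : closedBall x ‖z‖ ⊆ closedBall x r := closedBall_subset_closedBall hz
  have hM0 : 0 ≤ M := (norm_nonneg _).trans (hM y (hsub hy))
  refine ((convex_closedBall x ‖z‖).norm_image_sub_le_of_norm_fderiv_le (𝕜 := ℝ)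
    (fun w _ ↦ hφ'.differentiable (by norm_num) w) (fun w hw ↦ hM w (hsub hw))
    (mem_closedBall_self (norm_nonneg z)) hy).trans ?_
  gcongr
  simpa [dist_eq_norm] using hy

lemma norm_sub_smul_add_smul_le {u v : F} {D θ : ℝ} (hθ : θ ∈ Icc 0 1) (hu : ‖u‖ ≤ D)
    (hv : ‖v‖ ≤ D) : ‖(1 - θ) • u + θ • v‖ ≤ D := by
  simp only [← mem_closedBall_zero_iff] at hu hv ⊢
  exact convex_closedBall 0 D hu hv (sub_nonneg.2 hθ.2) hθ.1 (sub_add_cancel _ _)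

/-- `C²` functions bounded by `B` together with their gradient and its Lipschitz constant: the
class on which Lévy operators are defined and bounded. -/
structure C2BoundedBy (B : ℝ) (φ : X → ℝ) : Prop where
  contDiff : ContDiff ℝ 2 φ
  abs_le : ∀ x, |φ x| ≤ B
  norm_fderiv_le : ∀ x, ‖fderiv ℝ φ x‖ ≤ B
  norm_fderiv_sub_le : ∀ x y, ‖fderiv ℝ φ x - fderiv ℝ φ y‖ ≤ B * ‖x - y‖

namespace C2BoundedBy

variable {B : ℝ} {φ ψ : X → ℝ}

lemma nonneg (h : C2BoundedBy B φ) : 0 ≤ B := (abs_nonneg _).trans (h.abs_le 0)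

lemma abs_taylor_remainder_le (h : C2BoundedBy B φ) (x z : X) :
    |φ (x + z) - φ x - fderiv ℝ φ x z| ≤ B * ‖z‖ ^ 2 :=
  norm_taylor_remainder_le_mul_sq (h.contDiff.differentiable (by norm_num)) fun y hy ↦
    (h.norm_fderiv_sub_le y x).trans
      (mul_le_mul_of_nonneg_left (mem_closedBall_iff_norm.1 hy) h.nonneg)

lemma neg (h : C2BoundedBy B φ) : C2BoundedBy B fun x ↦ -φ x := by
  refine ⟨h.contDiff.neg, fun x ↦ (abs_neg _).trans_le (h.abs_le x), fun x ↦ ?_, fun x y ↦ ?_⟩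
  · rw [fderiv_fun_neg, norm_neg]
    exact h.norm_fderiv_le x
  · rw [fderiv_fun_neg, fderiv_fun_neg, neg_sub_neg, norm_sub_rev]
    exact h.norm_fderiv_sub_le x y

lemma add_const (h : C2BoundedBy B φ) (c : ℝ) : C2BoundedBy (B + |c|) fun x ↦ φ x + c := by
  have hB : B ≤ B + |c| := le_add_of_nonneg_right (abs_nonneg c)
  refine ⟨h.contDiff.add contDiff_const, fun x ↦
    (abs_add_le _ _).trans (add_le_add_left (h.abs_le x) _), fun x ↦ ?_, fun x y ↦ ?_⟩
  · rw [fderiv_add_const]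
    exact (h.norm_fderiv_le x).trans hB
  · rw [fderiv_add_const, fderiv_add_const]
    exact (h.norm_fderiv_sub_le x y).trans (mul_le_mul_of_nonneg_right hB (norm_nonneg _))

lemma add {B' : ℝ} (hφ : C2BoundedBy B φ) (hψ : C2BoundedBy B' ψ) :
    C2BoundedBy (B + B') fun x ↦ φ x + ψ x := by
  have hfderiv : ∀ x, fderiv ℝ (fun x ↦ φ x + ψ x) x = fderiv ℝ φ x + fderiv ℝ ψ x := fun x ↦
    fderiv_fun_add (hφ.contDiff.differentiable (by norm_num) x)
      (hψ.contDiff.differentiable (by norm_num) x)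
  refine ⟨hφ.contDiff.add hψ.contDiff,
    fun x ↦ (abs_add_le _ _).trans (add_le_add (hφ.abs_le x) (hψ.abs_le x)), fun x ↦ ?_,
    fun x y ↦ ?_⟩
  · rw [hfderiv]
    exact (norm_add_le _ _).trans (add_le_add (hφ.norm_fderiv_le x) (hψ.norm_fderiv_le x))
  · rw [hfderiv, hfderiv, add_sub_add_comm, add_mul]
    exact (norm_add_le _ _).trans
      (add_le_add (hφ.norm_fderiv_sub_le x y) (hψ.norm_fderiv_sub_le x y))

lemma const_mul (h : C2BoundedBy B φ) (c : ℝ) : C2BoundedBy (|c| * B) fun x ↦ c * φ x := by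
  have hfderiv : ∀ x, fderiv ℝ (fun x ↦ c * φ x) x = c • fderiv ℝ φ x := fun x ↦
    fderiv_const_mul (h.contDiff.differentiable (by norm_num) x) c
  refine ⟨contDiff_const.mul h.contDiff, fun x ↦ ?_, fun x ↦ ?_, fun x y ↦ ?_⟩
  · rw [abs_mul]
    exact mul_le_mul_of_nonneg_left (h.abs_le x) (abs_nonneg c)
  · rw [hfderiv, norm_smul, Real.norm_eq_abs]
    exact mul_le_mul_of_nonneg_left (h.norm_fderiv_le x) (abs_nonneg c)
  · rw [hfderiv, hfderiv, ← smul_sub, norm_smul, Real.norm_eq_abs, mul_assoc]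
    exact mul_le_mul_of_nonneg_left (h.norm_fderiv_sub_le x y) (abs_nonneg c)

lemma comp_sub_const (h : C2BoundedBy B φ) (a : X) : C2BoundedBy B fun x ↦ φ (x - a) := by
  refine ⟨h.contDiff.comp (contDiff_id.sub contDiff_const), fun x ↦ h.abs_le _, fun x ↦ ?_,
    fun x y ↦ ?_⟩
  · rw [fderiv_comp_sub]
    exact h.norm_fderiv_le _
  · rw [fderiv_comp_sub, fderiv_comp_sub, ← sub_sub_sub_cancel_right x y a]
    exact h.norm_fderiv_sub_le _ _

lemma convexCombination (hφ : C2BoundedBy B φ) (hψ : C2BoundedBy B ψ) {θ : ℝ} (hθ : θ ∈ Icc 0 1) :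
    C2BoundedBy B fun x ↦ φ x + θ * (ψ x - φ x) := by
  have hfderiv : ∀ x, fderiv ℝ (fun x ↦ φ x + θ * (ψ x - φ x)) x
      = (1 - θ) • fderiv ℝ φ x + θ • fderiv ℝ ψ x := fun x ↦ by
    have hdφ := (hφ.contDiff.differentiable (by norm_num) x).hasFDerivAt
    have hdψ := (hψ.contDiff.differentiable (by norm_num) x).hasFDerivAt
    rw [(hdφ.fun_add ((hdψ.fun_sub hdφ).const_mul θ)).fderiv]
    module
  refine ⟨hφ.contDiff.add (contDiff_const.mul (hψ.contDiff.sub hφ.contDiff)), fun x ↦ ?_,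
    fun x ↦ ?_, fun x y ↦ ?_⟩
  · rw [show φ x + θ * (ψ x - φ x) = (1 - θ) • φ x + θ • ψ x by simp only [smul_eq_mul]; ring]
    exact norm_sub_smul_add_smul_le (F := ℝ) hθ (hφ.abs_le x) (hψ.abs_le x)
  · rw [hfderiv]
    exact norm_sub_smul_add_smul_le hθ (hφ.norm_fderiv_le x) (hψ.norm_fderiv_le x)
  · rw [hfderiv, hfderiv, add_sub_add_comm, ← smul_sub, ← smul_sub]
    exact norm_sub_smul_add_smul_le hθ (hφ.norm_fderiv_sub_le x y) (hψ.norm_fderiv_sub_le x y)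

lemma slice {G : X × F → ℝ} (hG : C2BoundedBy B G) (b : F) : C2BoundedBy B fun x ↦ G (x, b) := by
  have hfderiv : ∀ x, fderiv ℝ (fun x ↦ G (x, b)) x
      = (fderiv ℝ G (x, b)).comp (ContinuousLinearMap.inl ℝ X F) := fun x ↦
    ((hG.contDiff.differentiable (by norm_num) (x, b)).hasFDerivAt.comp x
      (hasFDerivAt_prodMk_left x b)).fderiv
  have hnorm : ∀ ℓ : X × F →L[ℝ] ℝ, ‖ℓ.comp (ContinuousLinearMap.inl ℝ X F)‖ ≤ ‖ℓ‖ := fun ℓ ↦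
    (ℓ.opNorm_comp_le _).trans (mul_le_of_le_one_right (norm_nonneg _)
      (ContinuousLinearMap.norm_inl_le_one ℝ X F))
  refine ⟨hG.contDiff.comp (contDiff_id.prodMk contDiff_const), fun x ↦ hG.abs_le _,
    fun x ↦ ?_, fun x y ↦ ?_⟩
  · rw [hfderiv]
    exact (hnorm _).trans (hG.norm_fderiv_le _)
  · rw [hfderiv, hfderiv, ← ContinuousLinearMap.sub_comp]
    refine (hnorm _).trans ((hG.norm_fderiv_sub_le _ _).trans_eq ?_)
    rw [Prod.mk_sub_mk, sub_self, Prod.norm_mk, norm_zero, max_eq_left (norm_nonneg _)]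

end C2BoundedBy

lemma exists_c2BoundedBy_of_hasCompactSupport {φ : X → ℝ} (hφ : ContDiff ℝ 2 φ)
    (hsupp : HasCompactSupport φ) : ∃ B, C2BoundedBy B φ := by
  have hφ' : ContDiff ℝ 1 (fderiv ℝ φ) := hφ.fderiv_right (by norm_num)
  obtain ⟨B₀, hB₀⟩ := hsupp.exists_bound_of_continuous hφ.continuous
  obtain ⟨B₁, hB₁⟩ := (hsupp.fderiv ℝ).exists_bound_of_continuous hφ'.continuous
  obtain ⟨B₂, hB₂⟩ := hφ'.lipschitzWith_of_hasCompactSupport (hsupp.fderiv ℝ) one_ne_zero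
  refine ⟨max (max B₀ B₁) B₂, hφ, fun x ↦ (hB₀ x).trans ?_, fun x ↦ (hB₁ x).trans ?_,
    fun x y ↦ (hB₂.norm_sub_le x y).trans ?_⟩
  · exact (le_max_left _ _).trans (le_max_left _ _)
  · exact (le_max_right _ _).trans (le_max_left _ _)
  · exact mul_le_mul_of_nonneg_right (le_max_right _ _) (norm_nonneg _)

end BoundedC2

/-! ### Lévy operators with a general even jump density -/

section LevyOperator

variable {E : Type*} [NormedAddCommGroup E] [InnerProductSpace ℝ E] [FiniteDimensional ℝ E]
  [MeasurableSpace E] [BorelSpace E] {k : E → ℝ}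

/-- Density of a symmetric Lévy measure: the small jumps have finite second moment and the large
ones finite mass. -/
structure IsLevyDensity (k : E → ℝ) : Prop where
  measurable : Measurable k
  nonneg : ∀ z, 0 ≤ k z
  even : ∀ z, k (-z) = k z
  integrableOn_small : ∀ r, IntegrableOn (fun z ↦ ‖z‖ ^ 2 * k z) {z | ‖z‖ ≤ r}
  integrableOn_large : ∀ r > 0, IntegrableOn k {z | r < ‖z‖}

/-- The part of the Lévy operator of density `k` due to the jumps of size at most `r`, with the
gradient compensated; for the kernel of the theorem this is `levyI1`. -/
noncomputable def smallJumps (k φ : E → ℝ) (r : ℝ) (x : E) : ℝ :=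
  ∫ z in {z | ‖z‖ ≤ r}, (φ (x + z) - φ x - fderiv ℝ φ x z) * k z

/-- The part of the Lévy operator of density `k` due to the jumps of size larger than `r`; for the
kernel of the theorem this is `levyI2`. -/
noncomputable def largeJumps (k u : E → ℝ) (r : ℝ) (x : E) : ℝ :=
  ∫ z in {z | r < ‖z‖}, (u (x + z) - u x) * k z

/-- Second moment of the jumps of size at most `r`. -/
noncomputable def smallMoment (k : E → ℝ) (r : ℝ) : ℝ := ∫ z in {z | ‖z‖ ≤ r}, ‖z‖ ^ 2 * k z

/-- Total mass of the jumps of size larger than `r`. -/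
noncomputable def largeMass (k : E → ℝ) (r : ℝ) : ℝ := ∫ z in {z | r < ‖z‖}, k z

omit [InnerProductSpace ℝ E] [FiniteDimensional ℝ E] in
lemma measurableSet_norm_le (r : ℝ) : MeasurableSet {z : E | ‖z‖ ≤ r} :=
  measurableSet_le measurable_norm measurable_const

omit [InnerProductSpace ℝ E] [FiniteDimensional ℝ E] in
lemma measurableSet_lt_norm (r : ℝ) : MeasurableSet {z : E | r < ‖z‖} :=
  measurableSet_lt measurable_const measurable_norm

lemma largeMass_nonneg (hk : IsLevyDensity k) (r : ℝ) : 0 ≤ largeMass k r :=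
  integral_nonneg hk.nonneg

lemma exists_smallMoment_le (hk : IsLevyDensity k) {ε : ℝ} (hε : 0 < ε) :
    ∃ ρ, 0 < ρ ∧ ρ ≤ 1 ∧ smallMoment k ρ ≤ ε := by
  have hlim := tendsto_setIntegral_of_antitone (μ := volume) (f := fun z ↦ ‖z‖ ^ 2 * k z)
    (s := fun n : ℕ ↦ {z : E | ‖z‖ ≤ 1 / ((n : ℝ) + 1)}) (fun n ↦ measurableSet_norm_le _)
    (fun m n hmn z (hz : ‖z‖ ≤ _) ↦ hz.trans (Nat.one_div_le_one_div hmn))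
    ⟨0, hk.integrableOn_small _⟩
  have hInter : (⋂ n : ℕ, {z : E | ‖z‖ ≤ 1 / ((n : ℝ) + 1)}) = {0} := by
    ext z
    simp only [mem_iInter, mem_ofPred_eq, mem_singleton_iff]
    refine ⟨fun hz ↦ ?_, fun hz n ↦ by rw [hz, norm_zero]; positivity⟩
    by_contra hne
    obtain ⟨n, hn⟩ := exists_nat_one_div_lt (norm_pos_iff.2 hne)
    exact absurd (hz n) (not_le.2 hn)
  have hzero : ∫ z in ({0} : Set E), ‖z‖ ^ 2 * k z = 0 := by
    rw [integral_singleton, norm_zero]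
    simp
  rw [hInter, hzero] at hlim
  obtain ⟨n, hn⟩ := (hlim.eventually (gt_mem_nhds hε)).exists
  refine ⟨1 / ((n : ℝ) + 1), by positivity, ?_, hn.le⟩
  rw [div_le_one (by positivity)]
  exact le_add_of_nonneg_left n.cast_nonneg

lemma integrableOn_smallJumps (hk : IsLevyDensity k) {φ : E → ℝ} (hφ : ContDiff ℝ 2 φ) (x : E)
    (r : ℝ) : IntegrableOn (fun z ↦ (φ (x + z) - φ x - fderiv ℝ φ x z) * k z) {z | ‖z‖ ≤ r} := by
  obtain ⟨M, hM⟩ := exists_norm_taylor_remainder_le_mul_sq hφ x r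
  have hcont : Continuous φ := hφ.continuous
  have hmeas : Measurable fun z ↦ φ (x + z) - φ x - fderiv ℝ φ x z :=
    Continuous.measurable (by fun_prop)
  refine ((hk.integrableOn_small r).const_mul M).mono'
    (hmeas.mul hk.measurable).aestronglyMeasurable
    ((ae_restrict_iff' (measurableSet_norm_le r)).2 (Eventually.of_forall fun z hz ↦ ?_))
  rw [norm_mul, Real.norm_of_nonneg (hk.nonneg z), ← mul_assoc]
  exact mul_le_mul_of_nonneg_right (hM z hz) (hk.nonneg z)

lemma integrableOn_mul_levyDensity (hk : IsLevyDensity k) {f : E → ℝ} (hf : Continuous f) {B : ℝ}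
    (hB : ∀ x, |f x| ≤ B) {r : ℝ} (hr : 0 < r) :
    IntegrableOn (fun z ↦ f z * k z) {z | r < ‖z‖} := by
  refine ((hk.integrableOn_large r hr).const_mul B).mono'
    (hf.measurable.mul hk.measurable).aestronglyMeasurable (Eventually.of_forall fun z ↦ ?_)
  rw [norm_mul, Real.norm_eq_abs, Real.norm_of_nonneg (hk.nonneg z)]
  exact mul_le_mul_of_nonneg_right (hB z) (hk.nonneg z)

lemma integrableOn_largeJumps (hk : IsLevyDensity k) {u : E → ℝ} (hu : Continuous u) {B : ℝ}
    (hB : ∀ x, |u x| ≤ B) {r : ℝ} (hr : 0 < r) (x : E) :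
    IntegrableOn (fun z ↦ (u (x + z) - u x) * k z) {z | r < ‖z‖} :=
  integrableOn_mul_levyDensity hk (by fun_prop) (B := B + B)
    (fun _ ↦ (abs_sub _ _).trans (add_le_add (hB _) (hB _))) hr

lemma abs_smallJumps_le (hk : IsLevyDensity k) {φ : E → ℝ} {B : ℝ} (hφ : C2BoundedBy B φ) (r : ℝ)
    (x : E) : |smallJumps k φ r x| ≤ B * smallMoment k r := by
  rw [smallJumps, smallMoment, ← Real.norm_eq_abs, ← integral_const_mul]
  refine norm_integral_le_of_norm_le ((hk.integrableOn_small r).const_mul B)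
    (Eventually.of_forall fun z ↦ ?_)
  rw [norm_mul, Real.norm_eq_abs, Real.norm_of_nonneg (hk.nonneg z), ← mul_assoc]
  exact mul_le_mul_of_nonneg_right (hφ.abs_taylor_remainder_le x z) (hk.nonneg z)

lemma abs_largeJumps_le (hk : IsLevyDensity k) {u : E → ℝ} {x : E} {r B : ℝ} (hr : 0 < r)
    (hB : ∀ y, |u y| ≤ B) : |largeJumps k u r x| ≤ (B + B) * largeMass k r := by
  rw [largeJumps, largeMass, ← Real.norm_eq_abs, ← integral_const_mul]
  refine norm_integral_le_of_norm_le ((hk.integrableOn_large r hr).const_mul _)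
    (Eventually.of_forall fun z ↦ ?_)
  rw [norm_mul, Real.norm_eq_abs, Real.norm_of_nonneg (hk.nonneg z)]
  exact mul_le_mul_of_nonneg_right ((abs_sub _ _).trans (add_le_add (hB _) (hB _))) (hk.nonneg z)

lemma largeJumps_mono (hk : IsLevyDensity k) {u v : E → ℝ} {x : E} {r B B' : ℝ} (hr : 0 < r)
    (hu : Continuous u) (hv : Continuous v) (hB : ∀ y, |u y| ≤ B) (hB' : ∀ y, |v y| ≤ B')
    (h : ∀ z, u (x + z) - u x ≤ v (x + z) - v x) :
    largeJumps k u r x ≤ largeJumps k v r x :=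
  setIntegral_mono (integrableOn_largeJumps hk hu hB hr x) (integrableOn_largeJumps hk hv hB' hr x)
    fun z ↦ mul_le_mul_of_nonneg_right (h z) (hk.nonneg z)

lemma smallJumps_le_of_touches_below (hk : IsLevyDensity k) {φ u : E → ℝ} {x : E} {r : ℝ}
    (hr : 0 < r) (hφ : ContDiff ℝ 2 φ) (hu : ContDiff ℝ 2 u)
    (h : ∀ y ∈ ball x r, u x - φ x ≤ u y - φ y) :
    smallJumps k φ r x ≤ smallJumps k u r x := by
  have hmin : IsLocalMin (fun y ↦ u y - φ y) x :=
    Filter.mem_of_superset (ball_mem_nhds x hr) fun y hy ↦ h y hy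
  have hgrad : fderiv ℝ u x = fderiv ℝ φ x := by
    have := hmin.fderiv_eq_zero
    rw [fderiv_fun_sub (hu.differentiable (by norm_num) x)
      (hφ.differentiable (by norm_num) x)] at this
    exact sub_eq_zero.1 this
  have hclosed : ∀ y ∈ closedBall x r, u x - φ x ≤ u y - φ y := fun y hy ↦
    le_on_closure (f := fun _ ↦ u x - φ x) (g := fun y ↦ u y - φ y) h continuousOn_const
      (hu.continuous.sub hφ.continuous).continuousOn (by rwa [closure_ball x hr.ne'])
  refine setIntegral_mono_on (integrableOn_smallJumps hk hφ x r)
    (integrableOn_smallJumps hk hu x r) (measurableSet_norm_le r) fun z hz ↦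
    mul_le_mul_of_nonneg_right ?_ (hk.nonneg z)
  have := hclosed (x + z) (by simpa using hz)
  rw [hgrad]
  linarith

lemma smallJumps_add (hk : IsLevyDensity k) {φ u : E → ℝ} {x : E} {r : ℝ}
    (hφ : ContDiff ℝ 2 φ) (hu : ContDiff ℝ 2 u) :
    smallJumps k (fun y ↦ φ y + u y) r x = smallJumps k φ r x + smallJumps k u r x := by
  simp only [smallJumps]
  rw [← integral_add (integrableOn_smallJumps hk hφ x r)
    (integrableOn_smallJumps hk hu x r), fderiv_fun_add
    (hφ.differentiable (by norm_num) x) (hu.differentiable (by norm_num) x)]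
  congr 1 with z
  simp only [add_apply]
  ring

lemma largeJumps_add (hk : IsLevyDensity k) {u v : E → ℝ} {x : E} {r B B' : ℝ} (hr : 0 < r)
    (hu : Continuous u) (hv : Continuous v) (hB : ∀ y, |u y| ≤ B) (hB' : ∀ y, |v y| ≤ B') :
    largeJumps k (fun y ↦ u y + v y) r x = largeJumps k u r x + largeJumps k v r x := by
  simp only [largeJumps]
  rw [← integral_add (integrableOn_largeJumps hk hu hB hr x)
    (integrableOn_largeJumps hk hv hB' hr x)]
  congr 1 with z
  ring

lemma smallJumps_add_const (k φ : E → ℝ) (c r : ℝ) (x : E) :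
    smallJumps k (fun y ↦ φ y + c) r x = smallJumps k φ r x := by
  simp only [smallJumps, fderiv_add_const, add_sub_add_right_eq_sub]

lemma largeJumps_add_const (k u : E → ℝ) (c r : ℝ) (x : E) :
    largeJumps k (fun y ↦ u y + c) r x = largeJumps k u r x := by
  simp only [largeJumps, add_sub_add_right_eq_sub]

lemma smallJumps_neg (k φ : E → ℝ) (r : ℝ) (x : E) :
    smallJumps k (fun y ↦ -φ y) r x = -smallJumps k φ r x := by
  simp only [smallJumps]
  rw [← integral_neg]
  congr 1 with z
  rw [fderiv_fun_neg]
  simp only [neg_apply]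
  ring

lemma largeJumps_neg (k u : E → ℝ) (r : ℝ) (x : E) :
    largeJumps k (fun y ↦ -u y) r x = -largeJumps k u r x := by
  simp only [largeJumps]
  rw [← integral_neg]
  congr 1 with z
  ring

lemma setIntegral_annulus_clm_mul_eq_zero (hk : ∀ z, k (-z) = k z) (ℓ : E →L[ℝ] ℝ) (r ρ : ℝ) :
    ∫ z in {z : E | ‖z‖ ≤ ρ} ∩ {z | r < ‖z‖}, ℓ z * k z = 0 := by
  rw [← integral_indicator ((measurableSet_norm_le ρ).inter (measurableSet_lt_norm r))]
  set F : E → ℝ := indicator ({z : E | ‖z‖ ≤ ρ} ∩ {z | r < ‖z‖}) fun z ↦ ℓ z * k z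
  have hF : ∀ z, F (-z) = -F z := fun z ↦ by
    simp only [F, indicator, mem_inter_iff, mem_ofPred_eq, norm_neg, map_neg, hk]
    split_ifs <;> simp
  have h : ∫ z, F (-z) = ∫ z, F z := integral_neg_eq_self F volume
  simp only [hF, integral_neg] at h
  linarith

lemma smallJumps_add_largeJumps_of_le (hk : IsLevyDensity k) {φ : E → ℝ} {B : ℝ}
    (hφ : C2BoundedBy B φ) (x : E) {r ρ : ℝ} (hr : 0 < r) (hrρ : r ≤ ρ) :
    smallJumps k φ r x + largeJumps k φ r x = smallJumps k φ ρ x + largeJumps k φ ρ x := by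
  set A : Set E := {z | ‖z‖ ≤ ρ} ∩ {z | r < ‖z‖}
  have hA : MeasurableSet A := (measurableSet_norm_le ρ).inter (measurableSet_lt_norm r)
  have hsmall : {z : E | ‖z‖ ≤ ρ} = {z | ‖z‖ ≤ r} ∪ A := by
    ext z
    simp only [A, mem_union, mem_inter_iff, mem_ofPred_eq]
    grind
  have hlarge : {z : E | r < ‖z‖} = A ∪ {z | ρ < ‖z‖} := by
    ext z
    simp only [A, mem_union, mem_inter_iff, mem_ofPred_eq]
    grind
  have hdisj_small : Disjoint {z : E | ‖z‖ ≤ r} A :=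
    disjoint_left.2 fun z (hz : ‖z‖ ≤ r) hzA ↦ hz.not_gt hzA.2
  have hdisj_large : Disjoint A {z : E | ρ < ‖z‖} :=
    disjoint_left.2 fun z hzA (hz : ρ < ‖z‖) ↦ hz.not_ge hzA.1
  have hi_small := integrableOn_smallJumps hk hφ.contDiff x ρ
  have hi_large := integrableOn_largeJumps hk hφ.contDiff.continuous hφ.abs_le hr x
  simp only [smallJumps, largeJumps]
  rw [hsmall] at hi_small ⊢
  rw [hlarge] at hi_large ⊢
  rw [setIntegral_union hdisj_small hA hi_small.left_of_union hi_small.right_of_union,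
    setIntegral_union hdisj_large (measurableSet_lt_norm ρ) hi_large.left_of_union
      hi_large.right_of_union]
  have hcomp : ∫ z in A, (φ (x + z) - φ x - fderiv ℝ φ x z) * k z
      = ∫ z in A, (φ (x + z) - φ x) * k z := by
    have hsub := integral_sub hi_large.left_of_union hi_small.right_of_union
    simp only [← sub_mul, sub_sub_cancel] at hsub
    rw [setIntegral_annulus_clm_mul_eq_zero hk.even] at hsub
    exact (sub_eq_zero.1 hsub.symm).symm
  rw [hcomp]
  ring

/-- The Lévy operator of density `k`, with the compensation at radius one. -/
noncomputable def levyGenerator (k φ : E → ℝ) (x : E) : ℝ :=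
  smallJumps k φ 1 x + largeJumps k φ 1 x

lemma smallJumps_add_largeJumps (hk : IsLevyDensity k) {φ : E → ℝ} {B : ℝ}
    (hφ : C2BoundedBy B φ) (x : E) {r : ℝ} (hr : 0 < r) :
    smallJumps k φ r x + largeJumps k φ r x = levyGenerator k φ x :=
  (le_total r 1).elim (smallJumps_add_largeJumps_of_le hk hφ x hr)
    fun h ↦ (smallJumps_add_largeJumps_of_le hk hφ x one_pos h).symm

lemma abs_levyGenerator_le (hk : IsLevyDensity k) {φ : E → ℝ} {B : ℝ} (hφ : C2BoundedBy B φ)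
    (x : E) : |levyGenerator k φ x| ≤ B * (smallMoment k 1 + 2 * largeMass k 1) := by
  refine ((abs_add_le _ _).trans (add_le_add (abs_smallJumps_le hk hφ 1 x)
    (abs_largeJumps_le hk one_pos hφ.abs_le))).trans_eq ?_
  ring

lemma levyGenerator_add (hk : IsLevyDensity k) {φ ψ : E → ℝ} {B B' : ℝ} (hφ : C2BoundedBy B φ)
    (hψ : C2BoundedBy B' ψ) (x : E) :
    levyGenerator k (fun y ↦ φ y + ψ y) x = levyGenerator k φ x + levyGenerator k ψ x := by
  simp only [levyGenerator]
  rw [smallJumps_add hk hφ.contDiff hψ.contDiff, largeJumps_add hk one_pos hφ.contDiff.continuous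
    hψ.contDiff.continuous hφ.abs_le hψ.abs_le]
  ring

lemma levyGenerator_add_const (k φ : E → ℝ) (c : ℝ) (x : E) :
    levyGenerator k (fun y ↦ φ y + c) x = levyGenerator k φ x := by
  simp only [levyGenerator, smallJumps_add_const, largeJumps_add_const]

lemma levyGenerator_neg (k φ : E → ℝ) (x : E) :
    levyGenerator k (fun y ↦ -φ y) x = -levyGenerator k φ x := by
  simp only [levyGenerator, smallJumps_neg, largeJumps_neg, neg_add]

end LevyOperator

section LevyKernel

variable {N : ℕ} {s : ℝ} {g : EN N → ℝ}

lemma H1.exists_bounds (hg : H1 N g) :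
    ∃ g₀ > 0, ∃ G > 0, ∀ z : EN N, ‖z‖ = 1 → g₀ ≤ g z ∧ g z ≤ G := by
  have hc : IsCompact (sphere (0 : EN N) 1) := isCompact_sphere 0 1
  rcases (sphere (0 : EN N) 1).eq_empty_or_nonempty with he | hne
  · refine ⟨1, one_pos, 1, one_pos, fun z hz ↦ ?_⟩
    rw [← mem_sphere_zero_iff_norm, he] at hz
    exact hz.elim
  · obtain ⟨a, ha, hmin⟩ := hc.exists_isMinOn hne hg.1.continuousOn
    obtain ⟨b, hb, hmax⟩ := hc.exists_isMaxOn hne hg.1.continuousOn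
    rw [mem_sphere_zero_iff_norm] at ha hb
    exact ⟨g a, hg.2.1 a ha, g b, hg.2.1 b hb, fun z hz ↦
      ⟨hmin (mem_sphere_zero_iff_norm.2 hz), hmax (mem_sphere_zero_iff_norm.2 hz)⟩⟩

lemma levyKernel_zero (hs : 0 < s) (g : EN N → ℝ) : levyKernel N s g 0 = 0 := by
  rw [levyKernel, norm_zero, Real.zero_rpow (by linarith [N.cast_nonneg (α := ℝ)]), mul_zero]

lemma levyKernel_nonneg (hs : 0 < s) (hg : H1 N g) (z : EN N) : 0 ≤ levyKernel N s g z := by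
  rcases eq_or_ne z 0 with rfl | hz
  · rw [levyKernel_zero hs]
  · exact mul_nonneg (hg.2.1 _ (norm_smul_inv_norm (𝕜 := ℝ) hz)).le (by positivity)

lemma exists_levyKernel_le (hs : 0 < s) (hg : H1 N g) :
    ∃ G > 0, ∀ z, levyKernel N s g z ≤ G * ‖z‖ ^ (-(N : ℝ) - 2 * s) := by
  obtain ⟨_, _, G, hG, hb⟩ := hg.exists_bounds
  refine ⟨G, hG, fun z ↦ ?_⟩
  rcases eq_or_ne z 0 with rfl | hz
  · rw [levyKernel_zero hs]
    positivity
  · exact mul_le_mul_of_nonneg_right (hb _ (norm_smul_inv_norm (𝕜 := ℝ) hz)).2 (by positivity)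

lemma exists_forall_le_levyKernel (hs : 0 < s) (hg : H1 N g) (R : ℝ) :
    ∃ κ > 0, ∀ z, 1 < ‖z‖ → ‖z‖ ≤ R → κ ≤ levyKernel N s g z := by
  obtain ⟨g₀, hg₀, _, _, hb⟩ := hg.exists_bounds
  have : 0 < max R 1 := lt_max_of_lt_right one_pos
  refine ⟨g₀ * max R 1 ^ (-(N : ℝ) - 2 * s), by positivity, fun z h1 hzR ↦ ?_⟩
  have hz : 0 < ‖z‖ := one_pos.trans h1
  have hunit : ‖‖z‖⁻¹ • z‖ = 1 := norm_smul_inv_norm (𝕜 := ℝ) (norm_pos_iff.1 hz)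
  refine mul_le_mul (hb _ hunit).1 ?_ (by positivity) (hg.2.1 _ hunit).le
  exact Real.rpow_le_rpow_of_nonpos hz (hzR.trans (le_max_left _ _))
    (by linarith [N.cast_nonneg (α := ℝ)])

lemma measurable_levyKernel (hg : H1 N g) : Measurable (levyKernel N s g) :=
  (hg.1.measurable.comp (measurable_norm.inv.smul measurable_id)).mul (measurable_norm.pow_const _)

lemma integrableOn_norm_rpow_of_lt_neg_finrank {E : Type*} [NormedAddCommGroup E]
    [NormedSpace ℝ E] [FiniteDimensional ℝ E] [MeasurableSpace E] [BorelSpace E] {μ : Measure E}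
    [μ.IsAddHaarMeasure] {a r : ℝ} (ha : a < -Module.finrank ℝ E) (hr : 0 < r) :
    IntegrableOn (fun z : E ↦ ‖z‖ ^ a) {z | r < ‖z‖} μ := by
  have hint : Integrable (fun z : E ↦ (1 + ‖z‖) ^ (-(-a))) μ :=
    integrable_one_add_norm (lt_neg_of_lt_neg ha)
  rw [neg_neg] at hint
  refine (hint.integrableOn.const_mul ((1 + r⁻¹) ^ (-a))).mono'
    (measurable_norm.pow_const _).aestronglyMeasurable ?_
  refine (ae_restrict_iff' (measurableSet_lt measurable_const measurable_norm)).2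
    (Eventually.of_forall fun z (hz : r < ‖z‖) ↦ ?_)
  have hz0 : 0 < ‖z‖ := hr.trans hz
  have hle : 1 + ‖z‖ ≤ (1 + r⁻¹) * ‖z‖ := by
    have : 1 ≤ r⁻¹ * ‖z‖ := by rw [← div_eq_inv_mul, one_le_div hr]; exact hz.le
    linarith
  have ha0 : a ≤ 0 := (ha.trans_le (neg_nonpos.2 (Nat.cast_nonneg _))).le
  rw [Real.norm_of_nonneg (by positivity)]
  calc ‖z‖ ^ a = (1 + r⁻¹) ^ (-a) * ((1 + r⁻¹) * ‖z‖) ^ a := by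
        rw [Real.mul_rpow (by positivity) hz0.le, ← mul_assoc, ← Real.rpow_add (by positivity),
          neg_add_cancel, Real.rpow_zero, one_mul]
    _ ≤ (1 + r⁻¹) ^ (-a) * (1 + ‖z‖) ^ a := by
        exact mul_le_mul_of_nonneg_left (Real.rpow_le_rpow_of_nonpos (by positivity) hle ha0)
          (by positivity)

lemma integrableOn_levyKernel (hs : 0 < s) (hg : H1 N g) {r : ℝ} (hr : 0 < r) :
    IntegrableOn (levyKernel N s g) {z | r < ‖z‖} := by
  obtain ⟨G, -, hG⟩ := exists_levyKernel_le hs hg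
  have hint : IntegrableOn (fun z : EN N ↦ ‖z‖ ^ (-(N : ℝ) - 2 * s)) {z | r < ‖z‖} :=
    integrableOn_norm_rpow_of_lt_neg_finrank (by rw [finrank_euclideanSpace_fin]; linarith) hr
  refine (hint.const_mul G).mono' (measurable_levyKernel hg).aestronglyMeasurable
    (Eventually.of_forall fun z ↦ ?_)
  rw [Real.norm_of_nonneg (levyKernel_nonneg hs hg z)]
  exact hG z

lemma integrableOn_norm_sq_mul_levyKernel (hN : 1 ≤ N) (hs : s ∈ Ioo 0 1) (hg : H1 N g) (r : ℝ) :
    IntegrableOn (fun z ↦ ‖z‖ ^ 2 * levyKernel N s g z) {z | ‖z‖ ≤ r} := by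
  obtain ⟨G, hG0, hG⟩ := exists_levyKernel_le hs.1 hg
  have hball : IntegrableOn (fun z ↦ ‖z‖ ^ 2 * levyKernel N s g z) (ball 0 (r + 1)) := by
    refine integrableOn_ball_of_norm_le_rpow (C := G) (α := N + 2 * s - 2)
      (by rwa [finrank_euclideanSpace_fin])
      (by rw [finrank_euclideanSpace_fin]; linarith [hs.2]) (Eventually.of_forall fun z ↦ ?_)
      (((measurable_norm.pow_const 2).mul (measurable_levyKernel hg)).aestronglyMeasurable)
    rw [Real.norm_of_nonneg (mul_nonneg (sq_nonneg _) (levyKernel_nonneg hs.1 hg z))]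
    rcases eq_or_ne z 0 with rfl | hz
    · rw [levyKernel_zero hs.1, mul_zero]
      positivity
    · have hz0 : 0 < ‖z‖ := norm_pos_iff.2 hz
      have hpow : ‖z‖ ^ (-((N : ℝ) + 2 * s - 2)) = ‖z‖ ^ 2 * ‖z‖ ^ (-(N : ℝ) - 2 * s) := by
        rw [← Real.rpow_natCast ‖z‖ 2, ← Real.rpow_add hz0]
        congr 1
        push_cast
        ring
      rw [hpow, mul_left_comm]
      exact mul_le_mul_of_nonneg_left (hG z) (sq_nonneg _)
  exact hball.mono_set fun z (hz : ‖z‖ ≤ r) ↦ mem_ball_zero_iff.2 (by linarith)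

lemma isLevyDensity_levyKernel (hN : 1 ≤ N) (hs : s ∈ Ioo 0 1) (hg : H1 N g) :
    IsLevyDensity (levyKernel N s g) where
  measurable := measurable_levyKernel hg
  nonneg := levyKernel_nonneg hs.1 hg
  even z := by rw [levyKernel, levyKernel, norm_neg, smul_neg, hg.2.2]
  integrableOn_small := integrableOn_norm_sq_mul_levyKernel hN hs hg
  integrableOn_large _ := integrableOn_levyKernel hs.1 hg

end LevyKernel

/-! ### Mollification -/

section Mollification

variable {E : Type*} [NormedAddCommGroup E] [NormedSpace ℝ E] [MeasurableSpace E]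

/-- `C²` probability densities supported in the closed ball of radius `ε`. -/
structure IsMollifier (μ : Measure E) (ε : ℝ) (ψ : E → ℝ) : Prop where
  contDiff : ContDiff ℝ 2 ψ
  hasCompactSupport : HasCompactSupport ψ
  nonneg : ∀ x, 0 ≤ ψ x
  integral_eq_one : ∫ x, ψ x ∂μ = 1
  norm_le : ∀ x, ψ x ≠ 0 → ‖x‖ ≤ ε

/-- Convolution of `u` with the density `ψ`. -/
noncomputable def mollify (μ : Measure E) (ψ u : E → ℝ) (x : E) : ℝ := ∫ t, ψ t * u (x - t) ∂μ

omit [NormedSpace ℝ E] in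
lemma mollify_const_mul (μ : Measure E) (ψ u : E → ℝ) (c : ℝ) (x : E) :
    mollify μ ψ (fun y ↦ c * u y) x = c * mollify μ ψ u x := by
  simp only [mollify, mul_left_comm _ c, integral_const_mul]

variable [BorelSpace E] [FiniteDimensional ℝ E] {μ : Measure E} [μ.IsAddHaarMeasure]

variable (μ) in
lemma exists_isMollifier {ε : ℝ} (hε : 0 < ε) : ∃ ψ : E → ℝ, IsMollifier μ ε ψ := by
  let b : ContDiffBump (0 : E) := ⟨ε / 2, ε, half_pos hε, half_lt_self hε⟩
  refine ⟨b.normed μ, b.contDiff_normed, b.hasCompactSupport_normed, b.nonneg_normed,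
    b.integral_normed, fun x hx ↦ ?_⟩
  rw [← Function.mem_support, b.support_normed_eq] at hx
  exact (mem_ball_zero_iff.1 hx).le

variable {ε : ℝ} {ψ : E → ℝ}

omit [FiniteDimensional ℝ E] in
lemma IsMollifier.integrable (hψ : IsMollifier μ ε ψ) : Integrable ψ μ :=
  hψ.contDiff.continuous.integrable_of_hasCompactSupport hψ.hasCompactSupport

omit [FiniteDimensional ℝ E] in
lemma IsMollifier.integrable_mul (hψ : IsMollifier μ ε ψ) {u : E → ℝ} (hu : Continuous u) :
    Integrable (fun t ↦ ψ t * u t) μ :=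
  (hψ.contDiff.continuous.mul hu).integrable_of_hasCompactSupport hψ.hasCompactSupport.mul_right

omit [BorelSpace E] [FiniteDimensional ℝ E] [μ.IsAddHaarMeasure] in
lemma mollify_const (hψ : IsMollifier μ ε ψ) (c : ℝ) (x : E) : mollify μ ψ (fun _ ↦ c) x = c := by
  rw [mollify, integral_mul_const, hψ.integral_eq_one, one_mul]

omit [FiniteDimensional ℝ E] in
lemma mollify_add (hψ : IsMollifier μ ε ψ) {u v : E → ℝ} (hu : Continuous u) (hv : Continuous v)
    (x : E) : mollify μ ψ (fun y ↦ u y + v y) x = mollify μ ψ u x + mollify μ ψ v x := by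
  simp only [mollify, mul_add]
  exact integral_add (hψ.integrable_mul (by fun_prop)) (hψ.integrable_mul (by fun_prop))

omit [FiniteDimensional ℝ E] in
lemma mollify_le_mollify_add (hψ : IsMollifier μ ε ψ) {u v : E → ℝ} (hu : Continuous u)
    (hv : Continuous v) {x y : E} {c : ℝ} (h : ∀ t, ‖t‖ ≤ ε → u (x - t) ≤ v (y - t) + c) :
    mollify μ ψ u x ≤ mollify μ ψ v y + c := by
  have hadd : mollify μ ψ v y + c = ∫ t, ψ t * (v (y - t) + c) ∂μ := by
    simp only [mul_add]
    rw [integral_add (hψ.integrable_mul (by fun_prop)) (hψ.integrable.mul_const c),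
      integral_mul_const, hψ.integral_eq_one, one_mul, mollify]
  rw [hadd]
  refine integral_mono (hψ.integrable_mul (by fun_prop)) (hψ.integrable_mul (by fun_prop))
    fun t ↦ ?_
  rcases eq_or_ne (ψ t) 0 with ht | ht
  · simp only [ht, zero_mul, le_refl]
  · exact mul_le_mul_of_nonneg_left (h t (hψ.norm_le t ht)) (hψ.nonneg t)

omit [FiniteDimensional ℝ E] in
lemma abs_mollify_sub_le (hψ : IsMollifier μ ε ψ) {u : E → ℝ} (hu : Continuous u) {x : E}
    {c κ : ℝ} (h : ∀ t, ‖t‖ ≤ ε → |u (x - t) - c| ≤ κ) : |mollify μ ψ u x - c| ≤ κ := by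
  have hle := mollify_le_mollify_add hψ hu (continuous_const (y := c)) (x := x) (y := x)
    (c := κ) fun t ht ↦ by linarith [(abs_le.1 (h t ht)).2]
  have hge := mollify_le_mollify_add hψ (continuous_const (y := c)) hu (x := x) (y := x)
    (c := κ) fun t ht ↦ by linarith [(abs_le.1 (h t ht)).1]
  rw [mollify_const hψ] at hle hge
  exact abs_sub_le_iff.2 ⟨by linarith, by linarith⟩

open scoped Convolution in
set_option maxSynthPendingDepth 3 in
lemma exists_hasFDerivAt_convolution_norm_le {F G : Type*} [NormedAddCommGroup F]
    [NormedSpace ℝ F] [NormedAddCommGroup G] [NormedSpace ℝ G]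
    (L : F →L[ℝ] ℝ →L[ℝ] G) {f : E → F} (hf : ContDiff ℝ 1 f) (hc : HasCompactSupport f) :
    ∃ C, 0 ≤ C ∧ ∀ (u : E → ℝ) (B : ℝ), Continuous u → (∀ x, |u x| ≤ B) → ∀ x,
      HasFDerivAt (f ⋆[L, μ] u) ((fderiv ℝ f ⋆[L.precompL E, μ] u) x) x ∧
      ‖(fderiv ℝ f ⋆[L.precompL E, μ] u) x‖ ≤ C * B := by
  have hint : Integrable (fun t ↦ ‖fderiv ℝ f t‖) μ :=
    (hf.continuous_fderiv (by norm_num)).norm.integrable_of_hasCompactSupport (hc.fderiv ℝ).norm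
  refine ⟨‖L.precompL E‖ * ∫ t, ‖fderiv ℝ f t‖ ∂μ,
    mul_nonneg (norm_nonneg _) (integral_nonneg fun _ ↦ norm_nonneg _), fun u B hu hB x ↦
    ⟨hc.hasFDerivAt_convolution_left L hf hu.locallyIntegrable x, ?_⟩⟩
  rw [convolution_def, mul_assoc, ← integral_mul_const, ← integral_const_mul]
  refine norm_integral_le_of_norm_le ((hint.mul_const B).const_mul _)
    (Eventually.of_forall fun t ↦ ((L.precompL E).le_opNorm₂ _ _).trans ?_)
  rw [mul_assoc]
  gcongr
  exact hB _

open scoped Convolution in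
lemma exists_c2BoundedBy_mollify (hψ : IsMollifier μ ε ψ) :
    ∃ C, 0 ≤ C ∧ ∀ (u : E → ℝ) (B : ℝ), Continuous u → (∀ x, |u x| ≤ B) →
      C2BoundedBy (C * B) (mollify μ ψ u) := by
  let L := ContinuousLinearMap.mul ℝ ℝ
  have hψ' : ContDiff ℝ 1 (fderiv ℝ ψ) := hψ.contDiff.fderiv_right (by norm_num)
  obtain ⟨C₁, hC₁, h₁⟩ := exists_hasFDerivAt_convolution_norm_le (μ := μ) L
    (hψ.contDiff.of_le (by norm_num)) hψ.hasCompactSupport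
  obtain ⟨C₂, hC₂, h₂⟩ := exists_hasFDerivAt_convolution_norm_le (μ := μ) (L.precompL E) hψ'
    (hψ.hasCompactSupport.fderiv ℝ)
  refine ⟨1 + C₁ + C₂, by positivity, fun u B hu hB ↦ ?_⟩
  have hB0 : 0 ≤ B := (abs_nonneg _).trans (hB 0)
  have hconv : mollify μ ψ u = ψ ⋆[L, μ] u := rfl
  have hfderiv : fderiv ℝ (mollify μ ψ u) = fderiv ℝ ψ ⋆[L.precompL E, μ] u := by
    ext1 x
    exact (h₁ u B hu hB x).1.fderiv
  refine ⟨hconv ▸ hψ.hasCompactSupport.contDiff_convolution_left L hψ.contDiff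
    hu.locallyIntegrable, fun x ↦ ?_, fun x ↦ ?_, fun x y ↦ ?_⟩
  · have h := abs_mollify_sub_le hψ hu (x := x) (c := 0) fun t _ ↦ by
      simpa only [sub_zero] using hB (x - t)
    rw [sub_zero] at h
    exact h.trans (le_mul_of_one_le_left hB0 (by linarith))
  · rw [hfderiv]
    exact (h₁ u B hu hB x).2.trans (mul_le_mul_of_nonneg_right (by linarith) hB0)
  · rw [hfderiv]
    refine convex_univ.norm_image_sub_le_of_norm_hasFDerivWithin_le (𝕜 := ℝ)
      (fun w _ ↦ (h₂ u B hu hB w).1.hasFDerivWithinAt) (fun w _ ↦ ?_) (mem_univ _) (mem_univ _)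
    exact (h₂ u B hu hB w).2.trans (mul_le_mul_of_nonneg_right (by linarith) hB0)

end Mollification

section MollifyLargeJumps

variable {E : Type*} [NormedAddCommGroup E] [InnerProductSpace ℝ E] [FiniteDimensional ℝ E]
  [MeasurableSpace E] [BorelSpace E] {k : E → ℝ}

instance isAddHaarMeasure_volume_prod_real : (volume : Measure (E × ℝ)).IsAddHaarMeasure :=
  inferInstanceAs ((volume : Measure E).prod (volume : Measure ℝ)).IsAddHaarMeasure

lemma largeJumps_mollify (hk : IsLevyDensity k) {ε : ℝ} {ψ : E × ℝ → ℝ}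
    (hψ : IsMollifier volume ε ψ) {u : E × ℝ → ℝ} (hu : Continuous u) {B : ℝ}
    (hB : ∀ Y, |u Y| ≤ B) {ρ : ℝ} (hρ : 0 < ρ) (y : E) (a : ℝ) :
    largeJumps k (fun y ↦ mollify volume ψ u (y, a)) ρ y
      = mollify volume ψ (fun Y ↦ largeJumps k (fun y ↦ u (y, Y.2)) ρ Y.1) (y, a) := by
  have hint : Integrable (fun q : E × (E × ℝ) ↦
      ψ q.2 * (u ((y + q.1, a) - q.2) - u ((y, a) - q.2)) * k q.1)
      ((volume.restrict {z : E | ρ < ‖z‖}).prod volume) := by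
    refine ((hk.integrableOn_large ρ hρ).integrable.mul_prod
      (hψ.integrable.mul_const (B + B))).mono' ?_ (Eventually.of_forall fun q ↦ ?_)
    · have := hψ.contDiff.continuous
      exact ((Continuous.measurable (by fun_prop)).mul
        (hk.measurable.comp measurable_fst)).aestronglyMeasurable
    · rw [norm_mul, norm_mul, Real.norm_of_nonneg (hψ.nonneg _), Real.norm_eq_abs,
        Real.norm_of_nonneg (hk.nonneg _), mul_comm]
      exact mul_le_mul_of_nonneg_left (mul_le_mul_of_nonneg_left
        ((abs_sub _ _).trans (add_le_add (hB _) (hB _))) (hψ.nonneg _)) (hk.nonneg _)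
  have hleft : largeJumps k (fun y ↦ mollify volume ψ u (y, a)) ρ y
      = ∫ z in {z | ρ < ‖z‖}, ∫ t, ψ t * (u ((y + z, a) - t) - u ((y, a) - t)) * k z := by
    rw [largeJumps]
    congr 1 with z
    simp only [mollify, integral_mul_const, mul_sub]
    rw [← integral_sub (hψ.integrable_mul (by fun_prop)) (hψ.integrable_mul (by fun_prop))]
  have hright : mollify volume ψ (fun Y ↦ largeJumps k (fun y ↦ u (y, Y.2)) ρ Y.1) (y, a)
      = ∫ t, ∫ z in {z | ρ < ‖z‖}, ψ t * (u ((y + z, a) - t) - u ((y, a) - t)) * k z := by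
    rw [mollify]
    congr 1 with t
    rw [largeJumps, ← integral_const_mul]
    congr 1 with z
    simp only [add_sub_right_comm, mul_assoc, Prod.sub_def]
  rw [hleft, hright]
  exact integral_integral_swap hint

end MollifyLargeJumps

/-! ### Coupling of the jumps -/

section Coupling

variable {E : Type*} [NormedAddCommGroup E] [InnerProductSpace ℝ E] [FiniteDimensional ℝ E]
  [MeasurableSpace E] [BorelSpace E] {k : E → ℝ}

lemma integral_coupled_jumps (hk : IsLevyDensity k) {u u' : E → ℝ} {r B B' : ℝ} (hr : 0 < r)
    (hu : Continuous u) (hu' : Continuous u') (hB : ∀ y, |u y| ≤ B) (hB' : ∀ y, |u' y| ≤ B')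
    (y y' : E) (c : ℝ) :
    ∫ z in {z | r < ‖z‖}, (c - (u (y + z) - u' (y' + z))) * k z
      = largeMass k r * (c - (u y - u' y')) - (largeJumps k u r y - largeJumps k u' r y') := by
  have hint := integrableOn_largeJumps hk hu hB hr y
  have hint' := integrableOn_largeJumps hk hu' hB' hr y'
  have hmass := (hk.integrableOn_large r hr).const_mul (c - (u y - u' y'))
  rw [largeJumps, largeJumps, sub_sub_eq_add_sub, largeMass, mul_comm, ← integral_const_mul,
    ← integral_add hmass hint', ← integral_sub (hmass.fun_add hint') hint]
  congr 1 with z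
  ring

lemma integrableOn_coupled_jumps (hk : IsLevyDensity k) {u u' : E → ℝ} {r B B' : ℝ} (hr : 0 < r)
    (hu : Continuous u) (hu' : Continuous u') (hB : ∀ y, |u y| ≤ B) (hB' : ∀ y, |u' y| ≤ B')
    (y y' : E) (c : ℝ) :
    IntegrableOn (fun z ↦ (c - (u (y + z) - u' (y' + z))) * k z) {z | r < ‖z‖} :=
  integrableOn_mul_levyDensity hk (by fun_prop) (B := |c| + (B + B'))
    (fun _ ↦ (abs_sub _ _).trans (add_le_add_right ((abs_sub _ _).trans
      (add_le_add (hB _) (hB' _))) _)) hr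

/-- Synchronous coupling: the same jumps are used at `y` and at `y'`. -/
lemma largeJumps_sub_le (hk : IsLevyDensity k) {u u' : E → ℝ} {r B B' : ℝ} (hr : 0 < r)
    (hu : Continuous u) (hu' : Continuous u') (hB : ∀ y, |u y| ≤ B) (hB' : ∀ y, |u' y| ≤ B')
    {y y' : E} {c : ℝ} (h : ∀ z, u (y + z) - u' (y' + z) ≤ c) :
    largeJumps k u r y - largeJumps k u' r y' ≤ largeMass k r * (c - (u y - u' y')) := by
  have hnonneg : 0 ≤ ∫ z in {z | r < ‖z‖}, (c - (u (y + z) - u' (y' + z))) * k z :=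
    integral_nonneg fun z ↦ mul_nonneg (sub_nonneg.2 (h z)) (hk.nonneg z)
  rw [integral_coupled_jumps hk hr hu hu' hB hB'] at hnonneg
  exact sub_nonneg.1 hnonneg

/-- Only the jumps of size at most `R` are coupled synchronously. -/
lemma largeJumps_sub_le_of_le (hk : IsLevyDensity k) {u u' : E → ℝ} {r R B B' : ℝ} (hr : 0 < r)
    (hrR : r ≤ R) (hu : Continuous u) (hu' : Continuous u') (hB : ∀ y, |u y| ≤ B)
    (hB' : ∀ y, |u' y| ≤ B') {y y' : E} {c : ℝ} (h : ∀ z, u (y + z) - u' (y' + z) ≤ c) :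
    largeJumps k u r y - largeJumps k u' r y'
      ≤ (largeMass k r - largeMass k R) * (c - (u y - u' y'))
        + (largeJumps k u R y - largeJumps k u' R y') := by
  have hmono : ∫ z in {z | R < ‖z‖}, (c - (u (y + z) - u' (y' + z))) * k z
      ≤ ∫ z in {z | r < ‖z‖}, (c - (u (y + z) - u' (y' + z))) * k z :=
    setIntegral_mono_set (integrableOn_coupled_jumps hk hr hu hu' hB hB' y y' c)
      (Eventually.of_forall fun z ↦ mul_nonneg (sub_nonneg.2 (h z)) (hk.nonneg z))
      (Eventually.of_forall fun z hz ↦ hrR.trans_lt hz)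
  rw [integral_coupled_jumps hk hr hu hu' hB hB',
    integral_coupled_jumps hk (hr.trans_le hrR) hu hu' hB hB'] at hmono
  linarith

lemma mul_setIntegral_le_largeJumps_add (hk : IsLevyDensity k) {u : E → ℝ} {r B c κ : ℝ}
    (hr : 0 < r) (hu : Continuous u) (hB : ∀ y, |u y| ≤ B) (hc : ∀ y, c ≤ u y) {S : Set E}
    (hS : IsCompact S) (hSr : ∀ z ∈ S, r < ‖z‖) (hκ : ∀ z ∈ S, κ ≤ k z) (y : E) :
    κ * ∫ z in S, (u (y + z) - c) ≤ largeJumps k u r y + largeMass k r * (u y - c) := by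
  have hint : IntegrableOn (fun z ↦ (u (y + z) - c) * k z) {z | r < ‖z‖} :=
    integrableOn_mul_levyDensity hk (by fun_prop)
      (fun z ↦ (abs_sub _ _).trans (add_le_add_left (hB (y + z)) |c|)) hr
  have hsplit : largeJumps k u r y + largeMass k r * (u y - c)
      = ∫ z in {z | r < ‖z‖}, (u (y + z) - c) * k z := by
    rw [largeJumps, largeMass, mul_comm, ← integral_const_mul, ← integral_add
      (integrableOn_largeJumps hk hu hB hr y) ((hk.integrableOn_large r hr).const_mul _)]
    congr 1 with z
    ring
  rw [hsplit, ← integral_const_mul]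
  calc ∫ z in S, κ * (u (y + z) - c)
      ≤ ∫ z in S, (u (y + z) - c) * k z := by
        refine setIntegral_mono_on (ContinuousOn.integrableOn_compact hS (by fun_prop))
          (hint.mono_set hSr) hS.measurableSet fun z hz ↦ ?_
        rw [mul_comm]
        exact mul_le_mul_of_nonneg_left (hκ z hz) (sub_nonneg.2 (hc _))
    _ ≤ ∫ z in {z | r < ‖z‖}, (u (y + z) - c) * k z :=
        setIntegral_mono_set hint (Eventually.of_forall fun z ↦
          mul_nonneg (sub_nonneg.2 (hc _)) (hk.nonneg z)) (Eventually.of_forall hSr)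

/-- Doeblin coupling: the amount `κ * volume S` of the jumps issued from `y`, and the same amount
of the jumps issued from `y'`, land at the same place. -/
lemma largeJumps_sub_le_of_common_landing (hk : IsLevyDensity k) {u : E → ℝ} {r B i G κ : ℝ}
    (hr : 0 < r) (hu : Continuous u) (hB : ∀ y, |u y| ≤ B) (hi : ∀ y, i ≤ u y)
    (hG : ∀ y, u y ≤ i + G) {y y' : E} {S : Set E} (hS : IsCompact S)
    (hSr : ∀ z ∈ S, r < ‖z - y‖ ∧ r < ‖z - y'‖) (hκ : ∀ z ∈ S, κ ≤ k (z - y) ∧ κ ≤ k (z - y')) :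
    largeJumps k u r y - largeJumps k u r y'
      ≤ (largeMass k r - κ * volume.real S) * G - largeMass k r * (u y - u y') := by
  have htranslate (f : E → ℝ) (x : E) :
      ∫ z in (fun z ↦ x + z) ⁻¹' S, f (x + z) = ∫ z in S, f z :=
    (measurePreserving_add_left volume x).setIntegral_preimage_emb
      (Homeomorph.addLeft x).measurableEmbedding f S
  have hcompact (x : E) : IsCompact ((fun z ↦ x + z) ⁻¹' S) :=
    (Homeomorph.addLeft x).isCompact_preimage.2 hS
  have hy := mul_setIntegral_le_largeJumps_add hk hr (u := fun x ↦ -u x) (κ := κ)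
    (c := -(i + G)) (by fun_prop) (fun x ↦ (abs_neg (u x)).trans_le (hB x))
    (fun x ↦ neg_le_neg (hG x)) (hcompact y)
    (fun z hz ↦ by simpa using (hSr _ hz).1) (fun z hz ↦ by simpa using (hκ _ hz).1) y
  have hy' := mul_setIntegral_le_largeJumps_add hk hr (κ := κ) (c := i) hu hB hi (hcompact y')
    (fun z hz ↦ by simpa using (hSr _ hz).2) (fun z hz ↦ by simpa using (hκ _ hz).2) y'
  rw [htranslate (fun x ↦ -u x - -(i + G)) y] at hy
  rw [htranslate (fun x ↦ u x - i) y'] at hy'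
  have hsum : (∫ z in S, (-u z - -(i + G))) + ∫ z in S, (u z - i) = volume.real S * G := by
    rw [← integral_add (ContinuousOn.integrableOn_compact hS (by fun_prop))
      (ContinuousOn.integrableOn_compact hS (by fun_prop)), ← smul_eq_mul, ← setIntegral_const]
    congr 1 with z
    ring
  have hneg := largeJumps_neg k u r y
  have hκsum := congrArg (κ * ·) hsum
  simp only [mul_add] at hκsum
  linarith

lemma exists_largeJumps_sub_le [Nontrivial E] (hk : IsLevyDensity k)
    (hpos : ∀ R, ∃ κ > 0, ∀ z, 1 < ‖z‖ → ‖z‖ ≤ R → κ ≤ k z) {R : ℝ} (hR : 0 ≤ R) :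
    ∃ c₀ > 0, ∀ (u : E → ℝ) (B i G : ℝ) (y y' : E), Continuous u → (∀ x, |u x| ≤ B) →
      (∀ x, i ≤ u x) → (∀ x, u x ≤ i + G) → ‖y - y'‖ ≤ R →
      largeJumps k u 1 y - largeJumps k u 1 y'
        ≤ (largeMass k 1 - c₀) * G - largeMass k 1 * (u y - u y') := by
  obtain ⟨κ, hκ, hle⟩ := hpos (2 * R + 4)
  obtain ⟨e, he⟩ : ∃ e : E, ‖e‖ = R + 3 := exists_norm_eq E (by positivity)
  have hvol : 0 < volume.real (closedBall e 1) := ENNReal.toReal_pos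
    (measure_closedBall_pos volume e one_pos).ne' measure_closedBall_lt_top.ne
  refine ⟨κ * volume.real (closedBall e 1), mul_pos hκ hvol,
    fun u B i G y y' hu hB hi hG hyy ↦ ?_⟩
  have hvol_y : volume.real (closedBall (y + e) 1) = volume.real (closedBall e 1) := by
    rw [measureReal_def, measureReal_def, Measure.addHaar_closedBall_center,
      Measure.addHaar_closedBall_center volume e]
  have hnear (z) (hz : z ∈ closedBall (y + e) 1) :
      (1 < ‖z - y‖ ∧ ‖z - y‖ ≤ 2 * R + 4) ∧ 1 < ‖z - y'‖ ∧ ‖z - y'‖ ≤ 2 * R + 4 := by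
    have hlow : ‖e‖ - ‖z - y‖ ≤ 1 := (norm_sub_norm_le _ _).trans (by
      rw [← norm_neg]; simpa only [mem_closedBall, dist_eq_norm, neg_sub, sub_sub] using hz)
    have hup : ‖z - y‖ - ‖e‖ ≤ 1 := (norm_sub_norm_le _ _).trans (by
      simpa only [mem_closedBall, dist_eq_norm, sub_sub] using hz)
    have hlow' : ‖z - y‖ ≤ ‖z - y'‖ + ‖y - y'‖ := by
      simpa only [sub_sub_sub_cancel_right] using norm_sub_le (z - y') (y - y')
    have hup' : ‖z - y'‖ ≤ ‖z - y‖ + ‖y - y'‖ := norm_sub_le_norm_sub_add_norm_sub _ _ _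
    constructor <;> constructor <;> linarith
  rw [← hvol_y]
  exact largeJumps_sub_le_of_common_landing hk one_pos hu hB hi hG (isCompact_closedBall _ _)
    (fun z hz ↦ ⟨(hnear z hz).1.1, (hnear z hz).2.1⟩)
    fun z hz ↦ ⟨hle _ (hnear z hz).1.1 (hnear z hz).1.2, hle _ (hnear z hz).2.1 (hnear z hz).2.2⟩

end Coupling

/-! ### The Euler scheme -/

section CellProblem

/-- The vector of the lattice `ℤ^N` with coordinates `m`. -/
noncomputable def latticeVec {N : ℕ} (m : Fin N → ℤ) : EN N :=
  (WithLp.equiv 2 (Fin N → ℝ)).symm fun j ↦ (m j : ℝ)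

lemma exists_norm_sub_add_latticeVec_le {N : ℕ} (y y' : EN N) :
    ∃ m, ‖y - (y' + latticeVec m)‖ ≤ √N := by
  refine ⟨fun j ↦ ⌊y j - y' j⌋, ?_⟩
  have hcoord (i : Fin N) : ‖(y - (y' + latticeVec fun j ↦ ⌊y j - y' j⌋)) i‖ ^ 2 ≤ 1 := by
    have hfract : (y - (y' + latticeVec fun j ↦ ⌊y j - y' j⌋)) i = Int.fract (y i - y' i) :=
      (sub_sub (y i) (y' i) _).symm
    rw [hfract, Real.norm_of_nonneg (Int.fract_nonneg _)]
    exact pow_le_one₀ (Int.fract_nonneg _) (Int.fract_lt_one _).le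
  rw [EuclideanSpace.norm_eq]
  refine Real.sqrt_le_sqrt ((Finset.sum_le_sum fun i _ ↦ hcoord i).trans_eq ?_)
  simp only [Finset.sum_const, Finset.card_univ, Fintype.card_fin, nsmul_eq_mul, mul_one]

/-- Data of the cell problem with jump density `k`, nonlinearity `f = W'` and forcing `σ`, in
quantitative form. All estimates below depend on the data only through `k`, `K`, `Kσ` and `M`. -/
structure IsCellData {N : ℕ} (k : EN N → ℝ) (f : ℝ → ℝ) (σ : ℝ → EN N → ℝ) (K Kσ M : ℝ) :
    Prop where
  dim_pos : 0 < N
  isLevyDensity : IsLevyDensity k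
  exists_pos_le : ∀ R, ∃ κ > 0, ∀ z, 1 < ‖z‖ → ‖z‖ ≤ R → κ ≤ k z
  K_nonneg : 0 ≤ K
  Kσ_nonneg : 0 ≤ Kσ
  f_lipschitz : ∀ a b, |f a - f b| ≤ K * |a - b|
  f_periodic : Function.Periodic f 1
  σ_lipschitz : ∀ t t' y y', |σ t y - σ t' y'| ≤ Kσ * (|t - t'| + ‖y - y'‖)
  σ_periodic_time : ∀ t y, σ (t + 1) y = σ t y
  σ_periodic_space : ∀ m t y, σ t (y + latticeVec m) = σ t y
  abs_sub_le : ∀ v t y, |σ t y - f v| ≤ M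

/-- The local part of the right-hand side of the cell problem lifted to `Y = (y, y_{N+1})`. -/
noncomputable def reaction {N : ℕ} (f : ℝ → ℝ) (σ : ℝ → EN N → ℝ) (p : EN N) (L t : ℝ)
    (Y : EN N × ℝ) (v : ℝ) : ℝ :=
  L - f (v + ⟪p, Y.1⟫ + Y.2) + σ t Y.1

variable {N : ℕ} {k : EN N → ℝ} {f : ℝ → ℝ} {σ : ℝ → EN N → ℝ} {K Kσ M : ℝ}

lemma IsCellData.M_nonneg (hC : IsCellData k f σ K Kσ M) : 0 ≤ M :=
  (abs_nonneg _).trans (hC.abs_sub_le 0 0 0)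

lemma abs_reaction_sub_le (hC : IsCellData k f σ K Kσ M) (p : EN N) (L t : ℝ) (Y : EN N × ℝ)
    (v : ℝ) : |reaction f σ p L t Y v - L| ≤ M := by
  convert hC.abs_sub_le (v + ⟪p, Y.1⟫ + Y.2) t Y.1 using 2
  rw [reaction]
  ring

lemma abs_reaction_sub_reaction_le_of_fst_eq (hC : IsCellData k f σ K Kσ M) (p : EN N)
    (L t : ℝ) (y : EN N) (a a' v v' : ℝ) :
    |reaction f σ p L t (y, a) v - reaction f σ p L t (y, a') v'| ≤ K * |v' - v + (a' - a)| := by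
  convert hC.f_lipschitz (v' + ⟪p, y⟫ + a') (v + ⟪p, y⟫ + a) using 2
  · simp only [reaction]
    ring
  · congr 1
    ring

lemma abs_reaction_sub_reaction_le (hC : IsCellData k f σ K Kσ M) (p : EN N) (L t t' : ℝ)
    (Y Y' : EN N × ℝ) (v v' : ℝ) :
    |reaction f σ p L t Y v - reaction f σ p L t' Y' v'|
      ≤ K * (|v - v'| + (‖p‖ + 1) * ‖Y - Y'‖) + Kσ * (|t - t'| + ‖Y - Y'‖) := by
  have hinner : |⟪p, Y.1 - Y'.1⟫| ≤ ‖p‖ * ‖Y - Y'‖ := (abs_real_inner_le_norm _ _).trans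
    (mul_le_mul_of_nonneg_left (norm_fst_le (Y - Y')) (norm_nonneg p))
  have harg : |v + ⟪p, Y.1⟫ + Y.2 - (v' + ⟪p, Y'.1⟫ + Y'.2)|
      ≤ |v - v'| + (‖p‖ + 1) * ‖Y - Y'‖ := by
    rw [show v + ⟪p, Y.1⟫ + Y.2 - (v' + ⟪p, Y'.1⟫ + Y'.2)
      = v - v' + ⟪p, Y.1 - Y'.1⟫ + (Y - Y').2 by rw [inner_sub_right, Prod.snd_sub]; ring]
    have hsnd : |(Y - Y').2| ≤ ‖Y - Y'‖ := norm_snd_le (Y - Y')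
    linarith [abs_add_three (v - v') ⟪p, Y.1 - Y'.1⟫ (Y - Y').2]
  have hf := (hC.f_lipschitz (v + ⟪p, Y.1⟫ + Y.2) (v' + ⟪p, Y'.1⟫ + Y'.2)).trans
    (mul_le_mul_of_nonneg_left harg hC.K_nonneg)
  have hσ := (hC.σ_lipschitz t t' Y.1 Y'.1).trans
    (mul_le_mul_of_nonneg_left (add_le_add_right (norm_fst_le (Y - Y')) _) hC.Kσ_nonneg)
  rw [abs_le] at hf hσ ⊢
  simp only [reaction]
  constructor <;> linarith

lemma reaction_add_one (hC : IsCellData k f σ K Kσ M) (p : EN N) (L t : ℝ) (y : EN N)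
    (a v : ℝ) : reaction f σ p L t (y, a + 1) v = reaction f σ p L t (y, a) v := by
  simp only [reaction, ← add_assoc, hC.f_periodic (v + ⟪p, y⟫ + a)]

lemma reaction_add_latticeVec (hC : IsCellData k f σ K Kσ M) (p : EN N) (L t : ℝ) (y : EN N)
    (a v : ℝ) (m : Fin N → ℤ) :
    reaction f σ p L t (y + latticeVec m, a - ⟪p, latticeVec m⟫) v
      = reaction f σ p L t (y, a) v := by
  simp only [reaction, hC.σ_periodic_space, inner_add_right]
  ring_nf

end CellProblem

section EulerStep

variable {E : Type*} [NormedAddCommGroup E] [InnerProductSpace ℝ E] [FiniteDimensional ℝ E]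
  [MeasurableSpace E] [BorelSpace E] {k : E → ℝ}

/-- One explicit Euler step of length `h` from `v`, with reaction term `r` and with the jumps of
size at most `ρ` removed. -/
noncomputable def eulerStep (k : E → ℝ) (ρ h : ℝ) (v : E × ℝ → ℝ) (r : ℝ) (Y : E × ℝ) : ℝ :=
  v Y + h * (largeJumps k (fun y ↦ v (y, Y.2)) ρ Y.1 + r)

/-- Discretization parameters for which the Euler scheme of a `K`-Lipschitz reaction term is
monotone. -/
structure IsCFL (k : E → ℝ) (K h ρ : ℝ) : Prop where
  h_nonneg : 0 ≤ h
  ρ_pos : 0 < ρ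
  ρ_le_one : ρ ≤ 1
  mul_le_one : h * (largeMass k ρ + K) ≤ 1

variable {K h ρ : ℝ} {v v' : E × ℝ → ℝ} {B B' a a' c r r' : ℝ} {y y' : E}

lemma IsCFL.mul_largeMass_le_one (hA : IsCFL k K h ρ) (hK : 0 ≤ K) : h * largeMass k ρ ≤ 1 :=
  (mul_le_mul_of_nonneg_left (le_add_of_nonneg_right hK) hA.h_nonneg).trans hA.mul_le_one

lemma eulerStep_sub_le (hk : IsLevyDensity k) (hh : 0 ≤ h) (hρ : 0 < ρ) (hv : Continuous v)
    (hv' : Continuous v') (hB : ∀ Y, |v Y| ≤ B) (hB' : ∀ Y, |v' Y| ≤ B')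
    (hc : ∀ z, v (y + z, a) - v' (y' + z, a') ≤ c) :
    eulerStep k ρ h v r (y, a) - eulerStep k ρ h v' r' (y', a')
      ≤ (1 - h * largeMass k ρ) * (v (y, a) - v' (y', a')) + h * largeMass k ρ * c
        + h * (r - r') := by
  have hjump := mul_le_mul_of_nonneg_left (largeJumps_sub_le hk hρ (u := fun y ↦ v (y, a))
    (u' := fun y ↦ v' (y, a')) (by fun_prop) (by fun_prop) (fun y ↦ hB _) (fun y ↦ hB' _) hc) hh
  simp only [eulerStep]
  linarith

lemma eulerStep_sub_le_add (hk : IsLevyDensity k) (hA : IsCFL k K h ρ) (hK : 0 ≤ K)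
    (hv : Continuous v) (hv' : Continuous v') (hB : ∀ Y, |v Y| ≤ B) (hB' : ∀ Y, |v' Y| ≤ B')
    (hc : ∀ z, v (y + z, a) - v' (y' + z, a') ≤ c) :
    eulerStep k ρ h v r (y, a) - eulerStep k ρ h v' r' (y', a') ≤ c + h * (r - r') := by
  have hstep := eulerStep_sub_le hk hA.h_nonneg hA.ρ_pos hv hv' hB hB' (r := r) (r' := r') hc
  have h0 := mul_le_mul_of_nonneg_left (hc 0) (sub_nonneg.2 (hA.mul_largeMass_le_one hK))
  simp only [add_zero] at h0
  linarith

lemma eulerStep_zero (k : E → ℝ) (ρ h : ℝ) (Y : E × ℝ) :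
    eulerStep k ρ h (fun _ ↦ 0) 0 Y = 0 := by
  simp only [eulerStep, largeJumps, sub_zero, zero_mul, integral_zero, add_zero, mul_zero]

lemma eulerStep_le (hk : IsLevyDensity k) (hA : IsCFL k K h ρ) (hK : 0 ≤ K) (hv : Continuous v)
    (hB : ∀ Y, |v Y| ≤ B) (hc : ∀ Y, v Y ≤ c) (Y : E × ℝ) :
    eulerStep k ρ h v r Y ≤ c + h * r := by
  simpa only [sub_zero, eulerStep_zero] using eulerStep_sub_le_add hk hA hK (v' := fun _ ↦ 0)
    (B' := 0) (y := Y.1) (y' := Y.1) (a := Y.2) (a' := Y.2) (r := r) (r' := 0) hv continuous_const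
    hB (fun _ ↦ abs_zero.le) fun z ↦ (sub_zero _).trans_le (hc _)

lemma le_eulerStep (hk : IsLevyDensity k) (hA : IsCFL k K h ρ) (hK : 0 ≤ K) (hv : Continuous v)
    (hB : ∀ Y, |v Y| ≤ B) (hc : ∀ Y, c ≤ v Y) (Y : E × ℝ) :
    c + h * r ≤ eulerStep k ρ h v r Y := by
  have hstep := eulerStep_sub_le_add hk hA hK (v := fun _ ↦ 0) (v' := v) (B := 0) (y := Y.1)
    (y' := Y.1) (a := Y.2) (a' := Y.2) (r := 0) (r' := r) continuous_const hv
    (fun _ ↦ abs_zero.le) hB (c := -c) fun z ↦ (zero_sub _).trans_le (neg_le_neg (hc _))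
  rw [eulerStep_zero] at hstep
  linarith

lemma eulerStep_sub_le_of_largeJumps (hk : IsLevyDensity k) (hA : IsCFL k K h ρ) (hK : 0 ≤ K)
    (hv : Continuous v) (hB : ∀ Y, |v Y| ≤ B) (hc : ∀ z, v (y + z, a) - v (y' + z, a) ≤ c)
    (hjump : largeJumps k (fun y ↦ v (y, a)) 1 y - largeJumps k (fun y ↦ v (y, a)) 1 y' + (r - r')
      ≤ largeMass k 1 * (c - (v (y, a) - v (y', a)))) :
    eulerStep k ρ h v r (y, a) - eulerStep k ρ h v r' (y', a) ≤ c := by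
  have hsmall := largeJumps_sub_le_of_le hk hA.ρ_pos hA.ρ_le_one (u := fun y ↦ v (y, a))
    (u' := fun y ↦ v (y, a)) (by fun_prop) (by fun_prop) (fun y ↦ hB _) (fun y ↦ hB _) hc
  have htotal : largeJumps k (fun y ↦ v (y, a)) ρ y + r
      - (largeJumps k (fun y ↦ v (y, a)) ρ y' + r')
      ≤ largeMass k ρ * (c - (v (y, a) - v (y', a))) := by linarith
  have h0 := mul_le_mul_of_nonneg_left (hc 0) (sub_nonneg.2 (hA.mul_largeMass_le_one hK))
  simp only [add_zero] at h0
  have hmul := mul_le_mul_of_nonneg_left htotal hA.h_nonneg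
  simp only [eulerStep]
  linarith

end EulerStep

section EulerScheme

/-- Explicit Euler scheme, with time step `h` and with the jumps of size at most `ρ` removed, for
the cell problem lifted to the variables `Y = (y, y_{N+1})`. -/
noncomputable def euler {N : ℕ} (k : EN N → ℝ) (f : ℝ → ℝ) (σ : ℝ → EN N → ℝ) (p : EN N)
    (L h ρ : ℝ) : ℕ → EN N × ℝ → ℝ
  | 0 => fun _ ↦ 0
  | j + 1 => fun Y ↦ eulerStep k ρ h (euler k f σ p L h ρ j)
      (reaction f σ p L (j * h) Y (euler k f σ p L h ρ j Y)) Y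

variable {N : ℕ} {k : EN N → ℝ} {f : ℝ → ℝ} {σ : ℝ → EN N → ℝ} {K Kσ M : ℝ} {h ρ : ℝ}

lemma continuous_of_abs_sub_le_mul_norm {X : Type*} [SeminormedAddCommGroup X] {u : X → ℝ} {ℓ : ℝ}
    (hu : ∀ x y, |u x - u y| ≤ ℓ * ‖x - y‖) : Continuous u :=
  (LipschitzWith.of_dist_le_mul (K := ℓ.toNNReal) fun x y ↦ by
    rw [Real.dist_eq, dist_eq_norm]
    exact (hu x y).trans (mul_le_mul_of_nonneg_right ℓ.le_coe_toNNReal (norm_nonneg _))).continuous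

lemma abs_eulerStep_le (hC : IsCellData k f σ K Kσ M) (hA : IsCFL k K h ρ) (p : EN N) (L t : ℝ)
    {v : EN N × ℝ → ℝ} (hv : Continuous v) {B : ℝ} (hB : ∀ Y, |v Y| ≤ B) (Y : EN N × ℝ) :
    |eulerStep k ρ h v (reaction f σ p L t Y (v Y)) Y| ≤ B + h * (|L| + M) := by
  have hr := abs_le.1 (abs_reaction_sub_le hC p L t Y (v Y))
  have hle := eulerStep_le hC.isLevyDensity hA hC.K_nonneg (r := reaction f σ p L t Y (v Y)) hv hB
    (fun Y ↦ (abs_le.1 (hB Y)).2) Y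
  have hge := le_eulerStep hC.isLevyDensity hA hC.K_nonneg (r := reaction f σ p L t Y (v Y)) hv hB
    (fun Y ↦ (abs_le.1 (hB Y)).1) Y
  have hr_le := mul_le_mul_of_nonneg_left (hr.2.trans' (sub_le_sub_left (le_abs_self L) _))
    hA.h_nonneg
  have hr_ge := mul_le_mul_of_nonneg_left (hr.1.trans (sub_le_sub_left (neg_abs_le L) _))
    hA.h_nonneg
  rw [abs_le]
  constructor <;> linarith

lemma abs_eulerStep_sub_le (hC : IsCellData k f σ K Kσ M) (hA : IsCFL k K h ρ) (p : EN N)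
    (L t : ℝ) {v : EN N × ℝ → ℝ} {B ℓ : ℝ} (hB : ∀ Y, |v Y| ≤ B)
    (hℓ : ∀ Y Y', |v Y - v Y'| ≤ ℓ * ‖Y - Y'‖) (Y Y' : EN N × ℝ) :
    |eulerStep k ρ h v (reaction f σ p L t Y (v Y)) Y
        - eulerStep k ρ h v (reaction f σ p L t Y' (v Y')) Y'|
      ≤ (ℓ + h * (K * (ℓ + ‖p‖ + 1) + Kσ)) * ‖Y - Y'‖ := by
  have hv : Continuous v := continuous_of_abs_sub_le_mul_norm hℓ
  have hle (Y Y' : EN N × ℝ) : eulerStep k ρ h v (reaction f σ p L t Y (v Y)) Y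
      - eulerStep k ρ h v (reaction f σ p L t Y' (v Y')) Y'
      ≤ (ℓ + h * (K * (ℓ + ‖p‖ + 1) + Kσ)) * ‖Y - Y'‖ := by
    have hshift (z : EN N) : v (Y.1 + z, Y.2) - v (Y'.1 + z, Y'.2) ≤ ℓ * ‖Y - Y'‖ := by
      refine (abs_le.1 (hℓ _ _)).2.trans_eq ?_
      rw [Prod.mk_sub_mk, add_sub_add_right_eq_sub]
      rfl
    have hr := (abs_le.1 (abs_reaction_sub_reaction_le hC p L t t Y Y' (v Y) (v Y'))).2
    rw [sub_self, abs_zero, zero_add] at hr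
    have hr' : reaction f σ p L t Y (v Y) - reaction f σ p L t Y' (v Y')
        ≤ (K * (ℓ + ‖p‖ + 1) + Kσ) * ‖Y - Y'‖ := by
      linarith [mul_le_mul_of_nonneg_left (hℓ Y Y') hC.K_nonneg]
    have hstep := eulerStep_sub_le_add hC.isLevyDensity hA hC.K_nonneg hv hv hB hB
      (r := reaction f σ p L t Y (v Y)) (r' := reaction f σ p L t Y' (v Y')) hshift
    linarith [mul_le_mul_of_nonneg_left hr' hA.h_nonneg]
  refine abs_le.2 ⟨?_, hle Y Y'⟩
  linarith [norm_sub_rev Y Y' ▸ hle Y' Y]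

variable (p : EN N) (L : ℝ)

lemma abs_euler_le_and_abs_euler_sub_le (hC : IsCellData k f σ K Kσ M) (hA : IsCFL k K h ρ)
    (j : ℕ) :
    (∀ Y, |euler k f σ p L h ρ j Y| ≤ (|L| + M) * (j * h)) ∧
    ∀ Y Y', |euler k f σ p L h ρ j Y - euler k f σ p L h ρ j Y'|
      ≤ ((1 + h * (K + 1)) ^ j - 1) * (‖p‖ + 1 + Kσ) * ‖Y - Y'‖ := by
  have hh := hA.h_nonneg
  have hK := hC.K_nonneg
  have hKσ := hC.Kσ_nonneg
  induction j with
  | zero => simp [euler]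
  | succ j ih =>
    obtain ⟨hB, hℓ⟩ := ih
    set ℓ := ((1 + h * (K + 1)) ^ j - 1) * (‖p‖ + 1 + Kσ) with hℓdef
    have hpow : 1 ≤ (1 + h * (K + 1)) ^ j := one_le_pow₀ (le_add_of_nonneg_right (by positivity))
    have hℓ0 : 0 ≤ ℓ := mul_nonneg (sub_nonneg.2 hpow) (by positivity)
    refine ⟨fun Y ↦ (abs_eulerStep_le hC hA p L (j * h)
      (continuous_of_abs_sub_le_mul_norm hℓ) hB Y).trans_eq (by push_cast; ring),
      fun Y Y' ↦ (abs_eulerStep_sub_le hC hA p L (j * h) hB hℓ Y Y').trans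
        (mul_le_mul_of_nonneg_right ?_ (norm_nonneg _))⟩
    have hslack : K * (ℓ + ‖p‖ + 1) + Kσ ≤ (K + 1) * (ℓ + (‖p‖ + 1 + Kσ)) := by
      linarith [norm_nonneg p, mul_nonneg hK hKσ]
    calc ℓ + h * (K * (ℓ + ‖p‖ + 1) + Kσ)
        ≤ ℓ + h * ((K + 1) * (ℓ + (‖p‖ + 1 + Kσ))) := by gcongr
      _ = ((1 + h * (K + 1)) ^ (j + 1) - 1) * (‖p‖ + 1 + Kσ) := by
        rw [hℓdef]
        ring

lemma continuous_euler (hC : IsCellData k f σ K Kσ M) (hA : IsCFL k K h ρ) (j : ℕ) :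
    Continuous (euler k f σ p L h ρ j) :=
  continuous_of_abs_sub_le_mul_norm (abs_euler_le_and_abs_euler_sub_le p L hC hA j).2

lemma euler_add_one (hC : IsCellData k f σ K Kσ M) (h ρ : ℝ) (j : ℕ) (y : EN N) (a : ℝ) :
    euler k f σ p L h ρ j (y, a + 1) = euler k f σ p L h ρ j (y, a) := by
  induction j generalizing y with
  | zero => rfl
  | succ j ih => simp only [euler, eulerStep, ih, reaction_add_one hC]

lemma euler_add_latticeVec (hC : IsCellData k f σ K Kσ M) (h ρ : ℝ) (j : ℕ) (m : Fin N → ℤ)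
    (y : EN N) (a : ℝ) :
    euler k f σ p L h ρ j (y + latticeVec m, a - ⟪p, latticeVec m⟫)
      = euler k f σ p L h ρ j (y, a) := by
  induction j generalizing y with
  | zero => rfl
  | succ j ih =>
    simp only [euler, eulerStep, largeJumps, add_right_comm y, ih, reaction_add_latticeVec hC]

lemma monotone_euler_add (hC : IsCellData k f σ K Kσ M) (hA : IsCFL k K h ρ) (j : ℕ) (y : EN N) :
    Monotone fun a ↦ euler k f σ p L h ρ j (y, a) + a := by
  intro a a' ha
  induction j generalizing y with
  | zero => simpa [euler] using ha
  | succ j ih =>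
    have hv := continuous_euler p L hC hA j
    have hB := (abs_euler_le_and_abs_euler_sub_le p L hC hA j).1
    simp only [euler] at ih ⊢
    set v := euler k f σ p L h ρ j
    set q := v (y, a') - v (y, a) + (a' - a)
    have hq : 0 ≤ q := by linarith [ih y]
    have hstep := eulerStep_sub_le hC.isLevyDensity hA.h_nonneg hA.ρ_pos hv hv hB hB (y := y)
      (y' := y) (a := a) (a' := a') (r := reaction f σ p L (j * h) (y, a) (v (y, a)))
      (r' := reaction f σ p L (j * h) (y, a') (v (y, a'))) (c := a' - a)
      fun z ↦ by linarith [ih (y + z)]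
    have hr := (abs_le.1 (abs_reaction_sub_reaction_le_of_fst_eq hC p L (j * h) y a a'
      (v (y, a)) (v (y, a')))).2
    rw [abs_of_nonneg hq] at hr
    have hmul := mul_le_mul_of_nonneg_left hr hA.h_nonneg
    linarith [mul_nonneg (sub_nonneg.2 hA.mul_le_one) hq]

lemma euler_sub_le (hC : IsCellData k f σ K Kσ M) (hA : IsCFL k K h ρ) (j : ℕ) (y : EN N)
    {a a' : ℝ} (ha : a ≤ a') :
    euler k f σ p L h ρ j (y, a') - euler k f σ p L h ρ j (y, a)
      ≤ ((1 + h * K) ^ j - 1) * (a' - a) := by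
  induction j generalizing y with
  | zero => simp [euler]
  | succ j ih =>
    have hv := continuous_euler p L hC hA j
    have hB := (abs_euler_le_and_abs_euler_sub_le p L hC hA j).1
    have hmono := monotone_euler_add p L hC hA j y ha
    simp only [euler] at ih hmono ⊢
    set v := euler k f σ p L h ρ j
    set c := ((1 + h * K) ^ j - 1) * (a' - a) with hc
    have hstep := eulerStep_sub_le hC.isLevyDensity hA.h_nonneg hA.ρ_pos hv hv hB hB (y := y)
      (y' := y) (a := a') (a' := a) (r := reaction f σ p L (j * h) (y, a') (v (y, a')))
      (r' := reaction f σ p L (j * h) (y, a) (v (y, a))) (c := c) fun z ↦ ih (y + z)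
    have hr := (abs_le.1 (abs_reaction_sub_reaction_le_of_fst_eq hC p L (j * h) y a' a
      (v (y, a')) (v (y, a)))).2
    rw [abs_of_nonpos (by linarith)] at hr
    have hr' : reaction f σ p L (j * h) (y, a') (v (y, a'))
        - reaction f σ p L (j * h) (y, a) (v (y, a)) ≤ K * (c + (a' - a)) :=
      hr.trans (mul_le_mul_of_nonneg_left (by linarith [ih y]) hC.K_nonneg)
    have hdiff := mul_le_mul_of_nonneg_left (ih y)
      (sub_nonneg.2 (hA.mul_largeMass_le_one hC.K_nonneg))
    have hnext : ((1 + h * K) ^ (j + 1) - 1) * (a' - a) = c + h * (K * (c + (a' - a))) := by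
      rw [hc]
      ring
    linarith [mul_le_mul_of_nonneg_left hr' hA.h_nonneg]

lemma sub_le_one_of_periodic_of_monotone_add {F : ℝ → ℝ} (hF : Function.Periodic F 1)
    (hmono : Monotone fun a ↦ F a + a) (a a' : ℝ) : F a - F a' ≤ 1 := by
  have hshift : F a' = F (a + Int.fract (a' - a)) := by
    rw [← hF.int_mul ⌊a' - a⌋ (a + Int.fract (a' - a)), mul_one, add_assoc,
      Int.fract_add_floor, add_sub_cancel]
  have hle := hmono (le_add_of_nonneg_right (a := a) (Int.fract_nonneg (a' - a)))
  simp only at hle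
  linarith [Int.fract_lt_one (a' - a)]

lemma euler_sub_le_one (hC : IsCellData k f σ K Kσ M) (hA : IsCFL k K h ρ) (j : ℕ) (y : EN N)
    (a a' : ℝ) : euler k f σ p L h ρ j (y, a) - euler k f σ p L h ρ j (y, a') ≤ 1 :=
  sub_le_one_of_periodic_of_monotone_add (F := fun a ↦ euler k f σ p L h ρ j (y, a))
    (euler_add_one p L hC h ρ j y) (monotone_euler_add p L hC hA j y) a a'

/- A lattice translation amounts to a shift of the last variable by `p·m`. -/
lemma euler_add_latticeVec_sub_le_one (hC : IsCellData k f σ K Kσ M) (hA : IsCFL k K h ρ) (j : ℕ)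
    (y : EN N) (a : ℝ) (m : Fin N → ℤ) :
    euler k f σ p L h ρ j (y + latticeVec m, a) - euler k f σ p L h ρ j (y, a) ≤ 1 := by
  have hshift := euler_add_latticeVec p L hC h ρ j m y (a + ⟪p, latticeVec m⟫)
  rw [add_sub_cancel_right] at hshift
  rw [hshift]
  exact euler_sub_le_one p L hC hA j y _ _

lemma euler_sub_le_of_near {c₀ B : ℝ} (hC : IsCellData k f σ K Kσ M) (hA : IsCFL k K h ρ)
    (hB : 0 ≤ B) (hbalance : c₀ * B = largeMass k 1 + 2 * M) (hc₀ : 0 < c₀)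
    (hcoupling : ∀ (u : EN N → ℝ) (B i G : ℝ) (y y' : EN N), Continuous u → (∀ x, |u x| ≤ B) →
      (∀ x, i ≤ u x) → (∀ x, u x ≤ i + G) → ‖y - y'‖ ≤ √N →
      largeJumps k u 1 y - largeJumps k u 1 y'
        ≤ (largeMass k 1 - c₀) * G - largeMass k 1 * (u y - u y'))
    (j : ℕ) {y y' : EN N} (a : ℝ) (hy : ‖y - y'‖ ≤ √N) :
    euler k f σ p L h ρ j (y, a) - euler k f σ p L h ρ j (y', a) ≤ B := by
  induction j generalizing y y' with
  | zero => simpa [euler] using hB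
  | succ j ih =>
    have hv := continuous_euler p L hC hA j
    have hb := (abs_euler_le_and_abs_euler_sub_le p L hC hA j).1
    have hlattice := euler_add_latticeVec_sub_le_one p L hC hA j
    simp only [euler] at ih hlattice ⊢
    set v := euler k f σ p L h ρ j
    have hosc (x x' : EN N) : v (x, a) - v (x', a) ≤ B + 1 := by
      obtain ⟨m, hm⟩ := exists_norm_sub_add_latticeVec_le x x'
      linarith [ih hm, hlattice x' a m]
    have hbdd : BddBelow (range fun x ↦ v (x, a)) :=
      ⟨_, forall_mem_range.2 fun x ↦ (abs_le.1 (hb (x, a))).1⟩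
    have hjump := hcoupling (fun x ↦ v (x, a)) _ (⨅ x, v (x, a)) (B + 1) y y' (by fun_prop)
      (fun x ↦ hb (x, a)) (ciInf_le hbdd) (fun x ↦ sub_le_iff_le_add.1 <| le_ciInf fun x' ↦
        sub_le_comm.1 (hosc x x')) hy
    refine eulerStep_sub_le_of_largeJumps hC.isLevyDensity hA hC.K_nonneg hv hb
      (fun z ↦ ih (by rwa [add_sub_add_right_eq_sub])) ?_
    have hr := abs_le.1 (abs_reaction_sub_le hC p L (j * h) (y, a) (v (y, a)))
    have hr' := abs_le.1 (abs_reaction_sub_le hC p L (j * h) (y', a) (v (y', a)))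
    linarith

lemma exists_euler_sub_le (hC : IsCellData k f σ K Kσ M) :
    ∃ B, 0 ≤ B ∧ ∀ (p : EN N) (L h ρ : ℝ), IsCFL k K h ρ → ∀ j Y Y',
      euler k f σ p L h ρ j Y - euler k f σ p L h ρ j Y' ≤ B := by
  have : Nonempty (Fin N) := ⟨⟨0, hC.dim_pos⟩⟩
  obtain ⟨c₀, hc₀, hcoupling⟩ := exists_largeJumps_sub_le hC.isLevyDensity hC.exists_pos_le
    (Real.sqrt_nonneg N)
  have hM := hC.M_nonneg
  have hΛ := largeMass_nonneg hC.isLevyDensity 1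
  set B := (largeMass k 1 + 2 * M) / c₀
  have hB : 0 ≤ B := by positivity
  refine ⟨B + 2, by positivity, fun p L h ρ hA j ⟨y, a⟩ ⟨y', a'⟩ ↦ ?_⟩
  obtain ⟨m, hm⟩ := exists_norm_sub_add_latticeVec_le y y'
  have hnear := euler_sub_le_of_near p L hC hA hB (mul_div_cancel₀ _ hc₀.ne') hc₀ hcoupling j a hm
  have hlattice := euler_add_latticeVec_sub_le_one p L hC hA j y' a m
  linarith [euler_sub_le_one p L hC hA j y' a a']

lemma euler_add_le (hC : IsCellData k f σ K Kσ M) (hA : IsCFL k K h ρ) {i : ℕ} {c : ℝ}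
    (hc : ∀ Y, euler k f σ p L h ρ i Y ≤ c) (m : ℕ) (Y : EN N × ℝ) :
    euler k f σ p L h ρ (i + m) Y ≤ c + (L + M) * (m * h) := by
  induction m generalizing Y with
  | zero => simpa using hc Y
  | succ m ih =>
    have hr := (abs_le.1 (abs_reaction_sub_le hC p L ((i + m : ℕ) * h) Y
      (euler k f σ p L h ρ (i + m) Y))).2
    rw [← add_assoc, euler]
    refine (eulerStep_le hC.isLevyDensity hA hC.K_nonneg (continuous_euler p L hC hA _)
      (abs_euler_le_and_abs_euler_sub_le p L hC hA _).1 ih Y).trans ?_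
    have hmul := mul_le_mul_of_nonneg_left (sub_le_iff_le_add'.1 hr) hA.h_nonneg
    push_cast at hmul ⊢
    linarith

lemma le_euler_add (hC : IsCellData k f σ K Kσ M) (hA : IsCFL k K h ρ) {i : ℕ} {c : ℝ}
    (hc : ∀ Y, c ≤ euler k f σ p L h ρ i Y) (m : ℕ) (Y : EN N × ℝ) :
    c + (L - M) * (m * h) ≤ euler k f σ p L h ρ (i + m) Y := by
  induction m generalizing Y with
  | zero => simpa using hc Y
  | succ m ih =>
    have hr := (abs_le.1 (abs_reaction_sub_le hC p L ((i + m : ℕ) * h) Y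
      (euler k f σ p L h ρ (i + m) Y))).1
    rw [← add_assoc, euler]
    refine (le_eulerStep hC.isLevyDensity hA hC.K_nonneg (continuous_euler p L hC hA _)
      (abs_euler_le_and_abs_euler_sub_le p L hC hA _).1 ih Y).trans' ?_
    have hmul := mul_le_mul_of_nonneg_left (neg_le_sub_iff_le_add.1 hr) hA.h_nonneg
    push_cast at hmul ⊢
    linarith

end EulerScheme

/-! ### Smooth discrete approximations -/

section MollifiedEulerStep

variable {E : Type*} [NormedAddCommGroup E] [InnerProductSpace ℝ E] [FiniteDimensional ℝ E]
  [MeasurableSpace E] [BorelSpace E] {k : E → ℝ}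

lemma continuous_largeJumps (hk : IsLevyDensity k) {v : E × ℝ → ℝ} {B r : ℝ} (hv : Continuous v)
    (hB : ∀ Y, |v Y| ≤ B) (hr : 0 < r) :
    Continuous fun Y : E × ℝ ↦ largeJumps k (fun y ↦ v (y, Y.2)) r Y.1 := by
  refine continuous_of_dominated (bound := fun z ↦ (B + B) * k z) (fun Y ↦ ?_)
    (fun Y ↦ Eventually.of_forall fun z ↦ ?_) ((hk.integrableOn_large r hr).const_mul _)
    (Eventually.of_forall fun z ↦ by fun_prop)
  · exact (integrableOn_largeJumps hk (u := fun y ↦ v (y, Y.2)) (by fun_prop) (fun y ↦ hB _) hr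
      Y.1).aestronglyMeasurable
  · rw [norm_mul, Real.norm_of_nonneg (hk.nonneg z)]
    exact mul_le_mul_of_nonneg_right ((abs_sub _ _).trans (add_le_add (hB _) (hB _)))
      (hk.nonneg z)

variable {ε h ρ B R : ℝ} {ψ v r : E × ℝ → ℝ}

lemma mollify_eulerStep (hk : IsLevyDensity k) (hψ : IsMollifier volume ε ψ) (hρ : 0 < ρ)
    (hv : Continuous v) (hB : ∀ Y, |v Y| ≤ B) (hr : Continuous r) (Y : E × ℝ) :
    mollify volume ψ (fun Y ↦ eulerStep k ρ h v (r Y) Y) Y = mollify volume ψ v Y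
      + h * (largeJumps k (fun y ↦ mollify volume ψ v (y, Y.2)) ρ Y.1 + mollify volume ψ r Y) := by
  have hJ := continuous_largeJumps hk hv hB hρ
  rw [largeJumps_mollify hk hψ hv hB hρ, ← mollify_add hψ hJ hr, ← mollify_const_mul,
    ← mollify_add hψ hv (by fun_prop)]
  rfl

lemma abs_mollify_le {F : Type*} [NormedAddCommGroup F] [NormedSpace ℝ F] [MeasurableSpace F]
    [BorelSpace F] {μ : Measure F} [μ.IsAddHaarMeasure] {ψ u : F → ℝ} (hψ : IsMollifier μ ε ψ)
    (hu : Continuous u) (hB : ∀ x, |u x| ≤ B) (x : F) : |mollify μ ψ u x| ≤ B := by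
  simpa only [sub_zero] using abs_mollify_sub_le hψ hu (x := x) (c := 0) (κ := B)
    fun t _ ↦ by simpa only [sub_zero] using hB (x - t)

lemma abs_mollify_eulerStep_sub_le (hk : IsLevyDensity k) (hψ : IsMollifier volume ε ψ)
    (hh : 0 ≤ h) (hρ : 0 < ρ) (hv : Continuous v) (hB : ∀ Y, |v Y| ≤ B) (hr : Continuous r)
    (hR : ∀ Y, |r Y| ≤ R) (Y : E × ℝ) :
    |mollify volume ψ (fun Y ↦ eulerStep k ρ h v (r Y) Y) Y - mollify volume ψ v Y|
      ≤ h * ((B + B) * largeMass k ρ + R) := by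
  rw [mollify_eulerStep hk hψ hρ hv hB hr, add_sub_cancel_left, abs_mul, abs_of_nonneg hh]
  exact mul_le_mul_of_nonneg_left ((abs_add_le _ _).trans (add_le_add
    (abs_largeJumps_le hk hρ fun y ↦ abs_mollify_le hψ hv hB _) (abs_mollify_le hψ hr hR Y))) hh

end MollifiedEulerStep

section Consistency

variable {N : ℕ} {k : EN N → ℝ} {f : ℝ → ℝ} {σ : ℝ → EN N → ℝ} {K Kσ M : ℝ}

lemma IsCellData.continuous_f (hC : IsCellData k f σ K Kσ M) : Continuous f :=
  continuous_of_abs_sub_le_mul_norm hC.f_lipschitz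

lemma IsCellData.continuous_σ (hC : IsCellData k f σ K Kσ M) (t : ℝ) : Continuous (σ t) :=
  continuous_of_abs_sub_le_mul_norm (ℓ := Kσ) fun y y' ↦ by
    simpa only [sub_self, abs_zero, zero_add] using hC.σ_lipschitz t t y y'

lemma continuous_reaction (hC : IsCellData k f σ K Kσ M) (p : EN N) (L t : ℝ)
    {v : EN N × ℝ → ℝ} (hv : Continuous v) : Continuous fun Y ↦ reaction f σ p L t Y (v Y) := by
  have hf := hC.continuous_f
  have hσ := hC.continuous_σ t
  have : Continuous fun Y : EN N × ℝ ↦ ⟪p, Y.1⟫ := continuous_const.inner continuous_fst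
  unfold reaction
  fun_prop

lemma abs_reaction_le (hC : IsCellData k f σ K Kσ M) (p : EN N) (L t : ℝ) (Y : EN N × ℝ)
    (v : ℝ) : |reaction f σ p L t Y v| ≤ |L| + M := by
  linarith [abs_sub_abs_le_abs_sub (reaction f σ p L t Y v) L, abs_reaction_sub_le hC p L t Y v]

lemma abs_mollify_reaction_sub_le (hC : IsCellData k f σ K Kσ M) (p : EN N) (L t : ℝ) {ε ℓ : ℝ}
    {ψ v : EN N × ℝ → ℝ} (hψ : IsMollifier volume ε ψ) (hℓ0 : 0 ≤ ℓ)
    (hℓ : ∀ Y Y', |v Y - v Y'| ≤ ℓ * ‖Y - Y'‖) (Y : EN N × ℝ) :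
    |mollify volume ψ (fun Y ↦ reaction f σ p L t Y (v Y)) Y
        - reaction f σ p L t Y (mollify volume ψ v Y)|
      ≤ (K * (2 * ℓ + ‖p‖ + 1) + Kσ) * ε := by
  have hv := continuous_of_abs_sub_le_mul_norm hℓ
  have hnear : ∀ s, ‖s‖ ≤ ε → |v (Y - s) - v Y| ≤ ℓ * ε := fun s hs ↦
    (hℓ _ _).trans (mul_le_mul_of_nonneg_left (by rwa [sub_sub_cancel_left, norm_neg]) hℓ0)
  have hmollify := abs_mollify_sub_le hψ hv hnear
  refine abs_mollify_sub_le hψ (continuous_reaction hC p L t hv) fun s hs ↦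
    (abs_reaction_sub_reaction_le hC p L t t _ _ _ _).trans ?_
  rw [sub_self, abs_zero, zero_add, sub_sub_cancel_left, norm_neg]
  have hvalue : |v (Y - s) - mollify volume ψ v Y| ≤ ℓ * ε + ℓ * ε :=
    (abs_sub_le _ (v Y) _).trans (add_le_add (hnear s hs) (abs_sub_comm (v Y) _ ▸ hmollify))
  have hp := mul_le_mul_of_nonneg_left hs (add_nonneg (norm_nonneg p) zero_le_one)
  linarith [mul_le_mul_of_nonneg_left (add_le_add hvalue hp) hC.K_nonneg,
    mul_le_mul_of_nonneg_left hs hC.Kσ_nonneg]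

lemma abs_residual_convexCombination_le (hC : IsCellData k f σ K Kσ M) (p : EN N) (L t : ℝ)
    {h ρ B F e θ : ℝ} (hh : 0 ≤ h) (hρ : 0 < ρ) {u u' : EN N × ℝ → ℝ} (hu : C2BoundedBy B u)
    (hu' : C2BoundedBy B u') (hF : ∀ Y, |u' Y - u Y| ≤ h * F) (hθ : θ ∈ Icc 0 1) {Y : EN N × ℝ}
    (he : |(u' Y - u Y) / h - (largeJumps k (fun y ↦ u (y, Y.2)) ρ Y.1
      + reaction f σ p L t Y (u Y))| ≤ e) :
    |(u' Y - u Y) / h - (levyGenerator k (fun y ↦ u (y, Y.2) + θ * (u' (y, Y.2) - u (y, Y.2))) Y.1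
        + reaction f σ p L (t + θ * h) Y (u Y + θ * (u' Y - u Y)))|
      ≤ e + B * smallMoment k ρ + h * ((F + F) * largeMass k ρ + K * F + Kσ) := by
  have hk := hC.isLevyDensity
  have hcomb := (hu.convexCombination hu' hθ).slice Y.2
  have hcont := hu.contDiff.continuous
  have hcont' := hu'.contDiff.continuous
  have hdiff (Y : EN N × ℝ) : |θ * (u' Y - u Y)| ≤ h * F := by
    rw [abs_mul, abs_of_nonneg hθ.1]
    exact (mul_le_of_le_one_left (abs_nonneg _) hθ.2).trans (hF Y)
  have hsplit : largeJumps k (fun y ↦ u (y, Y.2) + θ * (u' (y, Y.2) - u (y, Y.2))) ρ Y.1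
      = largeJumps k (fun y ↦ u (y, Y.2)) ρ Y.1
        + largeJumps k (fun y ↦ θ * (u' (y, Y.2) - u (y, Y.2))) ρ Y.1 :=
    largeJumps_add hk hρ (by fun_prop) (by fun_prop) (fun y ↦ hu.abs_le _) (fun y ↦ hdiff _)
  have hsmall := abs_smallJumps_le hk hcomb ρ Y.1
  have hlarge := abs_largeJumps_le hk (x := Y.1) hρ fun y ↦ hdiff (y, Y.2)
  have hreaction := abs_reaction_sub_reaction_le hC p L (t + θ * h) t Y Y
    (u Y + θ * (u' Y - u Y)) (u Y)
  rw [add_sub_cancel_left, add_sub_cancel_left, sub_self, norm_zero, mul_zero, add_zero, add_zero,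
    abs_of_nonneg (mul_nonneg hθ.1 hh)] at hreaction
  have hvalue := mul_le_mul_of_nonneg_left (hdiff Y) hC.K_nonneg
  have htime := mul_le_mul_of_nonneg_left (mul_le_of_le_one_left hh hθ.2) hC.Kσ_nonneg
  rw [← smallJumps_add_largeJumps hk hcomb Y.1 hρ, hsplit]
  rw [abs_le] at he hsmall hlarge hreaction ⊢
  constructor <;> linarith

lemma one_add_mul_pow_le_exp {x h T : ℝ} {j : ℕ} (hx : 0 ≤ x) (hh : 0 ≤ h) (hjT : j * h ≤ T) :
    (1 + h * x) ^ j ≤ Real.exp (x * T) :=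
  calc (1 + h * x) ^ j ≤ Real.exp (h * x) ^ j :=
        pow_le_pow_left₀ (by positivity) (by linarith [Real.add_one_le_exp (h * x)]) j
    _ = Real.exp (x * (j * h)) := by
        rw [← Real.exp_nat_mul]
        ring_nf
    _ ≤ Real.exp (x * T) := Real.exp_le_exp.2 (mul_le_mul_of_nonneg_left hjT hx)

variable (p : EN N) (L : ℝ) {h ρ T : ℝ} {j : ℕ}

lemma abs_euler_le (hC : IsCellData k f σ K Kσ M) (hA : IsCFL k K h ρ) (hjT : j * h ≤ T)
    (Y : EN N × ℝ) : |euler k f σ p L h ρ j Y| ≤ (|L| + M) * T :=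
  ((abs_euler_le_and_abs_euler_sub_le p L hC hA j).1 Y).trans
    (mul_le_mul_of_nonneg_left hjT (add_nonneg (abs_nonneg L) hC.M_nonneg))

lemma abs_euler_sub_le (hC : IsCellData k f σ K Kσ M) (hA : IsCFL k K h ρ) (hjT : j * h ≤ T)
    (Y Y' : EN N × ℝ) :
    |euler k f σ p L h ρ j Y - euler k f σ p L h ρ j Y'|
      ≤ Real.exp ((K + 1) * T) * (‖p‖ + 1 + Kσ) * ‖Y - Y'‖ := by
  have hK := hC.K_nonneg
  have hKσ := hC.Kσ_nonneg
  have hexp : (1 + h * (K + 1)) ^ j - 1 ≤ Real.exp ((K + 1) * T) :=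
    (sub_le_self _ zero_le_one).trans (one_add_mul_pow_le_exp (by positivity) hA.h_nonneg hjT)
  refine ((abs_euler_le_and_abs_euler_sub_le p L hC hA j).2 Y Y').trans ?_
  gcongr

variable {ε : ℝ} {ψ : EN N × ℝ → ℝ}

lemma mollify_euler_slope (hC : IsCellData k f σ K Kσ M) (hA : IsCFL k K h ρ)
    (hψ : IsMollifier volume ε ψ) (hjT : j * h ≤ T) (y : EN N) {b b' : ℝ} (hb : b ≤ b') :
    -(b' - b) ≤ mollify volume ψ (euler k f σ p L h ρ j) (y, b')
        - mollify volume ψ (euler k f σ p L h ρ j) (y, b) ∧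
      mollify volume ψ (euler k f σ p L h ρ j) (y, b')
        - mollify volume ψ (euler k f σ p L h ρ j) (y, b) ≤ (Real.exp (K * T) - 1) * (b' - b) := by
  have hv := continuous_euler p L hC hA j
  have hlower := mollify_le_mollify_add hψ hv hv (x := (y, b)) (y := (y, b')) (c := b' - b)
    fun t _ ↦ by
      have hmono := monotone_euler_add p L hC hA j (y - t.1) (sub_le_sub_right hb t.2)
      change euler k f σ p L h ρ j (y - t.1, b - t.2)
        ≤ euler k f σ p L h ρ j (y - t.1, b' - t.2) + (b' - b)
      simp only at hmono
      linarith
  have hupper := mollify_le_mollify_add hψ hv hv (x := (y, b')) (y := (y, b))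
    (c := (Real.exp (K * T) - 1) * (b' - b)) fun t _ ↦ by
      have hslope := euler_sub_le p L hC hA j (y - t.1) (sub_le_sub_right hb t.2)
      rw [sub_sub_sub_cancel_right] at hslope
      exact sub_le_iff_le_add'.1 <| hslope.trans <| mul_le_mul_of_nonneg_right
        (sub_le_sub_right (one_add_mul_pow_le_exp hC.K_nonneg hA.h_nonneg hjT) 1) (sub_nonneg.2 hb)
  constructor <;> linarith

lemma mollify_euler_growth {Co : ℝ} (hC : IsCellData k f σ K Kσ M) (hA : IsCFL k K h ρ)
    (hψ : IsMollifier volume ε ψ) {i : ℕ}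
    (hosc : ∀ Y Y', euler k f σ p L h ρ i Y - euler k f σ p L h ρ i Y' ≤ Co) (m : ℕ)
    (Y Y' : EN N × ℝ) :
    mollify volume ψ (euler k f σ p L h ρ (i + m)) Y
        ≤ mollify volume ψ (euler k f σ p L h ρ i) Y' + Co + (L + M) * (m * h) ∧
      mollify volume ψ (euler k f σ p L h ρ i) Y' - Co + (L - M) * (m * h)
        ≤ mollify volume ψ (euler k f σ p L h ρ (i + m)) Y := by
  have hv := continuous_euler p L hC hA
  have hupper := mollify_le_mollify_add hψ (hv (i + m)) (hv i) (x := Y) (y := Y')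
    (c := Co + (L + M) * (m * h)) fun t _ ↦ by
      linarith [euler_add_le p L hC hA (fun Z ↦ sub_le_iff_le_add.1 (hosc Z (Y' - t))) m (Y - t)]
  have hlower := mollify_le_mollify_add hψ (hv i) (hv (i + m)) (x := Y') (y := Y)
    (c := Co - (L - M) * (m * h)) fun t _ ↦ by
      linarith [le_euler_add p L hC hA (fun Z ↦ sub_le_comm.1 (hosc (Y' - t) Z)) m (Y - t)]
  constructor <;> linarith

end Consistency

section DiscreteApproximation

/-- Approximate solutions on `[0, T]` of the lifted cell problem, given at the times `j h`, `j ≤ n`,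
and smooth in `Y`. The equation holds up to the error `δ` along affine interpolation in time. -/
structure IsDiscreteApprox {N : ℕ} (k : EN N → ℝ) (f : ℝ → ℝ) (σ : ℝ → EN N → ℝ) (K M : ℝ)
    (p : EN N) (L T Co δ B : ℝ) (n : ℕ) (h : ℝ) (a : ℕ → EN N × ℝ → ℝ) : Prop where
  n_pos : 0 < n
  h_pos : 0 < h
  mul_eq : n * h = T
  zero : ∀ Y, a 0 Y = 0
  c2BoundedBy : ∀ j ≤ n, C2BoundedBy B (a j)
  slope : ∀ j ≤ n, ∀ y b b', b ≤ b' → -(b' - b) ≤ a j (y, b') - a j (y, b) ∧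
    a j (y, b') - a j (y, b) ≤ (Real.exp (K * T) - 1) * (b' - b)
  growth : ∀ i m Y Y', a (i + m) Y ≤ a i Y' + Co + (L + M) * (m * h) ∧
    a i Y' - Co + (L - M) * (m * h) ≤ a (i + m) Y
  equation : ∀ j < n, ∀ θ ∈ Icc (0 : ℝ) 1, ∀ Y,
    |(a (j + 1) Y - a j Y) / h
      - (levyGenerator k (fun y ↦ a j (y, Y.2) + θ * (a (j + 1) (y, Y.2) - a j (y, Y.2))) Y.1
        + reaction f σ p L (j * h + θ * h) Y (a j Y + θ * (a (j + 1) Y - a j Y)))| ≤ δ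

variable {N : ℕ} {k : EN N → ℝ} {f : ℝ → ℝ} {σ : ℝ → EN N → ℝ} {K Kσ M : ℝ}

lemma abs_residual_mollify_euler_le (hC : IsCellData k f σ K Kσ M) (p : EN N) (L : ℝ)
    {h ρ ε B ℓ : ℝ} (hA : IsCFL k K h ρ) (hh : 0 < h) {ψ : EN N × ℝ → ℝ}
    (hψ : IsMollifier volume ε ψ) {j : ℕ} (hB : ∀ Y, |euler k f σ p L h ρ j Y| ≤ B) (hℓ0 : 0 ≤ ℓ)
    (hℓ : ∀ Y Y', |euler k f σ p L h ρ j Y - euler k f σ p L h ρ j Y'| ≤ ℓ * ‖Y - Y'‖)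
    (Y : EN N × ℝ) :
    |(mollify volume ψ (euler k f σ p L h ρ (j + 1)) Y
        - mollify volume ψ (euler k f σ p L h ρ j) Y) / h
      - (largeJumps k (fun y ↦ mollify volume ψ (euler k f σ p L h ρ j) (y, Y.2)) ρ Y.1
        + reaction f σ p L (j * h) Y (mollify volume ψ (euler k f σ p L h ρ j) Y))|
      ≤ (K * (2 * ℓ + ‖p‖ + 1) + Kσ) * ε := by
  have hv := continuous_euler p L hC hA j
  rw [euler, mollify_eulerStep hC.isLevyDensity hψ hA.ρ_pos hv hB
      (continuous_reaction hC p L (j * h) hv), add_sub_cancel_left, mul_div_cancel_left₀ _ hh.ne',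
    add_sub_add_left_eq_sub]
  exact abs_mollify_reaction_sub_le hC p L (j * h) hψ hℓ0 hℓ Y

lemma isDiscreteApprox_mollify_euler (hC : IsCellData k f σ K Kσ M) (p : EN N) (L : ℝ)
    {h ρ ε B₀ B Co T : ℝ} {n : ℕ} (hA : IsCFL k K h ρ) (hn : 0 < n) (hh : 0 < h)
    (hT : n * h = T) {ψ : EN N × ℝ → ℝ} (hψ : IsMollifier volume ε ψ)
    (hB₀ : B₀ = (|L| + M) * T)
    (hB : ∀ u, Continuous u → (∀ Y, |u Y| ≤ B₀) → C2BoundedBy B (mollify volume ψ u))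
    (hosc : ∀ j Y Y', euler k f σ p L h ρ j Y - euler k f σ p L h ρ j Y' ≤ Co) {ℓ F δ : ℝ}
    (hℓ : ℓ = Real.exp ((K + 1) * T) * (‖p‖ + 1 + Kσ))
    (hF : F = (B₀ + B₀) * largeMass k ρ + (|L| + M))
    (hδ : (K * (2 * ℓ + ‖p‖ + 1) + Kσ) * ε + B * smallMoment k ρ
      + h * ((F + F) * largeMass k ρ + K * F + Kσ) ≤ δ) :
    IsDiscreteApprox k f σ K M p L T Co δ B n h
      fun j ↦ mollify volume ψ (euler k f σ p L h ρ j) := by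
  have hv := continuous_euler p L hC hA
  have hjT {j : ℕ} (hj : j ≤ n) : j * h ≤ T :=
    hT ▸ mul_le_mul_of_nonneg_right (Nat.cast_le.2 hj) hh.le
  have hbound {j : ℕ} (hj : j ≤ n) : ∀ Y, |euler k f σ p L h ρ j Y| ≤ B₀ :=
    hB₀ ▸ abs_euler_le p L hC hA (hjT hj)
  have hC2 (j : ℕ) (hj : j ≤ n) := hB _ (hv j) (hbound hj)
  refine ⟨hn, hh, hT, mollify_const hψ 0, hC2,
    fun j hj y _ _ hb ↦ mollify_euler_slope p L hC hA hψ (hjT hj) y hb,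
    fun i m ↦ mollify_euler_growth p L hC hA hψ (hosc i) m, fun j hj θ hθ Y ↦ ?_⟩
  refine (abs_residual_convexCombination_le hC p L (j * h) hh.le hA.ρ_pos (hC2 j hj.le)
    (hC2 (j + 1) hj) (fun Y ↦ ?_) hθ (abs_residual_mollify_euler_le hC p L hA hh hψ
      (hbound hj.le) (ℓ := ℓ) ?_ ?_ Y)).trans hδ
  · exact hF ▸ abs_mollify_eulerStep_sub_le hC.isLevyDensity hψ hh.le hA.ρ_pos (hv j)
      (hbound hj.le) (continuous_reaction hC p L (j * h) (hv j))
      (fun Y ↦ abs_reaction_le hC p L (j * h) Y _) Y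
  · have := hC.Kσ_nonneg
    rw [hℓ]
    positivity
  · exact hℓ ▸ abs_euler_sub_le p L hC hA (hjT hj.le)

/- The parameters are chosen in this order: the mollification radius from the Lipschitz bound on
the scheme, then the cut-off of the small jumps from the `C²` bound on the mollified functions,
then the number of steps. -/
lemma exists_isDiscreteApprox (hC : IsCellData k f σ K Kσ M) :
    ∃ Co, 0 ≤ Co ∧ ∀ (p : EN N) (L T : ℝ), 0 < T → ∀ δ > 0, ∃ B n h a,
      IsDiscreteApprox k f σ K M p L T Co δ B n h a := by
  obtain ⟨Co, hCo, hosc⟩ := exists_euler_sub_le hC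
  refine ⟨Co, hCo, fun p L T hT δ hδ ↦ ?_⟩
  set B₀ := (|L| + M) * T with hB₀
  set ℓ := Real.exp ((K + 1) * T) * (‖p‖ + 1 + Kσ) with hℓ
  have hB₀_nonneg : 0 ≤ B₀ := mul_nonneg (add_nonneg (abs_nonneg L) hC.M_nonneg) hT.le
  obtain ⟨ε, hε, hεδ⟩ := exists_pos_mul_lt (div_pos hδ three_pos) (K * (2 * ℓ + ‖p‖ + 1) + Kσ)
  obtain ⟨ψ, hψ⟩ := exists_isMollifier (μ := (volume : Measure (EN N × ℝ))) hε
  obtain ⟨Cε, hCε, hC2⟩ := exists_c2BoundedBy_mollify hψ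
  obtain ⟨κ, hκ, hκδ⟩ := exists_pos_mul_lt (div_pos hδ three_pos) (Cε * B₀)
  obtain ⟨ρ, hρ, hρ1, hρκ⟩ := exists_smallMoment_le hC.isLevyDensity hκ
  set F := (B₀ + B₀) * largeMass k ρ + (|L| + M) with hF
  have hstep (c : ℝ) {e : ℝ} (he : 0 < e) : ∀ᶠ n : ℕ in atTop, T / n * c ≤ e :=
    ((tendsto_const_div_atTop_nhds_zero_nat T).mul_const c).eventually_le_const (by rwa [zero_mul])
  obtain ⟨n, ⟨hn, hCFL⟩, hnδ⟩ := ((eventually_gt_atTop 0).and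
    (hstep (largeMass k ρ + K) one_pos)).and
    (hstep ((F + F) * largeMass k ρ + K * F + Kσ) (div_pos hδ three_pos)) |>.exists
  have hn' : (0 : ℝ) < n := Nat.cast_pos.2 hn
  have hA : IsCFL k K (T / n) ρ := ⟨(div_pos hT hn').le, hρ, hρ1, hCFL⟩
  refine ⟨Cε * B₀, n, T / n, _, isDiscreteApprox_mollify_euler hC p L hA hn (div_pos hT hn')
    (mul_div_cancel₀ T hn'.ne') hψ hB₀ (fun u hu ↦ hC2 u B₀ hu) (hosc p L _ ρ hA) hℓ hF ?_⟩
  linarith [mul_le_mul_of_nonneg_left hρκ (mul_nonneg hCε hB₀_nonneg)]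

end DiscreteApproximation

/-! ### Interpolation in time -/

section Interpolation

/-- Continuous interpolation, affine on each interval `[j h, (j + 1) h]` with `j < n`, of the values
`a j` at the times `j h`. -/
noncomputable def timeInterp {X : Type*} (a : ℕ → X → ℝ) (h : ℝ) (n : ℕ) (t : ℝ) (Y : X) : ℝ :=
  a 0 Y + ∑ i ∈ Finset.range n, (a (i + 1) Y - a i Y) / h * max 0 (min (t - i * h) h)

lemma timeInterp_apply {X : Type*} (a : ℕ → X → ℝ) {h : ℝ} (hh : 0 < h) {n j : ℕ} (hj : j < n)
    {θ : ℝ} (hθ : θ ∈ Icc 0 1) (Y : X) :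
    timeInterp a h n (j * h + θ * h) Y = a j Y + θ * (a (j + 1) Y - a j Y) := by
  have hpast : ∀ i ∈ Finset.range j,
      (a (i + 1) Y - a i Y) / h * max 0 (min (j * h + θ * h - i * h) h) = a (i + 1) Y - a i Y := by
    intro i hi
    have hij : ((i : ℝ) + 1) * h ≤ j * h :=
      mul_le_mul_of_nonneg_right (by exact_mod_cast Finset.mem_range.1 hi) hh.le
    rw [min_eq_right (by linarith [mul_nonneg hθ.1 hh.le]), max_eq_right hh.le,
      div_mul_cancel₀ _ hh.ne']
  have hfuture : ∀ i ∈ Finset.range n, i ∉ Finset.range (j + 1) →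
      (a (i + 1) Y - a i Y) / h * max 0 (min (j * h + θ * h - i * h) h) = 0 := by
    intro i _ hi
    have hji : ((j : ℝ) + 1) * h ≤ i * h := mul_le_mul_of_nonneg_right
      (by exact_mod_cast not_lt.1 (Finset.mem_range.not.1 hi)) hh.le
    rw [max_eq_left, mul_zero]
    exact (min_le_left _ _).trans (by linarith [mul_le_of_le_one_left hh.le hθ.2])
  rw [timeInterp, ← Finset.sum_subset (Finset.range_subset_range.2 hj) hfuture,
    Finset.sum_range_succ, Finset.sum_congr rfl hpast, Finset.sum_range_sub fun i ↦ a i Y,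
    add_sub_cancel_left, min_eq_left (mul_le_of_le_one_left hh.le hθ.2),
    max_eq_right (mul_nonneg hθ.1 hh.le)]
  field_simp
  ring

lemma continuous_timeInterp {X : Type*} [TopologicalSpace X] {a : ℕ → X → ℝ} {n : ℕ}
    (ha : ∀ j ≤ n, Continuous (a j)) (h : ℝ) :
    Continuous fun q : ℝ × X ↦ timeInterp a h n q.1 q.2 := by
  unfold timeInterp
  refine ((ha 0 n.zero_le).comp continuous_snd).add (continuous_finsetSum _ fun i hi ↦ ?_)
  have hi₀ := ha i (Finset.mem_range.1 hi).le
  have hi₁ := ha (i + 1) (Finset.mem_range.1 hi)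
  fun_prop

lemma exists_eq_mul_add_mul {h t : ℝ} {j : ℕ} (hh : 0 < h) (ht : t ∈ Icc (j * h) ((j + 1) * h)) :
    ∃ θ ∈ Icc (0 : ℝ) 1, t = j * h + θ * h := by
  refine ⟨(t - j * h) / h, ⟨div_nonneg (sub_nonneg.2 ht.1) hh.le, ?_⟩, ?_⟩
  · rw [div_le_one hh]
    linarith [ht.2]
  · rw [div_mul_cancel₀ _ hh.ne']
    ring

lemma exists_mem_Icc_mul {h t : ℝ} {n : ℕ} (hh : 0 < h) (hn : 0 < n) (ht : t ∈ Icc 0 (n * h)) :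
    ∃ j < n, t ∈ Icc (j * h) ((j + 1) * h) := by
  rcases ht.2.lt_or_eq with hlt | rfl
  · refine ⟨⌊t / h⌋₊, ?_, ?_, ?_⟩
    · rwa [Nat.floor_lt (div_nonneg ht.1 hh.le), div_lt_iff₀ hh]
    · exact (le_div_iff₀ hh).1 (Nat.floor_le (div_nonneg ht.1 hh.le))
    · exact ((div_lt_iff₀ hh).1 (Nat.lt_floor_add_one _)).le
  · obtain ⟨m, rfl⟩ := Nat.exists_eq_succ_of_ne_zero hn.ne'
    refine ⟨m, m.lt_succ_self, ?_⟩
    push_cast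
    exact ⟨mul_le_mul_of_nonneg_right (by linarith) hh.le, le_rfl⟩

/- The difference is affine in both fractional parts, and within one step only ordered pairs
occur. -/
lemma affine_le_affine_of_growth {x y : ℕ → ℝ} {c A : ℝ}
    (hxy : ∀ i j, i ≤ j → x j ≤ y i + c + A * (j - i)) {i j : ℕ} {θ θ' : ℝ} (hθ : θ ∈ Icc 0 1)
    (hθ' : θ' ∈ Icc 0 1) (hle : i + θ' ≤ j + θ) :
    x j + θ * (x (j + 1) - x j)
      ≤ y i + θ' * (y (i + 1) - y i) + c + A * (j + θ - (i + θ')) := by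
  have hθ₁ := sub_nonneg.2 hθ.2
  have hθ'₁ := sub_nonneg.2 hθ'.2
  rcases lt_trichotomy i j with hlt | rfl | hgt
  · have h₀₀ := hxy i j hlt.le
    have h₀₁ := hxy i (j + 1) (hlt.le.trans j.le_succ)
    have h₁₀ := hxy (i + 1) j hlt
    have h₁₁ := hxy (i + 1) (j + 1) (Nat.succ_le_succ hlt.le)
    push_cast at h₀₁ h₁₀ h₁₁
    linarith [mul_le_mul_of_nonneg_left h₀₀ (mul_nonneg hθ'₁ hθ₁),
      mul_le_mul_of_nonneg_left h₀₁ (mul_nonneg hθ'₁ hθ.1),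
      mul_le_mul_of_nonneg_left h₁₀ (mul_nonneg hθ'.1 hθ₁),
      mul_le_mul_of_nonneg_left h₁₁ (mul_nonneg hθ'.1 hθ.1)]
  · have h₀₀ := hxy i i le_rfl
    have h₀₁ := hxy i (i + 1) i.le_succ
    have h₁₁ := hxy (i + 1) (i + 1) le_rfl
    push_cast at h₀₁ h₁₁
    linarith [mul_le_mul_of_nonneg_left h₀₀ hθ₁, mul_le_mul_of_nonneg_left h₁₁ hθ'.1,
      mul_le_mul_of_nonneg_left h₀₁ (sub_nonneg.2 (le_of_add_le_add_left hle))]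
  · have hji : (j : ℝ) + 1 ≤ i := by exact_mod_cast hgt
    obtain rfl : θ = 1 := le_antisymm hθ.2 (by linarith [hθ'.1])
    obtain rfl : θ' = 0 := le_antisymm (by linarith) hθ'.1
    obtain rfl : i = j + 1 := le_antisymm (by exact_mod_cast (add_zero (i : ℝ)).ge.trans hle) hgt
    have h₁₁ := hxy (j + 1) (j + 1) le_rfl
    push_cast at h₁₁ ⊢
    linarith

end Interpolation

section SmoothApproximation

/-- Approximate solutions on `[0, T]` of the lifted cell problem, smooth in `Y` and affine in time,
with slope `D j`, on each of the intervals `[j h, (j + 1) h]`, `j < n`. -/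
structure IsSmoothApprox {N : ℕ} (k : EN N → ℝ) (f : ℝ → ℝ) (σ : ℝ → EN N → ℝ) (K M : ℝ)
    (p : EN N) (L T Co δ B : ℝ) (n : ℕ) (h : ℝ) (U : ℝ → EN N × ℝ → ℝ) (D : ℕ → EN N × ℝ → ℝ) :
    Prop where
  h_pos : 0 < h
  mul_eq : n * h = T
  continuous : Continuous fun q : ℝ × (EN N × ℝ) ↦ U q.1 q.2
  zero : ∀ Y, U 0 Y = 0
  c2BoundedBy : ∀ t ∈ Icc 0 T, C2BoundedBy B (U t)
  slope : ∀ t ∈ Icc 0 T, ∀ y b b', b ≤ b' → -(b' - b) ≤ U t (y, b') - U t (y, b) ∧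
    U t (y, b') - U t (y, b) ≤ (Real.exp (K * T) - 1) * (b' - b)
  growth : ∀ t' t, 0 ≤ t' → t' ≤ t → t ≤ T → ∀ Y Y',
    U t Y ≤ U t' Y' + Co + (L + M) * (t - t') ∧ U t' Y' - Co + (L - M) * (t - t') ≤ U t Y
  contDiff_slope : ∀ j < n, ContDiff ℝ 2 (D j)
  affine : ∀ j < n, ∀ t ∈ Icc (j * h) ((j + 1) * h), ∀ Y, U t Y = U (j * h) Y + (t - j * h) * D j Y
  equation : ∀ j < n, ∀ t ∈ Icc (j * h) ((j + 1) * h), ∀ Y,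
    |D j Y - (levyGenerator k (fun y ↦ U t (y, Y.2)) Y.1 + reaction f σ p L t Y (U t Y))| ≤ δ

/-- Existence of smooth approximations of the lifted cell problem with arbitrary horizon and
accuracy, whose oscillation constant `Co` depends neither on those nor on `p` and `L`. -/
def HasSmoothApprox {N : ℕ} (k : EN N → ℝ) (f : ℝ → ℝ) (σ : ℝ → EN N → ℝ) (K M Co : ℝ) : Prop :=
  ∀ (p : EN N) (L T : ℝ), 0 < T → ∀ δ > 0, ∃ B n h U D,
    IsSmoothApprox k f σ K M p L T Co δ B n h U D

variable {N : ℕ} {k : EN N → ℝ} {f : ℝ → ℝ} {σ : ℝ → EN N → ℝ} {K Kσ M : ℝ} {p : EN N}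
  {L T Co δ B h : ℝ} {n : ℕ} {a : ℕ → EN N × ℝ → ℝ}

lemma IsDiscreteApprox.exists_timeInterp_eq (A : IsDiscreteApprox k f σ K M p L T Co δ B n h a)
    {t : ℝ} (ht : t ∈ Icc 0 T) :
    ∃ j < n, ∃ θ ∈ Icc (0 : ℝ) 1, t = j * h + θ * h ∧
      timeInterp a h n t = fun Y ↦ a j Y + θ * (a (j + 1) Y - a j Y) := by
  obtain ⟨j, hj, htj⟩ := exists_mem_Icc_mul A.h_pos A.n_pos (A.mul_eq ▸ ht)
  obtain ⟨θ, hθ, rfl⟩ := exists_eq_mul_add_mul A.h_pos htj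
  exact ⟨j, hj, θ, hθ, rfl, funext (timeInterp_apply a A.h_pos hj hθ)⟩

lemma IsDiscreteApprox.timeInterp_growth (A : IsDiscreteApprox k f σ K M p L T Co δ B n h a)
    {t' t : ℝ} (ht' : 0 ≤ t') (hle : t' ≤ t) (ht : t ≤ T) (Y Y' : EN N × ℝ) :
    timeInterp a h n t Y ≤ timeInterp a h n t' Y' + Co + (L + M) * (t - t') ∧
      timeInterp a h n t' Y' - Co + (L - M) * (t - t') ≤ timeInterp a h n t Y := by
  obtain ⟨j, _, θ, hθ, rfl, hU⟩ := A.exists_timeInterp_eq ⟨ht'.trans hle, ht⟩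
  obtain ⟨i, _, θ', hθ', rfl, hU'⟩ := A.exists_timeInterp_eq ⟨ht', hle.trans ht⟩
  have hle' : i + θ' ≤ j + θ := le_of_mul_le_mul_right (by linarith) A.h_pos
  have hgrid (i j : ℕ) := A.growth i (j - i) Y Y'
  have hupper := affine_le_affine_of_growth (x := fun j ↦ a j Y) (y := fun i ↦ a i Y')
    (c := Co) (A := (L + M) * h) (fun i j hij ↦ by
      have := (hgrid i j).1
      rw [Nat.add_sub_cancel' hij, Nat.cast_sub hij] at this
      linarith) hθ hθ' hle'
  have hlower := affine_le_affine_of_growth (x := fun j ↦ -a j Y) (y := fun i ↦ -a i Y')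
    (c := Co) (A := -(L - M) * h) (fun i j hij ↦ by
      have := (hgrid i j).2
      rw [Nat.add_sub_cancel' hij, Nat.cast_sub hij] at this
      linarith) hθ hθ' hle'
  rw [hU, hU']
  constructor <;> linarith

lemma IsDiscreteApprox.isSmoothApprox_timeInterp
    (A : IsDiscreteApprox k f σ K M p L T Co δ B n h a) :
    IsSmoothApprox k f σ K M p L T Co δ B n h (timeInterp a h n)
      fun j Y ↦ (a (j + 1) Y - a j Y) / h := by
  have hinterp {j : ℕ} (hj : j < n) {θ : ℝ} (hθ : θ ∈ Icc 0 1) :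
      timeInterp a h n (j * h + θ * h) = fun Y ↦ a j Y + θ * (a (j + 1) Y - a j Y) :=
    funext (timeInterp_apply a A.h_pos hj hθ)
  have hgrid {j : ℕ} (hj : j < n) : timeInterp a h n (j * h) = a j := by
    simpa only [zero_mul, add_zero] using hinterp hj (left_mem_Icc.2 zero_le_one)
  refine ⟨A.h_pos, A.mul_eq,
    continuous_timeInterp (fun j hj ↦ (A.c2BoundedBy j hj).contDiff.continuous) h,
    fun Y ↦ ?_, fun t ht ↦ ?_, fun t ht y b b' hb ↦ ?_,
    fun t' t ht' hle ht ↦ A.timeInterp_growth ht' hle ht, fun j hj ↦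
      ((A.c2BoundedBy (j + 1) hj).contDiff.sub (A.c2BoundedBy j hj.le).contDiff).div_const h,
    fun j hj t ht Y ↦ ?_, fun j hj t ht Y ↦ ?_⟩
  · simpa only [Nat.cast_zero, zero_mul, A.zero] using congrFun (hgrid A.n_pos) Y
  · obtain ⟨j, hj, θ, hθ, -, hU⟩ := A.exists_timeInterp_eq ht
    exact hU ▸ (A.c2BoundedBy j hj.le).convexCombination (A.c2BoundedBy (j + 1) hj) hθ
  · obtain ⟨j, hj, θ, hθ, -, hU⟩ := A.exists_timeInterp_eq ht
    have hslope₀ := A.slope j hj.le y b b' hb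
    have hslope₁ := A.slope (j + 1) hj y b b' hb
    have hθ₁ := sub_nonneg.2 hθ.2
    rw [hU]
    constructor
    · linarith [mul_le_mul_of_nonneg_left hslope₀.1 hθ₁, mul_le_mul_of_nonneg_left hslope₁.1 hθ.1]
    · linarith [mul_le_mul_of_nonneg_left hslope₀.2 hθ₁, mul_le_mul_of_nonneg_left hslope₁.2 hθ.1]
  · obtain ⟨θ, hθ, rfl⟩ := exists_eq_mul_add_mul A.h_pos ht
    rw [hinterp hj hθ, hgrid hj, add_sub_cancel_left, mul_assoc, mul_div_cancel₀ _ A.h_pos.ne']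
  · obtain ⟨θ, hθ, rfl⟩ := exists_eq_mul_add_mul A.h_pos ht
    rw [hinterp hj hθ]
    exact A.equation j hj θ hθ Y

lemma exists_hasSmoothApprox (hC : IsCellData k f σ K Kσ M) :
    ∃ Co, 0 ≤ Co ∧ HasSmoothApprox k f σ K M Co := by
  obtain ⟨Co, hCo, H⟩ := exists_isDiscreteApprox hC
  refine ⟨Co, hCo, fun p L T hT δ hδ ↦ ?_⟩
  obtain ⟨B, n, h, a, A⟩ := H p L T hT δ hδ
  exact ⟨B, n, h, _, _, A.isSmoothApprox_timeInterp⟩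

end SmoothApproximation

/-! ### Comparison of viscosity subsolutions with smooth functions -/

section PenalizedMaximum

lemma exists_mem_Ico_lt_of_continuousOn {f : ℝ → ℝ} {a b c : ℝ} (hab : a < b)
    (hf : ContinuousOn f (Icc a b)) (h : ∃ t ∈ Icc a b, c < f t) : ∃ t ∈ Ico a b, c < f t := by
  by_contra! hle
  obtain ⟨t, ht, hct⟩ := h
  have hclosure : closure (Ico a b) = Icc a b := closure_Ico hab.ne
  exact hct.not_ge (le_on_closure hle (hclosure ▸ hf) continuousOn_const (hclosure ▸ ht))

lemma exists_least_exp_majorant {X : Type*} {u : ℝ → X → ℝ} {t₀ t₁ B γ c : ℝ} (hγ : 0 ≤ γ)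
    (hB : ∀ t ∈ Icc t₀ t₁, ∀ y, u t y ≤ B)
    (hc : ∃ t ∈ Icc t₀ t₁, ∃ y, c * Real.exp (γ * t) < u t y) :
    ∃ S, c < S ∧ (∀ t ∈ Icc t₀ t₁, ∀ y, u t y ≤ S * Real.exp (γ * t)) ∧
      ∀ ε > 0, ∃ t ∈ Icc t₀ t₁, ∃ y, S * Real.exp (γ * t) - ε < u t y := by
  set A : Set ℝ := {x | ∃ t ∈ Icc t₀ t₁, ∃ y, x = u t y / Real.exp (γ * t)}
  have hbdd : BddAbove A := by
    refine ⟨max B 0 / Real.exp (γ * t₀), ?_⟩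
    rintro x ⟨t, ht, y, rfl⟩
    exact div_le_div₀ (le_max_right _ _) ((hB t ht y).trans (le_max_left _ _)) (Real.exp_pos _)
      (Real.exp_le_exp.2 (mul_le_mul_of_nonneg_left ht.1 hγ))
  obtain ⟨t, ht, y, hy⟩ := hc
  refine ⟨sSup A, ?_, fun t ht y ↦ ?_, fun ε hε ↦ ?_⟩
  · exact ((lt_div_iff₀ (Real.exp_pos _)).2 hy).trans_le (le_csSup hbdd ⟨t, ht, y, rfl⟩)
  · exact (div_le_iff₀ (Real.exp_pos _)).1 (le_csSup hbdd ⟨t, ht, y, rfl⟩)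
  · obtain ⟨x, ⟨t', ht', y', rfl⟩, hx⟩ := exists_lt_of_lt_csSup (s := A) ⟨_, t, ht, y, rfl⟩
      (sub_lt_self (sSup A) (div_pos hε (Real.exp_pos (γ * t₁))))
    refine ⟨t', ht', y', ?_⟩
    rw [lt_div_iff₀ (Real.exp_pos _), sub_mul] at hx
    have hexp : Real.exp (γ * t') ≤ Real.exp (γ * t₁) :=
      Real.exp_le_exp.2 (mul_le_mul_of_nonneg_left ht'.2 hγ)
    have hε' : ε / Real.exp (γ * t₁) * Real.exp (γ * t') ≤ ε := by
      rw [div_mul_eq_mul_div, div_le_iff₀ (Real.exp_pos _)]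
      exact mul_le_mul_of_nonneg_left hexp hε.le
    linarith

variable {E : Type*} [NormedAddCommGroup E]

/- A near-maximum becomes a true maximum once a translated cut-off is added at its position; the
exponential `κ / 2 * exp (m * (t - t'))` with `m = 2 / (t₁ - t')` keeps that maximum away from the
final time. -/
lemma exists_penalized_max {u : ℝ → E → ℝ} {χ : E → ℝ} {t₀ t₁ κ : ℝ} (hκ : 0 < κ)
    (ht : t₀ < t₁) (hu : ContinuousOn (fun q : ℝ × E ↦ u q.1 q.2) (Icc t₀ t₁ ×ˢ univ))
    (hu_nonpos : ∀ t ∈ Icc t₀ t₁, ∀ y, u t y ≤ 0) (hinit : ∀ y, u t₀ y ≤ -κ)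
    (hnear : ∃ t ∈ Icc t₀ t₁, ∃ y, -(κ / 4) < u t y) (hχ : Continuous χ)
    (hsupp : HasCompactSupport χ) (hχ_zero : χ 0 = 1) (hχ_le : ∀ y, χ y ≤ 1) :
    ∃ (θ : ℝ → ℝ) (a : E), ContDiff ℝ 2 θ ∧ (∀ t, 0 ≤ deriv θ t) ∧
      ∃ t ∈ Ioo t₀ t₁, ∃ y, -κ < u t y ∧ ∀ t' ∈ Icc t₀ t₁, ∀ y',
        u t' y' - (θ t' - 2 * κ * χ (y' - a)) ≤ u t y - (θ t - 2 * κ * χ (y - a)) := by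
  obtain ⟨t', ht', a, ha⟩ : ∃ t ∈ Ico t₀ t₁, ∃ y, -(κ / 4) < u t y := by
    obtain ⟨t, ht', y, hy⟩ := hnear
    have hcont : ContinuousOn (fun t ↦ u t y) (Icc t₀ t₁) :=
      hu.comp (f := fun t ↦ (t, y)) (by fun_prop) fun t ht ↦ ⟨ht, mem_univ y⟩
    obtain ⟨t, ht, hlt⟩ := exists_mem_Ico_lt_of_continuousOn ht hcont ⟨t, ht', hy⟩
    exact ⟨t, ht, y, hlt⟩
  set m := 2 / (t₁ - t')
  have hm : m * (t₁ - t') = 2 := div_mul_cancel₀ _ (sub_pos.2 ht'.2).ne'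
  set θ : ℝ → ℝ := fun t ↦ κ / 2 * Real.exp (m * (t - t'))
  have hθ_pos (t : ℝ) : 0 < θ t := by positivity
  have hθ_deriv (t : ℝ) : HasDerivAt θ (κ / 2 * (Real.exp (m * (t - t')) * (m * 1))) t :=
    ((((hasDerivAt_id t).sub_const t').const_mul m).exp).const_mul (κ / 2)
  have hm_pos : 0 < m := div_pos two_pos (sub_pos.2 ht'.2)
  refine ⟨θ, a, by fun_prop, fun t ↦ by rw [(hθ_deriv t).deriv]; positivity, ?_⟩
  set v : ℝ × E → ℝ := fun q ↦ u q.1 q.2 - (θ q.1 - 2 * κ * χ (q.2 - a))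
  set A : Set E := Homeomorph.subRight a ⁻¹' tsupport χ
  have haA : a ∈ A := subset_tsupport χ (by simp [hχ_zero])
  have hvA : 5 * κ / 4 < v (t', a) := by
    simp only [v, θ, sub_self, mul_zero, Real.exp_zero, hχ_zero]
    linarith
  have hv : ContinuousOn v (Icc t₀ t₁ ×ˢ A) :=
    (hu.mono (prod_mono_right (subset_univ _))).sub (Continuous.continuousOn (by fun_prop))
  obtain ⟨⟨t, y⟩, ⟨hty, -⟩, hmax⟩ := (isCompact_Icc.prod
    ((Homeomorph.subRight a).isCompact_preimage.2 hsupp)).exists_isMaxOn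
    ⟨(t', a), Ico_subset_Icc_self ht', haA⟩ hv
  have hvty : 5 * κ / 4 < u t y - (θ t - 2 * κ * χ (y - a)) :=
    hvA.trans_le (hmax ⟨Ico_subset_Icc_self ht', haA⟩)
  have hχty : 2 * κ * χ (y - a) ≤ 2 * κ := mul_le_of_le_one_right (by positivity) (hχ_le _)
  refine ⟨t, ⟨hty.1.lt_of_ne ?_, hty.2.lt_of_ne ?_⟩, y, by linarith [hθ_pos t],
    fun τ hτ x ↦ ?_⟩
  · rintro rfl
    linarith [hinit y, hθ_pos t₀]
  · rintro rfl
    have hθ : κ / 2 * 3 ≤ θ t := mul_le_mul_of_nonneg_left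
      (by rw [hm]; linarith [Real.add_one_le_exp (2 : ℝ)]) (by positivity)
    linarith [hu_nonpos t hty y]
  · by_cases hx : x ∈ A
    · exact hmax (⟨hτ, hx⟩ : (τ, x) ∈ Icc t₀ t₁ ×ˢ A)
    · have hχx : χ (x - a) = 0 := image_eq_zero_of_notMem_tsupport hx
      rw [hχx]
      linarith [hu_nonpos τ hτ x, hθ_pos τ]

end PenalizedMaximum

section Comparison

variable {E : Type*} [NormedAddCommGroup E] [InnerProductSpace ℝ E] [FiniteDimensional ℝ E]
  [MeasurableSpace E] [BorelSpace E] {k : E → ℝ} {Q : ℝ → E → ℝ → ℝ} {w : ℝ → E → ℝ}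

/-- Continuous viscosity subsolutions of `∂_t w = I[w] + Q(t, y, w)`, where `I` is the Lévy operator
of density `k`, bounded on bounded time intervals. Supersolutions are treated by changing sign. -/
structure IsJumpSubsolution (k : E → ℝ) (Q : ℝ → E → ℝ → ℝ) (w : ℝ → E → ℝ) : Prop where
  continuousOn : ContinuousOn (fun q : ℝ × E ↦ w q.1 q.2) (Ici 0 ×ˢ univ)
  exists_abs_le : ∀ T : ℝ, ∃ B, ∀ t ∈ Icc 0 T, ∀ y, |w t y| ≤ B
  deriv_le : ∀ (t₀ : ℝ) (x₀ : E), 0 < t₀ →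
    ∀ φ : ℝ → E → ℝ, ContDiff ℝ 2 (fun q : ℝ × E ↦ φ q.1 q.2) →
    ∀ τ r : ℝ, 0 < τ → τ < t₀ → 0 < r →
    (∀ t x, t ∈ Ioo (t₀ - τ) (t₀ + τ) → x ∈ ball x₀ r → w t x - φ t x ≤ w t₀ x₀ - φ t₀ x₀) →
    deriv (fun t ↦ φ t x₀) t₀ ≤
      smallJumps k (φ t₀) r x₀ + largeJumps k (w t₀) r x₀ + Q t₀ x₀ (w t₀ x₀)

lemma IsJumpSubsolution.comp_add_const (hw : IsJumpSubsolution k Q w) {m : ℝ} (hm : 0 ≤ m) :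
    IsJumpSubsolution k (fun t y v ↦ Q (t + m) y v) (fun t y ↦ w (t + m) y) := by
  refine ⟨?_, fun T ↦ ?_, fun t₀ x₀ _ φ hφ τ r hτ hτt hr hmax ↦ ?_⟩
  · exact hw.continuousOn.comp (f := fun q : ℝ × E ↦ (q.1 + m, q.2)) (by fun_prop)
      fun q hq ↦ ⟨add_nonneg hq.1 hm, mem_univ _⟩
  · obtain ⟨B, hB⟩ := hw.exists_abs_le (T + m)
    exact ⟨B, fun t ht y ↦ hB _ ⟨add_nonneg ht.1 hm, add_le_add_left ht.2 m⟩ y⟩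
  · have hφ' : ContDiff ℝ 2 fun q : ℝ × E ↦ φ (q.1 - m) q.2 :=
      hφ.comp ((contDiff_fst.sub contDiff_const).prodMk contDiff_snd)
    have htest := hw.deriv_le (t₀ + m) x₀ (by linarith) (fun t x ↦ φ (t - m) x) hφ' τ r hτ
      (by linarith) hr fun t x ht hx ↦ by
        simpa using hmax (t - m) x ⟨by linarith [ht.1], by linarith [ht.2]⟩ hx
    rw [deriv_comp_sub_const (f := fun t ↦ φ t x₀)] at htest
    simpa using htest

lemma IsJumpSubsolution.deriv_le_levyGenerator (hk : IsLevyDensity k)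
    (hw : IsJumpSubsolution k Q w) {ψ : ℝ → E → ℝ} (hψ : ContDiff ℝ 2 fun q : ℝ × E ↦ ψ q.1 q.2)
    {t₀ t₁ t B : ℝ} (ht₀ : 0 ≤ t₀) (ht : t ∈ Ioo t₀ t₁) (hψt : C2BoundedBy B (ψ t)) {y : E}
    (hmax : ∀ t' ∈ Icc t₀ t₁, ∀ y', w t' y' - ψ t' y' ≤ w t y - ψ t y) :
    deriv (fun t ↦ ψ t y) t ≤ levyGenerator k (ψ t) y + Q t y (w t y) := by
  obtain ⟨τ, hτ, hτ'⟩ : ∃ τ > 0, τ < min (t - t₀) (t₁ - t) :=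
    exists_between (lt_min (sub_pos.2 ht.1) (sub_pos.2 ht.2))
  rw [lt_min_iff] at hτ'
  have htpos : 0 < t := ht₀.trans_lt ht.1
  have htest := hw.deriv_le t y htpos ψ hψ τ 1 hτ (by linarith) one_pos fun t' x ht' _ ↦
    hmax t' ⟨by linarith [ht'.1], by linarith [ht'.2]⟩ x
  obtain ⟨Bw, hBw⟩ := hw.exists_abs_le t
  have hwt : Continuous (w t) := hw.continuousOn.comp_continuous (f := fun x ↦ (t, x))
    (by fun_prop) fun x ↦ ⟨htpos.le, mem_univ x⟩
  have hlarge : largeJumps k (w t) 1 y ≤ largeJumps k (ψ t) 1 y :=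
    largeJumps_mono hk one_pos hwt hψt.contDiff.continuous (hBw t (right_mem_Icc.2 htpos.le))
      hψt.abs_le fun z ↦ by linarith [hmax t (Ioo_subset_Icc_self ht) (y + z)]
  unfold levyGenerator
  linarith

lemma exists_c2BoundedBy_cutoff (E : Type*) [NormedAddCommGroup E] [InnerProductSpace ℝ E]
    [FiniteDimensional ℝ E] : ∃ (χ : E → ℝ) (B : ℝ), C2BoundedBy B χ ∧ HasCompactSupport χ ∧
      χ 0 = 1 ∧ ∀ y, χ y ≤ 1 := by
  let χ : ContDiffBump (0 : E) := ⟨1, 2, one_pos, one_lt_two⟩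
  obtain ⟨B, hB⟩ := exists_c2BoundedBy_of_hasCompactSupport χ.contDiff χ.hasCompactSupport
  exact ⟨χ, B, hB, χ.hasCompactSupport,
    χ.one_of_mem_closedBall (mem_closedBall_self zero_le_one), fun _ ↦ χ.le_one⟩

/- The weight `exp ((K + 1) * t)` grows faster than the Lipschitz constant `K` of the reaction term
can compensate. -/
lemma IsJumpSubsolution.le_of_penalized_max (hk : IsLevyDensity k) {K : ℝ}
    (hQ : ∀ t y v v', |Q t y v - Q t y v'| ≤ K * |v - v'|) (hK : 0 ≤ K)
    (hw : IsJumpSubsolution k Q w) {t₀ t₁ t B Bχ S δ κ : ℝ} (ht₀ : 0 ≤ t₀) (ht : t ∈ Ioo t₀ t₁)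
    {V : ℝ → E → ℝ} (hV : ContDiff ℝ 2 fun q : ℝ × E ↦ V q.1 q.2) (hVt : C2BoundedBy B (V t))
    {χ : E → ℝ} (hχ : C2BoundedBy Bχ χ) {θ : ℝ → ℝ} (hθ : ContDiff ℝ 2 θ) (hθ' : 0 ≤ deriv θ t)
    (hS : 0 ≤ S) (hκ : 0 ≤ κ) {y a : E}
    (hle : w t y ≤ V t y + S * Real.exp ((K + 1) * t))
    (hge : V t y + S * Real.exp ((K + 1) * t) - κ ≤ w t y)
    (hmax : ∀ t' ∈ Icc t₀ t₁, ∀ y', w t' y' - V t' y' - S * Real.exp ((K + 1) * t')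
        - (θ t' - 2 * κ * χ (y' - a)) ≤
      w t y - V t y - S * Real.exp ((K + 1) * t) - (θ t - 2 * κ * χ (y - a)))
    (hsup : levyGenerator k (V t) y + Q t y (V t y) ≤ deriv (fun t ↦ V t y) t + δ) :
    S ≤ δ + κ * (2 * (Bχ * (smallMoment k 1 + 2 * largeMass k 1)) + K) := by
  set c : ℝ → ℝ := fun t ↦ S * Real.exp ((K + 1) * t) + θ t
  set ψ : ℝ → E → ℝ := fun t y ↦ V t y + -(2 * κ) * χ (y - a) + c t
  have hχa := (hχ.comp_sub_const a).const_mul (-(2 * κ))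
  have hψ : ContDiff ℝ 2 fun q : ℝ × E ↦ ψ q.1 q.2 := by
    have := hθ.comp (contDiff_fst (E := ℝ) (F := E))
    have := hχa.contDiff.comp (contDiff_snd (E := ℝ) (F := E))
    simp only [ψ, c]
    fun_prop
  have hψt : C2BoundedBy _ (ψ t) := (hVt.add hχa).add_const (c t)
  have htest := hw.deriv_le_levyGenerator hk hψ ht₀ ht hψt (y := y) fun t' ht' y' ↦ by
    simp only [ψ, c]
    linarith [hmax t' ht' y']
  have hderiv : deriv (fun t ↦ ψ t y) t = deriv (fun t ↦ V t y) t
      + (S * (Real.exp ((K + 1) * t) * (K + 1)) + deriv θ t) := by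
    have hdV : DifferentiableAt ℝ (fun t ↦ V t y) t :=
      (hV.comp (contDiff_id.prodMk contDiff_const)).differentiable (by norm_num) t
    have hdθ := (hθ.differentiable (by norm_num) t).hasDerivAt
    have hdexp := ((hasDerivAt_id t).const_mul (K + 1)).exp.const_mul S
    rw [mul_one] at hdexp
    exact ((hdV.hasDerivAt.add_const _).add (hdexp.add hdθ)).deriv
  have hgen : levyGenerator k (ψ t) y ≤ levyGenerator k (V t) y
      + 2 * κ * (Bχ * (smallMoment k 1 + 2 * largeMass k 1)) := by
    simp only [ψ]
    rw [levyGenerator_add_const, levyGenerator_add hk hVt hχa]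
    have := (abs_le.1 (abs_levyGenerator_le hk hχa y)).2
    rw [abs_neg, abs_of_nonneg (mul_nonneg zero_le_two hκ), mul_assoc] at this
    linarith
  have hSexp : S ≤ S * Real.exp ((K + 1) * t) := le_mul_of_one_le_right hS
    (Real.one_le_exp (mul_nonneg (by linarith) (ht₀.trans ht.1.le)))
  have hreact : Q t y (w t y) - Q t y (V t y) ≤ K * (S * Real.exp ((K + 1) * t) + κ) :=
    (le_abs_self _).trans ((hQ _ _ _ _).trans (mul_le_mul_of_nonneg_left
      (abs_le.2 ⟨by linarith, by linarith⟩) hK))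
  linarith

theorem IsJumpSubsolution.le_add_exp (hk : IsLevyDensity k) {K : ℝ} (hK : 0 ≤ K)
    (hQ : ∀ t y v v', |Q t y v - Q t y v'| ≤ K * |v - v'|) (hw : IsJumpSubsolution k Q w)
    {t₀ t₁ B δ : ℝ} (ht₀ : 0 ≤ t₀) (ht : t₀ < t₁) (hδ : 0 < δ) {V : ℝ → E → ℝ}
    (hV : ContDiff ℝ 2 fun q : ℝ × E ↦ V q.1 q.2) (hVt : ∀ t ∈ Icc t₀ t₁, C2BoundedBy B (V t))
    (hsup : ∀ t ∈ Icc t₀ t₁, ∀ y,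
      levyGenerator k (V t) y + Q t y (V t y) ≤ deriv (fun t ↦ V t y) t + δ)
    (hinit : ∀ y, w t₀ y ≤ V t₀ y + 2 * δ * Real.exp ((K + 1) * t₀)) :
    ∀ t ∈ Icc t₀ t₁, ∀ y, w t y ≤ V t y + 2 * δ * Real.exp ((K + 1) * t) := by
  by_contra! hcon
  obtain ⟨t, ht', y, hy⟩ := hcon
  obtain ⟨χ, Bχ, hχ, hχ_supp, hχ_zero, hχ_le⟩ := exists_c2BoundedBy_cutoff E
  obtain ⟨Bw, hBw⟩ := hw.exists_abs_le t₁
  obtain ⟨S, hS, hmajor, hleast⟩ := exists_least_exp_majorant (u := fun t y ↦ w t y - V t y)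
    (t₀ := t₀) (t₁ := t₁) (B := Bw + B) (γ := K + 1) (c := 2 * δ) (by linarith)
    (fun t ht y ↦ (le_abs_self _).trans ((abs_sub _ _).trans
      (add_le_add (hBw t ⟨ht₀.trans ht.1, ht.2⟩ y) ((hVt t ht).abs_le y))))
    ⟨t, ht', y, by linarith⟩
  set Cχ := Bχ * (smallMoment k 1 + 2 * largeMass k 1)
  have hCχ : 0 ≤ Cχ := (abs_nonneg _).trans (abs_levyGenerator_le hk hχ 0)
  obtain ⟨κ, hκ, hκ'⟩ := exists_between
    (lt_min (sub_pos.2 hS) (div_pos hδ (by positivity : 0 < 2 * Cχ + K + 1)))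
  rw [lt_min_iff, lt_div_iff₀ (by positivity)] at hκ'
  have hcont : ContinuousOn (fun q : ℝ × E ↦ w q.1 q.2 - V q.1 q.2 - S * Real.exp ((K + 1) * q.1))
      (Icc t₀ t₁ ×ˢ univ) :=
    ((hw.continuousOn.mono (prod_mono_left fun t ht ↦ ht₀.trans ht.1)).sub
      hV.continuous.continuousOn).sub (Continuous.continuousOn (by fun_prop))
  have hinit' : ∀ y, w t₀ y - V t₀ y - S * Real.exp ((K + 1) * t₀) ≤ -κ := fun y ↦ by
    have : S - 2 * δ ≤ (S - 2 * δ) * Real.exp ((K + 1) * t₀) := le_mul_of_one_le_right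
      (sub_pos.2 hS).le (Real.one_le_exp (mul_nonneg (by linarith) ht₀))
    linarith [hinit y]
  obtain ⟨θ, a, hθ, hθ', t, ht, y, hge, hmax⟩ := exists_penalized_max hκ ht hcont
    (fun t ht y ↦ sub_nonpos.2 (hmajor t ht y)) hinit'
    (by simpa only [neg_lt_sub_iff_lt_add, sub_lt_iff_lt_add'] using hleast (κ / 4) (by positivity))
    hχ.contDiff.continuous hχ_supp hχ_zero hχ_le
  have := hw.le_of_penalized_max hk hQ hK ht₀ ht hV (hVt t (Ioo_subset_Icc_self ht)) hχ hθ
    (hθ' t) (by linarith) hκ.le (by linarith [hmajor t (Ioo_subset_Icc_self ht) y])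
    (by linarith) hmax (hsup t (Ioo_subset_Icc_self ht) y)
  linarith

end Comparison

section PiecewiseAffineComparison

variable {E : Type*} [NormedAddCommGroup E] [InnerProductSpace ℝ E] [FiniteDimensional ℝ E]
  [MeasurableSpace E] [BorelSpace E] {k : E → ℝ} {Q : ℝ → E → ℝ → ℝ} {w : ℝ → E → ℝ}

lemma IsJumpSubsolution.le_add_exp_of_affine (hk : IsLevyDensity k) {K : ℝ} (hK : 0 ≤ K)
    (hQ : ∀ t y v v', |Q t y v - Q t y v'| ≤ K * |v - v'|) (hw : IsJumpSubsolution k Q w)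
    {t₀ t₁ B δ : ℝ} (ht₀ : 0 ≤ t₀) (ht : t₀ < t₁) (hδ : 0 < δ) {V : ℝ → E → ℝ} {D : E → ℝ}
    (hV : ∀ t ∈ Icc t₀ t₁, C2BoundedBy B (V t)) (hD : ContDiff ℝ 2 D)
    (haffine : ∀ t ∈ Icc t₀ t₁, ∀ y, V t y = V t₀ y + (t - t₀) * D y)
    (hsup : ∀ t ∈ Icc t₀ t₁, ∀ y, levyGenerator k (V t) y + Q t y (V t y) ≤ D y + δ)
    (hinit : ∀ y, w t₀ y ≤ V t₀ y + 2 * δ * Real.exp ((K + 1) * t₀)) :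
    ∀ t ∈ Icc t₀ t₁, ∀ y, w t y ≤ V t y + 2 * δ * Real.exp ((K + 1) * t) := by
  set A : ℝ → E → ℝ := fun t y ↦ V t₀ y + (t - t₀) * D y
  have hA : ∀ t ∈ Icc t₀ t₁, V t = A t := fun t ht ↦ funext (haffine t ht)
  have ht₀mem := left_mem_Icc.2 ht.le
  have hderiv (t : ℝ) (y : E) : deriv (fun t ↦ A t y) t = D y := by simp [A]
  have hsmooth : ContDiff ℝ 2 fun q : ℝ × E ↦ A q.1 q.2 :=
    ((hV t₀ ht₀mem).contDiff.comp contDiff_snd).add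
      ((contDiff_fst.sub contDiff_const).mul (hD.comp contDiff_snd))
  intro t ht'
  rw [hA t ht']
  refine hw.le_add_exp hk hK hQ ht₀ ht hδ hsmooth (fun t ht ↦ hA t ht ▸ hV t ht)
    (fun t ht y ↦ ?_) (fun y ↦ hA t₀ ht₀mem ▸ hinit y) t ht'
  rw [hderiv, ← hA t ht]
  exact hsup t ht y

lemma IsJumpSubsolution.le_add_exp_of_piecewise_affine (hk : IsLevyDensity k) {K : ℝ}
    (hK : 0 ≤ K) (hQ : ∀ t y v v', |Q t y v - Q t y v'| ≤ K * |v - v'|)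
    (hw : IsJumpSubsolution k Q w) {n : ℕ} {B δ h : ℝ} (hh : 0 < h) (hδ : 0 < δ)
    {V : ℝ → E → ℝ} {D : ℕ → E → ℝ}
    (hV : ∀ t ∈ Icc 0 (n * h), C2BoundedBy B (V t)) (hD : ∀ j < n, ContDiff ℝ 2 (D j))
    (haffine : ∀ j < n, ∀ t ∈ Icc (j * h) ((j + 1) * h), ∀ y,
      V t y = V (j * h) y + (t - j * h) * D j y)
    (hsup : ∀ j < n, ∀ t ∈ Icc (j * h) ((j + 1) * h), ∀ y,
      levyGenerator k (V t) y + Q t y (V t y) ≤ D j y + δ)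
    (hinit : ∀ y, w 0 y ≤ V 0 y) :
    ∀ t ∈ Icc 0 (n * h), ∀ y, w t y ≤ V t y + 2 * δ * Real.exp ((K + 1) * t) := by
  suffices hgrid : ∀ j ≤ n, ∀ t ∈ Icc 0 (j * h), ∀ y,
      w t y ≤ V t y + 2 * δ * Real.exp ((K + 1) * t) from hgrid n le_rfl
  intro j
  induction j with
  | zero =>
    intro _ t ht y
    obtain rfl : t = 0 := le_antisymm (by simpa using ht.2) ht.1
    exact (hinit y).trans (le_add_of_nonneg_right (by positivity))
  | succ j ih =>
    intro hj t ht y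
    have hj' : j ≤ n := Nat.le_of_succ_le hj
    rcases le_total t (j * h) with htj | htj
    · exact ih hj' t ⟨ht.1, htj⟩ y
    push_cast at ht
    have hjh : 0 ≤ j * h := by positivity
    have hjn : ((j : ℝ) + 1) * h ≤ n * h :=
      mul_le_mul_of_nonneg_right (by exact_mod_cast hj) hh.le
    exact hw.le_add_exp_of_affine hk hK hQ hjh (t₁ := (j + 1) * h) (by linarith) hδ
      (fun t ht ↦ hV t ⟨hjh.trans ht.1, ht.2.trans hjn⟩) (hD j hj) (haffine j hj) (hsup j hj)
      (ih hj' _ ⟨hjh, le_rfl⟩) t ⟨htj, ht.2⟩ y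

/-- Viscosity solutions of `∂_t w = I[w] + Q(t, y, w)`: the supersolution property is the
subsolution property of `-w` for the reflected equation. -/
structure IsJumpSolution (k : E → ℝ) (Q : ℝ → E → ℝ → ℝ) (w : ℝ → E → ℝ) : Prop where
  sub : IsJumpSubsolution k Q w
  super : IsJumpSubsolution k (fun t y v ↦ -Q t y (-v)) fun t y ↦ -w t y

end PiecewiseAffineComparison

section ComparisonWithApproximation

variable {N : ℕ} {k : EN N → ℝ} {f : ℝ → ℝ} {σ : ℝ → EN N → ℝ} {K Kσ M : ℝ} {p : EN N}
  {L T Co δ B h : ℝ} {n : ℕ} {U : ℝ → EN N × ℝ → ℝ} {D : ℕ → EN N × ℝ → ℝ} {w : ℝ → EN N → ℝ}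

lemma reaction_zero_add (f : ℝ → ℝ) (σ : ℝ → EN N → ℝ) (p : EN N) (L t : ℝ) (y : EN N)
    (a v : ℝ) : reaction f σ p L t (y, 0) (v + a) = reaction f σ p L t (y, a) v := by
  simp only [reaction]
  ring_nf

lemma abs_reaction_zero_sub_le (hC : IsCellData k f σ K Kσ M) (p : EN N) (L t : ℝ) (y : EN N)
    (v v' : ℝ) : |reaction f σ p L t (y, 0) v - reaction f σ p L t (y, 0) v'| ≤ K * |v - v'| := by
  simpa only [sub_self, add_zero, abs_sub_comm v'] using
    abs_reaction_sub_reaction_le_of_fst_eq hC p L t y 0 0 v v'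

/- The last variable of the approximation carries the initial value `a` of the solution. -/
lemma IsSmoothApprox.subsolution_le (A : IsSmoothApprox k f σ K M p L T Co δ B n h U D)
    (hC : IsCellData k f σ K Kσ M) (hδ : 0 < δ) {L' : ℝ} (hL : L' ≤ L)
    (hw : IsJumpSubsolution k (fun t y ↦ reaction f σ p L' t (y, 0)) w) {a : ℝ}
    (hinit : ∀ y, w 0 y ≤ a) {t : ℝ} (ht : t ∈ Icc 0 T) (y : EN N) :
    w t y ≤ U t (y, a) + a + 2 * δ * Real.exp ((K + 1) * t) := by
  refine hw.le_add_exp_of_piecewise_affine hC.isLevyDensity hC.K_nonneg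
    (abs_reaction_zero_sub_le hC p L') A.h_pos hδ (V := fun t y ↦ U t (y, a) + a)
    (D := fun j y ↦ D j (y, a))
    (fun t ht ↦ ((A.c2BoundedBy t (A.mul_eq ▸ ht)).slice a).add_const a)
    (fun j hj ↦ (A.contDiff_slope j hj).comp (contDiff_id.prodMk contDiff_const))
    (fun j hj t ht y ↦ ?_) (fun j hj t ht y ↦ ?_) (fun y ↦ ?_) t (A.mul_eq.symm ▸ ht) y
  · rw [A.affine j hj t ht]
    ring
  · have heq := (abs_le.1 (A.equation j hj t ht (y, a))).1
    rw [levyGenerator_add_const, reaction_zero_add]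
    simp only [reaction] at heq ⊢
    linarith
  · rw [A.zero, zero_add]
    exact hinit y

lemma IsSmoothApprox.le_supersolution (A : IsSmoothApprox k f σ K M p L T Co δ B n h U D)
    (hC : IsCellData k f σ K Kσ M) (hδ : 0 < δ)
    (hw : IsJumpSubsolution k (fun t y v ↦ -reaction f σ p L t (y, 0) (-v)) fun t y ↦ -w t y)
    {a : ℝ} (hinit : ∀ y, a ≤ w 0 y) {t : ℝ} (ht : t ∈ Icc 0 T) (y : EN N) :
    U t (y, a) + a - 2 * δ * Real.exp ((K + 1) * t) ≤ w t y := by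
  have hlip (t : ℝ) (y : EN N) (v v' : ℝ) :
      |-reaction f σ p L t (y, 0) (-v) - -reaction f σ p L t (y, 0) (-v')| ≤ K * |v - v'| := by
    simpa only [neg_sub_neg, abs_sub_comm] using abs_reaction_zero_sub_le hC p L t y (-v') (-v)
  have hle := hw.le_add_exp_of_piecewise_affine hC.isLevyDensity hC.K_nonneg hlip
    A.h_pos hδ (V := fun t y ↦ -(U t (y, a) + a)) (D := fun j y ↦ -D j (y, a))
    (fun t ht ↦ (((A.c2BoundedBy t (A.mul_eq ▸ ht)).slice a).add_const a).neg)
    (fun j hj ↦ ((A.contDiff_slope j hj).comp (contDiff_id.prodMk contDiff_const)).neg)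
    (fun j hj t ht y ↦ by rw [A.affine j hj t ht]; ring) (fun j hj t ht y ↦ ?_)
    (fun y ↦ by rw [A.zero, zero_add]; exact neg_le_neg (hinit y)) t (A.mul_eq.symm ▸ ht) y
  · linarith
  · have := (abs_le.1 (A.equation j hj t ht (y, a))).2
    rw [levyGenerator_neg, levyGenerator_add_const, neg_neg, reaction_zero_add]
    linarith

end ComparisonWithApproximation

/-! ### Growth rate of the approximations -/

section SlopeLim

variable {N : ℕ} {w : ℝ → EN N → ℝ} {lam c : ℝ} {T : ℕ}

lemma SlopeLim.neg (h : SlopeLim N w lam) : SlopeLim N (fun t y ↦ -w t y) (-lam) := by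
  intro ε hε R hR
  obtain ⟨T, hT⟩ := h ε hε R hR
  refine ⟨T, fun τ hτ y hy ↦ ?_⟩
  rw [neg_div, neg_sub_neg, abs_sub_comm]
  exact hT τ hτ y hy

lemma SlopeLim.mul_le (h : SlopeLim N w lam) (hT : 0 < T) (hc : ∀ m : ℕ, w (m * T) 0 ≤ m * c) :
    lam * T ≤ c := by
  have hT₁ : (1 : ℝ) ≤ T := by exact_mod_cast hT
  refine le_of_forall_pos_le_add fun ε hε ↦ ?_
  obtain ⟨T₀, hT₀⟩ := h (ε / T) (by positivity) 1 one_pos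
  obtain ⟨m, hm⟩ := exists_nat_ge (max T₀ 1)
  have hm₁ : (1 : ℝ) ≤ m := (le_max_right _ _).trans hm
  have hmT : T₀ ≤ m * T := by nlinarith [(le_max_left T₀ 1).trans hm]
  have hslope := (abs_le.1 (hT₀ _ hmT 0 (by simp))).1
  have hquot : w (m * T) 0 / (m * T) ≤ c / T := by
    rw [← mul_div_mul_left c (T : ℝ) (by positivity : (m : ℝ) ≠ 0)]
    gcongr
    exact hc m
  have hlam : lam ≤ (c + ε) / T := by
    rw [add_div]
    linarith
  rwa [le_div_iff₀ (by positivity)] at hlam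

lemma SlopeLim.le_mul (h : SlopeLim N w lam) (hT : 0 < T) (hc : ∀ m : ℕ, m * c ≤ w (m * T) 0) :
    c ≤ lam * T := by
  have := h.neg.mul_le hT (c := -c) fun m ↦ by linarith [hc m]
  linarith

end SlopeLim

section EffectiveHamiltonian

lemma le_of_forall_mul_natCast_le_add {a b c : ℝ} (h : ∀ T : ℕ, 0 < T → a * T ≤ b * T + c) :
    a ≤ b := by
  by_contra! hab
  obtain ⟨m, hm⟩ := exists_nat_gt (max (c / (a - b)) 0)
  have hm₀ : (0 : ℝ) < m := (le_max_right _ _).trans_lt hm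
  have hmc := (le_max_left (c / (a - b)) 0).trans_lt hm
  rw [div_lt_iff₀ (sub_pos.2 hab)] at hmc
  linarith [h m (by exact_mod_cast hm₀)]

variable {N : ℕ} {k : EN N → ℝ} {f : ℝ → ℝ} {σ : ℝ → EN N → ℝ} {K Kσ M : ℝ}

lemma reaction_add_natCast (hC : IsCellData k f σ K Kσ M) (p : EN N) (L t : ℝ) (m : ℕ)
    (Y : EN N × ℝ) (v : ℝ) : reaction f σ p L (t + m) Y v = reaction f σ p L t Y v := by
  have hσ : Function.Periodic (fun t ↦ σ t Y.1) 1 := fun t ↦ hC.σ_periodic_time t Y.1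
  have hσm := hσ.nat_mul m t
  rw [mul_one] at hσm
  simp only [reaction, hσm]

lemma IsJumpSolution.comp_add_natCast (hC : IsCellData k f σ K Kσ M) {p : EN N} {L : ℝ}
    {w : ℝ → EN N → ℝ} (hw : IsJumpSolution k (fun t y ↦ reaction f σ p L t (y, 0)) w) (m : ℕ) :
    IsJumpSolution k (fun t y ↦ reaction f σ p L t (y, 0)) fun t y ↦ w (t + m) y := by
  have hsub := hw.sub.comp_add_const (Nat.cast_nonneg m)
  have hsuper := hw.super.comp_add_const (Nat.cast_nonneg m)
  simp only [reaction_add_natCast hC] at hsub hsuper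
  exact ⟨hsub, hsuper⟩

/-- Solutions of the cell problem with zero initial datum and asymptotic slope `lam`, which is the
value of the effective Hamiltonian at `(p, L)`. -/
structure IsErgodicSolution (k : EN N → ℝ) (f : ℝ → ℝ) (σ : ℝ → EN N → ℝ) (p : EN N) (L : ℝ)
    (w : ℝ → EN N → ℝ) (lam : ℝ) : Prop where
  isJumpSolution : IsJumpSolution k (fun t y ↦ reaction f σ p L t (y, 0)) w
  zero : ∀ y, w 0 y = 0
  slopeLim : SlopeLim N w lam

lemma HasSmoothApprox.exists_accurate {Co : ℝ} (hS : HasSmoothApprox k f σ K M Co) (p : EN N)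
    (L : ℝ) {T : ℝ} (hT : 0 < T) : ∃ δ > 0, 2 * δ * Real.exp ((K + 1) * T) ≤ 1 ∧
      ∃ B n h U D, IsSmoothApprox k f σ K M p L T Co δ B n h U D := by
  refine ⟨Real.exp (-((K + 1) * T)) / 2, by positivity, ?_, hS p L T hT _ (by positivity)⟩
  rw [mul_div_cancel₀ _ two_ne_zero, ← Real.exp_add, neg_add_cancel, Real.exp_zero]

variable {p : EN N} {L : ℝ} {w : ℝ → EN N → ℝ} {lam T Co δ B : ℝ} {n : ℕ} {h : ℝ}
  {U : ℝ → EN N × ℝ → ℝ} {D : ℕ → EN N × ℝ → ℝ}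

lemma mul_exp_le_one_of_le (hK : 0 ≤ K) (hδ : 0 < δ) (hδT : 2 * δ * Real.exp ((K + 1) * T) ≤ 1)
    {t : ℝ} (ht : t ≤ T) : 2 * δ * Real.exp ((K + 1) * t) ≤ 1 :=
  le_trans (by gcongr) hδT

namespace IsErgodicSolution

lemma abs_sub_approx_le (E : IsErgodicSolution k f σ p L w lam) (hC : IsCellData k f σ K Kσ M)
    (A : IsSmoothApprox k f σ K M p L T Co δ B n h U D) (hδ : 0 < δ)
    (hδT : 2 * δ * Real.exp ((K + 1) * T) ≤ 1) {t : ℝ} (ht : t ∈ Icc 0 T) (y : EN N) :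
    |w t y - U t (y, 0)| ≤ 1 := by
  have hle := A.subsolution_le hC hδ le_rfl E.isJumpSolution.sub (fun y ↦ (E.zero y).le) ht y
  have hge := A.le_supersolution hC hδ E.isJumpSolution.super (fun y ↦ (E.zero y).ge) ht y
  have := mul_exp_le_one_of_le hC.K_nonneg hδ hδT ht.2
  rw [abs_le]
  constructor <;> linarith

lemma apply_natCast_mul_le (E : IsErgodicSolution k f σ p L w lam)
    (hC : IsCellData k f σ K Kσ M) {T : ℕ} (A : IsSmoothApprox k f σ K M p L T Co δ B n h U D)
    (hδ : 0 < δ) (hδT : 2 * δ * Real.exp ((K + 1) * T) ≤ 1) (m : ℕ) (y : EN N) :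
    w (m * T) y ≤ m * (U T 0 + Co + 1) := by
  induction m generalizing y with
  | zero => simp [E.zero]
  | succ m ih =>
    have hT : (0 : ℝ) ≤ T := Nat.cast_nonneg T
    have hshift := E.isJumpSolution.comp_add_natCast hC (m * T)
    push_cast at hshift ⊢
    have hcmp := A.subsolution_le hC hδ le_rfl hshift.sub
      (fun y ↦ (zero_add (m * T : ℝ)).symm ▸ ih y) (right_mem_Icc.2 hT) y
    have hosc := (A.growth T T hT le_rfl le_rfl (y, m * (U T 0 + Co + 1)) 0).1
    rw [sub_self, mul_zero] at hosc
    rw [add_one_mul, add_comm (m * T : ℝ)]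
    linarith

lemma le_apply_natCast_mul (E : IsErgodicSolution k f σ p L w lam)
    (hC : IsCellData k f σ K Kσ M) {T : ℕ} (A : IsSmoothApprox k f σ K M p L T Co δ B n h U D)
    (hδ : 0 < δ) (hδT : 2 * δ * Real.exp ((K + 1) * T) ≤ 1) (m : ℕ) (y : EN N) :
    m * (U T 0 - Co - 1) ≤ w (m * T) y := by
  induction m generalizing y with
  | zero => simp [E.zero]
  | succ m ih =>
    have hT : (0 : ℝ) ≤ T := Nat.cast_nonneg T
    have hshift := E.isJumpSolution.comp_add_natCast hC (m * T)
    push_cast at hshift ⊢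
    have hcmp := A.le_supersolution hC hδ hshift.super
      (fun y ↦ (zero_add (m * T : ℝ)).symm ▸ ih y) (right_mem_Icc.2 hT) y
    have hosc := (A.growth T T hT le_rfl le_rfl (y, m * (U T 0 - Co - 1)) 0).2
    rw [sub_self, mul_zero] at hosc
    rw [add_one_mul, add_one_mul, add_comm (m * T : ℝ)]
    linarith

lemma abs_approx_sub_slope_mul_le (E : IsErgodicSolution k f σ p L w lam)
    (hC : IsCellData k f σ K Kσ M) {T : ℕ} (hT : 0 < T)
    (A : IsSmoothApprox k f σ K M p L T Co δ B n h U D) (hδ : 0 < δ)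
    (hδT : 2 * δ * Real.exp ((K + 1) * T) ≤ 1) : |U T 0 - lam * T| ≤ Co + 1 := by
  have hle := E.slopeLim.mul_le hT fun m ↦ E.apply_natCast_mul_le hC A hδ hδT m 0
  have hge := E.slopeLim.le_mul hT fun m ↦ E.le_apply_natCast_mul hC A hδ hδT m 0
  rw [abs_le]
  constructor <;> linarith

lemma abs_slope_sub_le (E : IsErgodicSolution k f σ p L w lam) (hC : IsCellData k f σ K Kσ M)
    (hS : HasSmoothApprox k f σ K M Co) : |lam - L| ≤ M := by
  have hbound (T : ℕ) (hT : 0 < T) :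
      lam * T ≤ (L + M) * T + (2 * Co + 1) ∧ (L - M) * T ≤ lam * T + (2 * Co + 1) := by
    obtain ⟨δ, hδ, hδT, B, n, h, U, D, A⟩ := hS.exists_accurate p L (Nat.cast_pos.2 hT)
    have hslope := abs_le.1 (E.abs_approx_sub_slope_mul_le hC hT A hδ hδT)
    have hgrowth := A.growth 0 T le_rfl (Nat.cast_nonneg T) le_rfl 0 0
    rw [A.zero, sub_zero] at hgrowth
    constructor <;> linarith [hslope.1, hslope.2, hgrowth.1, hgrowth.2]
  have hle := le_of_forall_mul_natCast_le_add fun T hT ↦ (hbound T hT).1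
  have hge := le_of_forall_mul_natCast_le_add fun T hT ↦ (hbound T hT).2
  rw [abs_le]
  constructor <;> linarith

lemma slope_mono {L' lam' : ℝ} {w' : ℝ → EN N → ℝ} (E : IsErgodicSolution k f σ p L w lam)
    (E' : IsErgodicSolution k f σ p L' w' lam') (hC : IsCellData k f σ K Kσ M)
    (hS : HasSmoothApprox k f σ K M Co) (hL : L ≤ L') : lam ≤ lam' := by
  refine le_of_forall_mul_natCast_le_add (c := 2 * (Co + 1) + 2) fun T hT ↦ ?_
  have hTmem := right_mem_Icc.2 (Nat.cast_nonneg (α := ℝ) T)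
  obtain ⟨δ, hδ, hδT, B, n, h, U, D, A⟩ := hS.exists_accurate p L (Nat.cast_pos.2 hT)
  obtain ⟨δ', hδ', hδT', B', n', h', U', D', A'⟩ := hS.exists_accurate p L' (Nat.cast_pos.2 hT)
  have hslope := (abs_le.1 (E.abs_approx_sub_slope_mul_le hC hT A hδ hδT)).1
  have hslope' := (abs_le.1 (E'.abs_approx_sub_slope_mul_le hC hT A' hδ' hδT')).2
  have hnear := (abs_le.1 (E.abs_sub_approx_le hC A hδ hδT hTmem 0)).1
  have hcmp := A'.subsolution_le hC hδ' hL E.isJumpSolution.sub (fun y ↦ (E.zero y).le) hTmem 0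
  rw [← Prod.zero_eq_mk] at hnear hcmp
  linarith

/- Approximations with different horizons are compared through the solution. -/
lemma abs_approx_natCast_sub_le (E : IsErgodicSolution k f σ p L w lam)
    (hC : IsCellData k f σ K Kσ M) (hS : HasSmoothApprox k f σ K M Co)
    (A : IsSmoothApprox k f σ K M p L T Co δ B n h U D) (hδ : 0 < δ)
    (hδT : 2 * δ * Real.exp ((K + 1) * T) ≤ 1) {m : ℕ} (hm : 0 < m) (hmT : m ≤ T) :
    |U m 0 - lam * m| ≤ Co + 3 := by
  obtain ⟨δ', hδ', hδm, B', n', h', U', D', A'⟩ := hS.exists_accurate p L (Nat.cast_pos.2 hm)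
  have hslope := abs_le.1 (E.abs_approx_sub_slope_mul_le hC hm A' hδ' hδm)
  have hnear' := abs_le.1 (E.abs_sub_approx_le hC A' hδ' hδm ⟨Nat.cast_nonneg m, le_rfl⟩ 0)
  have hnear := abs_le.1 (E.abs_sub_approx_le hC A hδ hδT ⟨Nat.cast_nonneg m, hmT⟩ 0)
  rw [← Prod.zero_eq_mk] at hnear hnear'
  rw [abs_le]
  constructor <;> linarith

theorem abs_approx_sub_le (E : IsErgodicSolution k f σ p L w lam) (hC : IsCellData k f σ K Kσ M)
    (hCo : 0 ≤ Co) (hS : HasSmoothApprox k f σ K M Co)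
    (A : IsSmoothApprox k f σ K M p L T Co δ B n h U D) (hδ : 0 < δ)
    (hδT : 2 * δ * Real.exp ((K + 1) * T) ≤ 1) {t : ℝ} (ht : t ∈ Icc 0 T) (Y : EN N × ℝ) :
    |U t Y - lam * t| ≤ 2 * Co + 3 + 2 * M := by
  have hfloor := Nat.floor_le ht.1
  have hfloor' := (Nat.lt_floor_add_one t).le
  have hgrid : |U ⌊t⌋₊ 0 - lam * ⌊t⌋₊| ≤ Co + 3 := by
    rcases Nat.eq_zero_or_pos ⌊t⌋₊ with hm | hm
    · rw [hm, Nat.cast_zero, A.zero, mul_zero, sub_zero, abs_zero]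
      linarith
    · exact E.abs_approx_natCast_sub_le hC hS A hδ hδT hm (hfloor.trans ht.2)
  have hgrowth := A.growth ⌊t⌋₊ t (Nat.cast_nonneg _) hfloor ht.2 Y 0
  have hslope := abs_le.1 (E.abs_slope_sub_le hC hS)
  have hM := hC.M_nonneg
  have hle : (lam - L + M) * (t - ⌊t⌋₊) ≤ 2 * M := by nlinarith
  have hge : (L - lam + M) * (t - ⌊t⌋₊) ≤ 2 * M := by nlinarith
  rw [abs_le] at hgrid ⊢
  constructor <;> linarith

end IsErgodicSolution

end EffectiveHamiltonian

/-! ### The data of the theorem -/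

section Hypotheses

lemma abs_sub_le_iSup_abs_deriv_mul {f : ℝ → ℝ} {K : NNReal} (hf : LipschitzWith K f) (a b : ℝ) :
    |f a - f b| ≤ (⨆ v, |deriv f v|) * |a - b| := by
  have hbdd : BddAbove (range fun v ↦ |deriv f v|) :=
    ⟨K, by rintro _ ⟨v, rfl⟩; exact norm_deriv_le_of_lipschitz hf⟩
  rw [← (hf.lipschitzOnWith (s := uIcc b a)).absolutelyContinuousOnInterval.integral_deriv_eq_sub]
  exact intervalIntegral.norm_integral_le_of_norm_le_const (f := deriv f)
    fun v _ ↦ le_ciSup hbdd v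

lemma periodic_deriv {f : ℝ → ℝ} {c : ℝ} (hf : Function.Periodic f c) :
    Function.Periodic (deriv f) c := fun x ↦ by
  rw [← deriv_comp_add_const, hf.funext]

variable {N : ℕ} {s : ℝ} {g : EN N → ℝ} {W : ℝ → ℝ} {σ : ℝ → EN N → ℝ}

lemma levyI1_eq_smallJumps (φ : EN N → ℝ) (r : ℝ) (x : EN N) :
    levyI1 N s g φ r x = smallJumps (levyKernel N s g) φ r x := rfl

lemma levyI2_eq_largeJumps (u : EN N → ℝ) (r : ℝ) (x : EN N) :
    levyI2 N s g u r x = largeJumps (levyKernel N s g) u r x := rfl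

lemma H3.exists_lipschitz (hσ : H3 N σ) :
    ∃ Kσ ≥ 0, ∀ t t' y y', |σ t y - σ t' y'| ≤ Kσ * (|t - t'| + ‖y - y'‖) := by
  obtain ⟨⟨Kσ, hKσ⟩, -⟩ := hσ
  refine ⟨Kσ, Kσ.2, fun t t' y y' ↦ ?_⟩
  have hdist := hKσ.dist_le_mul (t, y) (t', y')
  rw [Prod.dist_eq, Real.dist_eq, Real.dist_eq, dist_eq_norm] at hdist
  exact hdist.trans (mul_le_mul_of_nonneg_left
    (max_le_add_of_nonneg (abs_nonneg _) (norm_nonneg _)) Kσ.2)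

lemma H3.exists_abs_le (hσ : H3 N σ) : ∃ B, ∀ t y, |σ t y| ≤ B := by
  obtain ⟨Kσ, hKσ, hlip⟩ := hσ.exists_lipschitz
  obtain ⟨-, htime, hspace⟩ := hσ
  refine ⟨|σ 0 0| + Kσ * (1 + √N), fun t y ↦ ?_⟩
  have hper : Function.Periodic (fun t ↦ σ t y) 1 := fun t ↦ htime t y
  have hfract : σ (Int.fract t) y = σ t y := by simpa using hper.sub_int_mul_eq (x := t) ⌊t⌋
  obtain ⟨m, hm⟩ := exists_norm_sub_add_latticeVec_le y 0
  have hdist := hlip (Int.fract t) 0 y (0 + latticeVec m)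
  rw [hfract, show σ 0 (0 + latticeVec m) = σ 0 0 from hspace m 0 0, sub_zero,
    abs_of_nonneg (Int.fract_nonneg t)] at hdist
  calc |σ t y| ≤ |σ 0 0| + |σ t y - σ 0 0| := by
        linarith [abs_sub_abs_le_abs_sub (σ t y) (σ 0 0)]
    _ ≤ |σ 0 0| + Kσ * (1 + √N) := by
        gcongr
        exact hdist.trans (by gcongr; exact (Int.fract_lt_one t).le)

lemma H2.exists_abs_deriv_le (hW : H2 W) : ∃ B, ∀ v, |deriv W v| ≤ B := by
  obtain ⟨-, ⟨K, hK⟩, hper⟩ := hW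
  obtain ⟨B, hB⟩ := (Function.Periodic.isBounded_of_continuous (periodic_deriv hper) one_ne_zero
    hK.continuous).exists_norm_le
  exact ⟨B, fun v ↦ hB _ (mem_range_self v)⟩

theorem exists_isCellData (hN : 1 ≤ N) (hs : s ∈ Ioo 0 1) (hg : H1 N g) (hW : H2 W)
    (hσ : H3 N σ) : ∃ Kσ M, IsCellData (levyKernel N s g) (deriv W) σ (supW'' W) Kσ M := by
  obtain ⟨Kσ, hKσ, hlip⟩ := hσ.exists_lipschitz
  obtain ⟨Bσ, hBσ⟩ := hσ.exists_abs_le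
  obtain ⟨BW, hBW⟩ := hW.exists_abs_deriv_le
  obtain ⟨-, ⟨K, hK⟩, hper⟩ := hW
  exact ⟨Kσ, Bσ + BW,
    { dim_pos := hN
      isLevyDensity := isLevyDensity_levyKernel hN hs hg
      exists_pos_le := exists_forall_le_levyKernel hs.1 hg
      K_nonneg := Real.iSup_nonneg fun _ ↦ abs_nonneg _
      Kσ_nonneg := hKσ
      f_lipschitz := abs_sub_le_iSup_abs_deriv_mul hK
      f_periodic := periodic_deriv hper
      σ_lipschitz := hlip
      σ_periodic_time := hσ.2.1
      σ_periodic_space := hσ.2.2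
      abs_sub_le := fun v t y ↦ (abs_sub _ _).trans (add_le_add (hBσ t y) (hBW v)) }⟩

variable {F : ℝ → EN N → ℝ → (EN N →L[ℝ] ℝ) → ℝ → ℝ} {p : EN N} {L lam : ℝ} {w : ℝ → EN N → ℝ}

lemma IsSol.apply_zero {u₀ : EN N → ℝ} (hw : IsSol N s g F u₀ w) (y : EN N) : w 0 y = u₀ y :=
  le_antisymm (hw.2.1.2.2.1 y) (hw.2.2.2.2.1 y)

lemma IsSol.exists_abs_le (hw : IsSol N s g F (fun _ ↦ 0) w) (T : ℝ) :
    ∃ B, ∀ t ∈ Icc 0 T, ∀ y, |w t y| ≤ B := by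
  obtain ⟨B, hB⟩ := hw.2.1.2.1 (max T 1) (by positivity)
  refine ⟨max B 0, fun t ht y ↦ ?_⟩
  rcases ht.1.eq_or_lt with rfl | ht₀
  · rw [hw.apply_zero, abs_zero]
    exact le_max_right _ _
  · exact (hB t ⟨ht₀, ht.2.trans (le_max_left _ _)⟩ y).trans (le_max_left _ _)

lemma IsSol.isJumpSolution (hw : IsSol N s g (cellF N W σ p L) (fun _ ↦ 0) w) :
    IsJumpSolution (levyKernel N s g) (fun t y ↦ reaction (deriv W) σ p L t (y, 0)) w := by
  have hbdd := hw.exists_abs_le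
  obtain ⟨hcont, ⟨-, -, -, hsub⟩, ⟨-, -, -, hsuper⟩⟩ := hw
  refine ⟨⟨hcont, hbdd, fun t₀ x₀ ht φ hφ τ r hτ hτt hr hmax ↦ ?_⟩, hcont.neg,
    by simpa only [abs_neg] using hbdd, fun t₀ x₀ ht φ hφ τ r hτ hτt hr hmax ↦ ?_⟩
  · have htest := hsub t₀ x₀ ht φ hφ τ r hτ hτt hr hmax
    rw [cellF, levyI1_eq_smallJumps, levyI2_eq_largeJumps] at htest
    rw [reaction, add_zero]
    linarith
  · have htest := hsuper t₀ x₀ ht (fun t x ↦ -φ t x) hφ.neg τ r hτ hτt hr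
      fun t x ht hx ↦ by linarith [hmax t x ht hx]
    rw [cellF, levyI1_eq_smallJumps, levyI2_eq_largeJumps, smallJumps_neg, deriv.fun_neg] at htest
    rw [reaction, largeJumps_neg, neg_neg, add_zero]
    linarith

lemma IsSol.isErgodicSolution (hw : IsSol N s g (cellF N W σ p L) (fun _ ↦ 0) w)
    (hlam : SlopeLim N w lam) :
    IsErgodicSolution (levyKernel N s g) (deriv W) σ p L w lam :=
  ⟨hw.isJumpSolution, hw.apply_zero, hlam⟩

end Hypotheses

/-! ### Gluing of time windows -/

section Windows

variable {T τ : ℝ} {m : ℕ}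

/-- The index `m` of the time window `(m T, (m + 1) T]` that contains `τ > 0`; it is `0` for
`τ ≤ 0`. -/
noncomputable def windowIndex (T τ : ℝ) : ℕ := ⌈τ / T⌉₊ - 1

/-- The time elapsed at time `τ` since the beginning of its window; it is `0` for `τ ≤ 0`. -/
noncomputable def windowTime (T τ : ℝ) : ℝ := max τ 0 - windowIndex T τ * T

lemma windowIndex_of_mem (hT : 0 < T) (hτ : τ ∈ Ioc (m * T) ((m + 1) * T)) :
    windowIndex T τ = m := by
  have hceil : ⌈τ / T⌉₊ = m + 1 := by
    rw [Nat.ceil_eq_iff (Nat.succ_ne_zero m), lt_div_iff₀ hT, div_le_iff₀ hT]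
    simpa using hτ
  rw [windowIndex, hceil, Nat.add_sub_cancel]

lemma windowIndex_of_le (hT : 0 < T) (hτ : τ ≤ T) : windowIndex T τ = 0 := by
  have hceil : ⌈τ / T⌉₊ ≤ 1 := by
    rw [Nat.ceil_le, div_le_iff₀ hT]
    simpa using hτ
  exact Nat.sub_eq_zero_of_le hceil

lemma exists_mem_Ioc_mul (hT : 0 < T) (hτ : 0 < τ) :
    ∃ m : ℕ, τ ∈ Ioc (m * T) ((m + 1) * T) := by
  obtain ⟨m, hm⟩ := Nat.exists_eq_succ_of_ne_zero (Nat.ceil_pos.2 (div_pos hτ hT)).ne'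
  rw [Nat.ceil_eq_iff (Nat.succ_ne_zero m), lt_div_iff₀ hT, div_le_iff₀ hT] at hm
  exact ⟨m, by simpa using hm⟩

lemma windowTime_of_mem (hT : 0 < T) (hτ : τ ∈ Ioc (m * T) ((m + 1) * T)) :
    windowTime T τ = τ - m * T := by
  have hτ₀ : 0 ≤ τ := le_trans (by positivity) hτ.1.le
  rw [windowTime, windowIndex_of_mem hT hτ, max_eq_left hτ₀]

lemma windowTime_of_le (hT : 0 < T) (hτ : τ ≤ T) : windowTime T τ = max τ 0 := by
  rw [windowTime, windowIndex_of_le hT hτ, Nat.cast_zero, zero_mul, sub_zero]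

lemma windowTime_mem (hT : 0 < T) (τ : ℝ) : windowTime T τ ∈ Icc 0 T := by
  rcases le_total τ T with hτ | hτ
  · rw [windowTime_of_le hT hτ]
    exact ⟨le_max_right _ _, max_le hτ hT.le⟩
  · obtain ⟨m, hm⟩ := exists_mem_Ioc_mul hT (hT.trans_le hτ)
    rw [windowTime_of_mem hT hm]
    exact ⟨by linarith [hm.1], by linarith [hm.2]⟩

end Windows

section Glue

variable {X : Type*} {U : ℝ → X × ℝ → ℝ} {T lam c τ : ℝ}

/-- Concatenation of copies of `U - lam t` on the time windows `(m T, (m + 1) T]`, the `m`-th copy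
being shifted by `m c` in the last variable; it is extended by its value at time zero to negative
times. -/
noncomputable def glue (U : ℝ → X × ℝ → ℝ) (T lam c τ : ℝ) (y : X) (b : ℝ) : ℝ :=
  U (windowTime T τ) (y, b + windowIndex T τ * c) - lam * windowTime T τ

lemma glue_of_mem (hT : 0 < T) {m : ℕ} (hτ : τ ∈ Ioc (m * T) ((m + 1) * T)) (y : X) (b : ℝ) :
    glue U T lam c τ y b = U (τ - m * T) (y, b + m * c) - lam * (τ - m * T) := by
  rw [glue, windowTime_of_mem hT hτ, windowIndex_of_mem hT hτ]

lemma glue_of_le (hT : 0 < T) (hτ : τ ≤ T) (y : X) (b : ℝ) :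
    glue U T lam c τ y b = U (max τ 0) (y, b) - lam * max τ 0 := by
  rw [glue, windowTime_of_le hT hτ, windowIndex_of_le hT hτ, Nat.cast_zero, zero_mul, add_zero]

lemma glue_zero (hT : 0 < T) (hU : ∀ Y, U 0 Y = 0) (y : X) (b : ℝ) :
    glue U T lam c 0 y b = 0 := by
  rw [glue_of_le hT hT.le, max_self, hU, mul_zero, sub_zero]

lemma neg_glue (U : ℝ → X × ℝ → ℝ) (T lam c τ : ℝ) (y : X) (b : ℝ) :
    -glue U T lam c τ y b = glue (fun t Y ↦ -U t Y) T (-lam) c τ y b := by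
  rw [glue, glue]
  ring

variable [TopologicalSpace X]

lemma continuousAt_glue_of_lt (hT : 0 < T) (hU : Continuous fun q : ℝ × (X × ℝ) ↦ U q.1 q.2)
    (hτ : τ < T) (y : X) (b : ℝ) :
    ContinuousAt (fun q : ℝ × X × ℝ ↦ glue U T lam c q.1 q.2.1 q.2.2) (τ, y, b) := by
  have hcont : Continuous fun q : ℝ × X × ℝ ↦ U (max q.1 0) q.2 - lam * max q.1 0 :=
    (hU.comp (f := fun q : ℝ × X × ℝ ↦ (max q.1 0, q.2)) (by fun_prop)).sub (by fun_prop)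
  refine hcont.continuousAt.congr ?_
  filter_upwards [continuous_fst.continuousAt.eventually_lt_const hτ] with q hq
  exact (glue_of_le hT (le_of_lt hq) _ _).symm

lemma lowerSemicontinuous_glue (hT : 0 < T) (hU : Continuous fun q : ℝ × (X × ℝ) ↦ U q.1 q.2)
    (hjump : ∀ Y Y', U T Y - lam * T ≤ U 0 Y') :
    LowerSemicontinuous fun q : ℝ × X × ℝ ↦ glue U T lam c q.1 q.2.1 q.2.2 := by
  rintro ⟨τ, y, b⟩
  rcases lt_or_ge τ T with hτ | hτ
  · exact (continuousAt_glue_of_lt hT hU hτ y b).lowerSemicontinuousAt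
  obtain ⟨m, hm⟩ := exists_mem_Ioc_mul hT (hT.trans_le hτ)
  set F : ℕ → ℝ × X × ℝ → ℝ := fun m q ↦
    U (q.1 - m * T) (q.2.1, q.2.2 + m * c) - lam * (q.1 - m * T)
  have hF (m : ℕ) : Continuous (F m) :=
    (hU.comp (f := fun q : ℝ × X × ℝ ↦ (q.1 - m * T, (q.2.1, q.2.2 + m * c)))
      (by fun_prop)).sub (by fun_prop)
  have hfst : ContinuousAt (Prod.fst : ℝ × X × ℝ → ℝ) (τ, y, b) := continuous_fst.continuousAt
  intro a ha
  simp only [glue_of_mem hT hm] at ha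
  have hnext : ∀ᶠ q in nhds (τ, y, b), q.1 ≤ (m + 1) * T ∨ a < F (m + 1) q := by
    rcases hm.2.lt_or_eq with hlt | heq
    · exact (hfst.eventually_lt_const hlt).mono fun q hq ↦ Or.inl hq.le
    · refine ((hF (m + 1)).continuousAt.eventually_const_lt (ha.trans_le ?_)).mono
        fun q hq ↦ Or.inr hq
      simpa [F, heq, add_one_mul] using hjump (y, b + m * c) (y, b + (m * c + c))
  filter_upwards [(hF m).continuousAt.eventually_const_lt ha, hfst.eventually_const_lt hm.1,
    hfst.eventually_lt_const (show τ < (↑(m + 1) + 1) * T by push_cast; linarith [hm.2]), hnext]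
    with q hq hmq hqm hqnext
  rcases le_or_gt q.1 ((m + 1) * T) with hle | hgt
  · rwa [glue_of_mem hT ⟨hmq, hle⟩]
  · rw [glue_of_mem hT (m := m + 1) ⟨by exact_mod_cast hgt, hqm.le⟩]
    exact hqnext.resolve_left hgt.not_ge

lemma upperSemicontinuous_glue (hT : 0 < T) (hU : Continuous fun q : ℝ × (X × ℝ) ↦ U q.1 q.2)
    (hjump : ∀ Y Y', U 0 Y' ≤ U T Y - lam * T) :
    UpperSemicontinuous fun q : ℝ × X × ℝ ↦ glue U T lam c q.1 q.2.1 q.2.2 := by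
  have hneg := lowerSemicontinuous_glue (U := fun t Y ↦ -U t Y) (lam := -lam) (c := c) hT hU.neg
    fun Y Y' ↦ by linarith [hjump Y Y']
  simp only [← neg_glue] at hneg
  intro q a ha
  exact (hneg q (-a) (neg_lt_neg ha)).mono fun q hq ↦ neg_lt_neg_iff.1 hq

end Glue

section TestFunctions

lemma le_deriv_of_touches_below {φ V : ℝ → ℝ} {t₀ ε d : ℝ} (hε : 0 < ε)
    (hφ : DifferentiableAt ℝ φ t₀) (hV : ∀ t ∈ Ioc (t₀ - ε) t₀, V t = V t₀ + (t - t₀) * d)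
    (hmin : ∀ t ∈ Ioc (t₀ - ε) t₀, V t₀ - φ t₀ ≤ V t - φ t) : d ≤ deriv φ t₀ := by
  refine ge_of_tendsto ((hasDerivWithinAt_iff_tendsto_slope' self_notMem_Iio).1
    (hφ.hasDerivAt.hasDerivWithinAt (s := Iio t₀))) ?_
  filter_upwards [Ioo_mem_nhdsLT (sub_lt_self t₀ hε)] with t ht
  have ht' := Ioo_subset_Ioc_self ht
  rw [slope_def_field, le_div_iff_of_neg (sub_neg.2 ht.2)]
  linarith [hV t ht', hmin t ht']

/- Only times before the touching time matter, which is why the jumps of a glued function at the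
ends of the windows are harmless. -/
lemma add_jumps_le_deriv_of_touches_below {E : Type*} [NormedAddCommGroup E]
    [InnerProductSpace ℝ E] [FiniteDimensional ℝ E] [MeasurableSpace E] [BorelSpace E] {k : E → ℝ}
    (hk : IsLevyDensity k) {φ V : ℝ → E → ℝ} {t₀ τ r ε d B : ℝ} {x₀ : E} (hτ : 0 < τ) (hr : 0 < r)
    (hε : 0 < ε) (hφ : ContDiff ℝ 2 fun q : ℝ × E ↦ φ q.1 q.2) (hV : C2BoundedBy B (V t₀))
    (haffine : ∀ t ∈ Ioc (t₀ - ε) t₀, V t x₀ = V t₀ x₀ + (t - t₀) * d)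
    (hmin : ∀ t x, t ∈ Ioo (t₀ - τ) (t₀ + τ) → ‖x - x₀‖ < r →
      V t₀ x₀ - φ t₀ x₀ ≤ V t x - φ t x) :
    d + (smallJumps k (φ t₀) r x₀ + largeJumps k (V t₀) r x₀) ≤
      deriv (fun t ↦ φ t x₀) t₀ + levyGenerator k (V t₀) x₀ := by
  have hslice (t : ℝ) : ContDiff ℝ 2 (φ t) := hφ.comp (contDiff_const.prodMk contDiff_id)
  have htime : ContDiff ℝ 2 fun t ↦ φ t x₀ := hφ.comp (contDiff_id.prodMk contDiff_const)
  have hd : d ≤ deriv (fun t ↦ φ t x₀) t₀ :=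
    le_deriv_of_touches_below (V := fun t ↦ V t x₀) (lt_min hε hτ)
      (htime.differentiable two_ne_zero t₀)
      (fun t ht ↦ haffine t ⟨by linarith [ht.1, min_le_left ε τ], ht.2⟩)
      (fun t ht ↦ hmin t x₀ ⟨by linarith [ht.1, min_le_right ε τ], by linarith [ht.2]⟩
        (by simpa using hr))
  rw [← smallJumps_add_largeJumps hk hV x₀ hr]
  have hjumps := smallJumps_le_of_touches_below hk hr (hslice t₀) hV.contDiff fun x hx ↦
    hmin t₀ x ⟨by linarith, by linarith⟩ (mem_ball_iff_norm.1 hx)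
  linarith

end TestFunctions

section GluedCorrectors

variable {N : ℕ} {k : EN N → ℝ} {f : ℝ → ℝ} {σ : ℝ → EN N → ℝ} {K Kσ M : ℝ} {p : EN N}
  {L lam T Co δ B h : ℝ} {n : ℕ} {U : ℝ → EN N × ℝ → ℝ} {D : ℕ → EN N × ℝ → ℝ}

lemma IsSmoothApprox.exists_c2BoundedBy_glue (A : IsSmoothApprox k f σ K M p L T Co δ B n h U D)
    (hT : 0 < T) (c τ b : ℝ) : ∃ B, C2BoundedBy B fun y ↦ glue U T lam c τ y b :=
  ⟨_, by simpa only [glue, sub_eq_add_neg] using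
    ((A.c2BoundedBy _ (windowTime_mem hT τ)).slice _).add_const (-(lam * windowTime T τ))⟩

lemma reaction_glue (hC : IsCellData k f σ K Kσ M) (hT : 0 < T) {T' : ℕ} (hT' : T' = T)
    (U : ℝ → EN N × ℝ → ℝ) {m : ℕ} {τ : ℝ} (hτ : τ ∈ Ioc (m * T) ((m + 1) * T)) (y : EN N)
    (b : ℝ) :
    reaction f σ p L τ (y, b) (glue U T lam (lam * T) τ y b + lam * τ) =
      reaction f σ p L (τ - m * T) (y, b + m * (lam * T))
        (U (τ - m * T) (y, b + m * (lam * T))) := by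
  rw [← reaction_add_natCast hC p L (τ - m * T) (m * T'), glue_of_mem hT hτ, Nat.cast_mul, hT',
    sub_add_cancel, reaction, reaction]
  ring_nf

lemma reaction_add_right (f : ℝ → ℝ) (σ : ℝ → EN N → ℝ) (p : EN N) (L t : ℝ) (y : EN N)
    (b v c : ℝ) :
    reaction f σ p L t (y, b) (v + c) = L - f (v + ⟪p, y⟫ + b + c) + σ t y := by
  rw [reaction]
  ring_nf

lemma levyGenerator_glue (k : EN N → ℝ) (hT : 0 < T) {m : ℕ} {c τ : ℝ}
    (hτ : τ ∈ Ioc (m * T) ((m + 1) * T)) (y : EN N) (b : ℝ) :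
    levyGenerator k (fun y ↦ glue U T lam c τ y b) y =
      levyGenerator k (fun y ↦ U (τ - m * T) (y, b + m * c)) y := by
  simp only [glue_of_mem hT hτ, sub_eq_add_neg _ (lam * _), levyGenerator_add_const]

/- The `m`-th window sees the last variable shifted by `m lam T`, which is what the linear growth
`lam τ` has added by then; the time dependence of `σ` is not affected since `T` is an integer. -/
lemma IsSmoothApprox.exists_left_affine_glue {T : ℕ} (hC : IsCellData k f σ K Kσ M) (hT : 0 < T)
    (A : IsSmoothApprox k f σ K M p L T Co δ B n h U D) {t₀ : ℝ} (ht : 0 < t₀) (y₀ : EN N)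
    (b₀ : ℝ) : ∃ d, ∃ ε > 0,
      (∀ t ∈ Ioc (t₀ - ε) t₀, glue U T lam (lam * T) t y₀ b₀ =
        glue U T lam (lam * T) t₀ y₀ b₀ + (t - t₀) * d) ∧
      |d + lam - (levyGenerator k (fun y ↦ glue U T lam (lam * T) t₀ y b₀) y₀ +
        reaction f σ p L t₀ (y₀, b₀) (glue U T lam (lam * T) t₀ y₀ b₀ + lam * t₀))| ≤ δ := by
  have hT' : (0 : ℝ) < T := Nat.cast_pos.2 hT
  obtain ⟨m, hm⟩ := exists_mem_Ioc_mul hT' ht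
  obtain ⟨j, hj⟩ := exists_mem_Ioc_mul A.h_pos (sub_pos.2 hm.1)
  have hjn : j < n := by
    have hlt : j * h < n * h := by linarith [hj.1, hm.2, A.mul_eq]
    exact_mod_cast lt_of_mul_lt_mul_right hlt A.h_pos.le
  have hjh : 0 ≤ j * h := mul_nonneg (Nat.cast_nonneg _) A.h_pos.le
  refine ⟨D j (y₀, b₀ + m * (lam * T)) - lam, t₀ - m * T - j * h, sub_pos.2 hj.1,
    fun t ht ↦ ?_, ?_⟩
  · rw [glue_of_mem hT' hm, glue_of_mem hT' (m := m) ⟨by linarith [ht.1], ht.2.trans hm.2⟩,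
      A.affine j hjn (t - m * T) ⟨by linarith [ht.1], by linarith [ht.2, hj.2]⟩,
      A.affine j hjn (t₀ - m * T) ⟨hj.1.le, hj.2⟩]
    ring
  · rw [reaction_glue hC hT' rfl U hm, levyGenerator_glue k hT' hm, sub_add_cancel]
    exact A.equation j hjn (t₀ - m * T) ⟨hj.1.le, hj.2⟩ (y₀, b₀ + m * (lam * T))

end GluedCorrectors

section GluedViscosity

variable {N : ℕ} {s : ℝ} {g : EN N → ℝ} {f : ℝ → ℝ} {σ : ℝ → EN N → ℝ} {K Kσ M : ℝ} {p : EN N}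
  {L lam Co δ B h B' : ℝ} {T n : ℕ} {U : ℝ → EN N × ℝ → ℝ} {D : ℕ → EN N × ℝ → ℝ}

lemma IsSmoothApprox.isSupersolNp1_glue (hC : IsCellData (levyKernel N s g) f σ K Kσ M)
    (hT : 0 < T) (A : IsSmoothApprox (levyKernel N s g) f σ K M p L T Co δ B n h U D)
    (hjump : ∀ Y, U T Y ≤ lam * T) (hB : ∀ t y b, |glue U T lam (lam * T) t y b| ≤ B') :
    IsSupersolNp1 N s g
      (fun τ y yn v _ _ I _ ↦ L + I - f (v + ⟪p, y⟫ + yn + lam * τ) + σ τ y - δ - lam)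
      (fun _ _ ↦ 0) (glue U T lam (lam * T)) := by
  have hT' : (0 : ℝ) < T := Nat.cast_pos.2 hT
  refine ⟨(lowerSemicontinuous_glue hT' A.continuous fun Y Y' ↦ ?_).lowerSemicontinuousOn _,
    fun _ _ ↦ ⟨B', fun t _ y b ↦ hB t y b⟩, fun y b ↦ (glue_zero hT' A.zero y b).ge,
    fun t₀ y₀ b₀ ht φ hφ τ r hτ _ hr hmin ↦ ?_⟩
  · rw [A.zero]
    exact sub_nonpos.2 (hjump Y)
  obtain ⟨d, ε, hε, haffine, heq⟩ := A.exists_left_affine_glue (lam := lam) hC hT ht y₀ b₀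
  obtain ⟨B, hB⟩ := A.exists_c2BoundedBy_glue (lam := lam) hT' (lam * T) t₀ b₀
  have htest := add_jumps_le_deriv_of_touches_below hC.isLevyDensity
    (φ := fun t y ↦ φ t y b₀) (V := fun t y ↦ glue U T lam (lam * T) t y b₀) hτ hr hε
    (hφ.comp (f := fun q : ℝ × EN N ↦ (q.1, q.2, b₀)) (by fun_prop)) hB haffine
    fun t y ht hy ↦ hmin t y b₀ ht hy (by simpa using hr)
  have hres := (abs_le.1 heq).1
  rw [reaction_add_right] at hres
  rw [levyI1_eq_smallJumps, levyI2_eq_largeJumps]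
  linarith

lemma IsSmoothApprox.isSubsolNp1_glue (hC : IsCellData (levyKernel N s g) f σ K Kσ M)
    (hT : 0 < T) (A : IsSmoothApprox (levyKernel N s g) f σ K M p L T Co δ B n h U D)
    (hjump : ∀ Y, lam * T ≤ U T Y) (hB : ∀ t y b, |glue U T lam (lam * T) t y b| ≤ B') :
    IsSubsolNp1 N s g
      (fun τ y yn v _ _ I _ ↦ L + I - f (v + ⟪p, y⟫ + yn + lam * τ) + σ τ y + δ - lam)
      (fun _ _ ↦ 0) (glue U T lam (lam * T)) := by
  have hT' : (0 : ℝ) < T := Nat.cast_pos.2 hT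
  refine ⟨(upperSemicontinuous_glue hT' A.continuous fun Y Y' ↦ ?_).upperSemicontinuousOn _,
    fun _ _ ↦ ⟨B', fun t _ y b ↦ hB t y b⟩, fun y b ↦ (glue_zero hT' A.zero y b).le,
    fun t₀ y₀ b₀ ht φ hφ τ r hτ _ hr hmax ↦ ?_⟩
  · rw [A.zero]
    exact sub_nonneg.2 (hjump Y)
  obtain ⟨d, ε, hε, haffine, heq⟩ := A.exists_left_affine_glue (lam := lam) hC hT ht y₀ b₀
  obtain ⟨B, hB⟩ := A.exists_c2BoundedBy_glue (lam := lam) hT' (lam * T) t₀ b₀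
  have htest := add_jumps_le_deriv_of_touches_below hC.isLevyDensity (d := -d)
    (φ := fun t y ↦ -φ t y b₀) (V := fun t y ↦ -glue U T lam (lam * T) t y b₀) hτ hr hε
    (hφ.comp (f := fun q : ℝ × EN N ↦ (q.1, q.2, b₀)) (by fun_prop)).neg hB.neg
    (fun t ht ↦ by linarith [haffine t ht])
    fun t y ht hy ↦ by linarith [hmax t y b₀ ht hy (by simpa using hr)]
  have hres := (abs_le.1 heq).2
  rw [reaction_add_right] at hres
  rw [smallJumps_neg, largeJumps_neg, levyGenerator_neg, deriv.fun_neg] at htest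
  rw [levyI1_eq_smallJumps, levyI2_eq_largeJumps]
  linarith

end GluedViscosity

/-! ### Regularity in the last variable -/

section LastVariable

lemma le_deriv_of_forall_mul_sub_le {f : ℝ → ℝ} {a x : ℝ} (hf : DifferentiableAt ℝ f x)
    (h : ∀ b b', b ≤ b' → a * (b' - b) ≤ f b' - f b) : a ≤ deriv f x := by
  have hmono : Monotone fun b ↦ f b - a * b := fun b b' hb ↦ by linarith [h b b' hb]
  have hderiv := hmono.deriv_nonneg (x := x)
  rw [deriv_fun_sub hf (by fun_prop), deriv_const_mul_id'] at hderiv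
  linarith

lemma deriv_le_of_forall_sub_le_mul {f : ℝ → ℝ} {a x : ℝ} (hf : DifferentiableAt ℝ f x)
    (h : ∀ b b', b ≤ b' → f b' - f b ≤ a * (b' - b)) : deriv f x ≤ a := by
  have hneg := le_deriv_of_forall_mul_sub_le (f := fun b ↦ -f b) (a := -a) hf.neg
    fun b b' hb ↦ by linarith [h b b' hb]
  rw [deriv.fun_neg] at hneg
  exact neg_le_neg_iff.1 hneg

lemma le_two_mul_mul_rpow {a B r α : ℝ} (hr : 0 ≤ r) (hα : α ∈ Ioo 0 1) (hB : 0 ≤ B)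
    (hlip : a ≤ B * r) (hbdd : a ≤ 2 * B) : a ≤ 2 * B * r ^ α := by
  rcases le_total r 1 with h | h
  · have hpow : r ≤ r ^ α := by
      simpa using Real.rpow_le_rpow_of_exponent_ge' hr h hα.1.le hα.2.le
    calc a ≤ B * r := hlip
      _ ≤ 2 * B * r ^ α := by gcongr; linarith
  · exact hbdd.trans (le_mul_of_one_le_right (by linarith) (Real.one_le_rpow h hα.1.le))

variable {X : Type*} [NormedAddCommGroup X] [NormedSpace ℝ X] {B : ℝ} {G : X × ℝ → ℝ}

/-- The regularity in the last variable asked of smooth approximate correctors: `C²`, with slope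
between `-1` and `κ`, and with constants computed from `B` for the second derivative and for the
Hölder continuity of the slope in the other variables. -/
structure HasRegularSlope (κ B : ℝ) (V : ℝ → X → ℝ → ℝ) : Prop where
  contDiff : ∀ τ y, ContDiff ℝ 2 (V τ y)
  neg_one_le_deriv : ∀ τ y b, -1 ≤ deriv (V τ y) b
  deriv_le : ∀ τ y b, deriv (V τ y) b ≤ κ
  abs_deriv_deriv_le : ∀ τ y b, |deriv (deriv (V τ y)) b| ≤ B
  abs_deriv_sub_le : ∀ α ∈ Ioo (0 : ℝ) 1, ∀ τ y y' b,
    |deriv (V τ y) b - deriv (V τ y') b| ≤ 2 * B * ‖y - y'‖ ^ α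

namespace C2BoundedBy

lemma hasDerivAt_last (hG : C2BoundedBy B G) (y : X) (e c b : ℝ) :
    HasDerivAt (fun b ↦ G (y, b + e) - c) (fderiv ℝ G (y, b + e) (0, 1)) b := by
  have hline : HasDerivAt (fun b : ℝ ↦ (y, b + e)) (0, 1) b :=
    (hasDerivAt_const b y).prodMk ((hasDerivAt_id b).add_const e)
  exact ((hG.contDiff.differentiable two_ne_zero _).hasFDerivAt.comp_hasDerivAt b hline).sub_const c

lemma abs_fderiv_last_le (hG : C2BoundedBy B G) (Y : X × ℝ) : |fderiv ℝ G Y (0, 1)| ≤ B := by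
  simpa using (fderiv ℝ G Y).le_of_opNorm_le (hG.norm_fderiv_le Y) (0, 1)

lemma abs_fderiv_last_sub_le (hG : C2BoundedBy B G) (Y Y' : X × ℝ) :
    |fderiv ℝ G Y (0, 1) - fderiv ℝ G Y' (0, 1)| ≤ B * ‖Y - Y'‖ := by
  simpa using
    (fderiv ℝ G Y - fderiv ℝ G Y').le_of_opNorm_le (hG.norm_fderiv_sub_le Y Y') (0, 1)

lemma abs_deriv_deriv_last_le (hG : C2BoundedBy B G) (y : X) (e c b : ℝ) :
    |deriv (deriv fun b ↦ G (y, b + e) - c) b| ≤ B := by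
  rw [funext fun b ↦ (hG.hasDerivAt_last y e c b).deriv]
  refine norm_deriv_le_of_lip' (f := fun b ↦ fderiv ℝ G (y, b + e) (0, 1)) hG.nonneg
    (Eventually.of_forall fun x ↦ (hG.abs_fderiv_last_sub_le _ _).trans_eq ?_)
  simp [Prod.norm_def]

lemma abs_deriv_last_sub_le (hG : C2BoundedBy B G) {α : ℝ} (hα : α ∈ Ioo 0 1) (e c : ℝ) (y y' : X)
    (b : ℝ) : |deriv (fun b ↦ G (y, b + e) - c) b - deriv (fun b ↦ G (y', b + e) - c) b| ≤
      2 * B * ‖y - y'‖ ^ α := by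
  rw [(hG.hasDerivAt_last y e c b).deriv, (hG.hasDerivAt_last y' e c b).deriv]
  refine le_two_mul_mul_rpow (norm_nonneg _) hα hG.nonneg ?_ ?_
  · simpa [Prod.norm_def] using hG.abs_fderiv_last_sub_le (y, b + e) (y', b + e)
  · linarith [abs_sub (fderiv ℝ G (y, b + e) (0, 1)) (fderiv ℝ G (y', b + e) (0, 1)),
      hG.abs_fderiv_last_le (y, b + e), hG.abs_fderiv_last_le (y', b + e)]

end C2BoundedBy

lemma hasRegularSlope_glue {U : ℝ → X × ℝ → ℝ} {T κ : ℝ} (hT : 0 < T)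
    (hU : ∀ t ∈ Icc 0 T, C2BoundedBy B (U t))
    (hslope : ∀ t ∈ Icc 0 T, ∀ y b b', b ≤ b' → -(b' - b) ≤ U t (y, b') - U t (y, b) ∧
      U t (y, b') - U t (y, b) ≤ κ * (b' - b)) (lam c : ℝ) :
    HasRegularSlope κ B (glue U T lam c) := by
  unfold glue
  have hG (τ : ℝ) := hU _ (windowTime_mem hT τ)
  have hsl (τ : ℝ) := hslope _ (windowTime_mem hT τ)
  have hdiff (τ : ℝ) (y : X) (e c b : ℝ) := ((hG τ).hasDerivAt_last y e c b).differentiableAt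
  refine ⟨fun τ y ↦ ?_, fun τ y b ↦ ?_, fun τ y b ↦ ?_,
    fun τ y b ↦ (hG τ).abs_deriv_deriv_last_le y _ _ b,
    fun α hα τ y y' b ↦ (hG τ).abs_deriv_last_sub_le hα _ _ y y' b⟩
  · exact ((hG τ).contDiff.comp (f := fun b ↦ (y, b + _)) (by fun_prop)).sub contDiff_const
  · refine le_deriv_of_forall_mul_sub_le (hdiff τ y _ _ b) fun b b' hb ↦ ?_
    linarith [(hsl τ y _ _ (add_le_add_left hb (windowIndex T τ * c))).1]
  · refine deriv_le_of_forall_sub_le_mul (hdiff τ y _ _ b) fun b b' hb ↦ ?_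
    linarith [(hsl τ y _ _ (add_le_add_left hb (windowIndex T τ * c))).2]

end LastVariable

/-! ### Correctors on windows of logarithmic length -/

section WindowLength

lemma abs_glue_le {X : Type*} {U : ℝ → X × ℝ → ℝ} {T lam lam' C : ℝ} (hT : 0 < T)
    (hU : ∀ t ∈ Icc 0 T, ∀ Y, |U t Y - lam' * t| ≤ C) (hlam : |lam' - lam| ≤ C / T)
    (c τ : ℝ) (y : X) (b : ℝ) : |glue U T lam c τ y b| ≤ 2 * C := by
  obtain ⟨ht₀, htT⟩ := windowTime_mem hT τ
  rw [glue]
  set t := windowTime T τ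
  have hdrift : |(lam' - lam) * t| ≤ C := by
    rw [abs_mul, abs_of_nonneg ht₀]
    calc |lam' - lam| * t ≤ C / T * T := mul_le_mul hlam htT ht₀ ((abs_nonneg _).trans hlam)
      _ = C := div_mul_cancel₀ C hT.ne'
  have hsum := (abs_add_le _ _).trans
    (add_le_add (hU t ⟨ht₀, htT⟩ (y, b + windowIndex T τ * c)) hdrift)
  rwa [sub_mul, sub_add_sub_cancel, ← two_mul] at hsum

/-- The number `⌊log (1 / 2η) / (K + 1)⌋`: the longest integer horizon on which smooth
approximations of accuracy `η` stay within distance one of the solution. -/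
noncomputable def windowLen (K η : ℝ) : ℕ := ⌊Real.log (2 * η)⁻¹ / (K + 1)⌋₊

lemma tendsto_windowLen {K : ℝ} (hK : 0 ≤ K) :
    Tendsto (windowLen K) (nhdsWithin 0 (Ioi 0)) atTop := by
  have hscale : Tendsto (fun η : ℝ ↦ (2 * η)⁻¹) (nhdsWithin 0 (Ioi 0)) atTop := by
    simp_rw [mul_inv]
    exact tendsto_inv_nhdsGT_zero.const_mul_atTop (by norm_num)
  exact tendsto_nat_floor_atTop.comp
    ((Real.tendsto_log_atTop.comp hscale).atTop_div_const (by linarith))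

lemma two_mul_mul_exp_windowLen_le_one {K η : ℝ} (hK : 0 ≤ K) (hη : 0 < η)
    (hpos : 0 < windowLen K η) : 2 * η * Real.exp ((K + 1) * windowLen K η) ≤ 1 := by
  have hfloor : windowLen K η ≤ Real.log (2 * η)⁻¹ / (K + 1) :=
    (Nat.le_floor_iff' hpos.ne').1 le_rfl
  rw [le_div_iff₀' (by linarith), Real.le_log_iff_exp_le (by positivity)] at hfloor
  rwa [mul_comm, ← le_div_iff₀ (by positivity), one_div]

lemma exp_mul_sub_one_le {K : ℝ} (hK : 0 ≤ K) (T : ℝ) :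
    Real.exp (K * T) - 1 ≤ K * Real.exp ((K + 1) * T) := by
  have hinv : Real.exp (-(K * T)) * Real.exp (K * T) = 1 := by
    rw [← Real.exp_add, neg_add_cancel, Real.exp_zero]
  calc Real.exp (K * T) - 1 ≤ K * T * Real.exp (K * T) := by
        nlinarith [Real.add_one_le_exp (-(K * T)), Real.exp_pos (K * T)]
    _ ≤ K * Real.exp T * Real.exp (K * T) := by
        gcongr
        linarith [Real.add_one_le_exp T]
    _ = K * Real.exp ((K + 1) * T) := by rw [mul_assoc, ← Real.exp_add]; ring_nf

end WindowLength

section Correctors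

lemma tendsto_atTop_add_const_of_abs_sub_le {H : ℝ → ℝ} {M : ℝ} (hH : ∀ L, |H L - L| ≤ M)
    (a : ℝ) : Tendsto (fun L ↦ H L + a) atTop atTop :=
  tendsto_atTop_add_const_right _ a <| tendsto_atTop_mono
    (fun L ↦ show L + -M ≤ H L by linarith [(abs_le.1 (hH L)).1])
    (tendsto_atTop_add_const_right _ (-M) tendsto_id)

lemma tendsto_atBot_add_const_of_abs_sub_le {H : ℝ → ℝ} {M : ℝ} (hH : ∀ L, |H L - L| ≤ M)
    (a : ℝ) : Tendsto (fun L ↦ H L + a) atBot atBot :=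
  tendsto_atBot_add_const_right _ a <| tendsto_atBot_mono
    (fun L ↦ show H L ≤ L + M by linarith [(abs_le.1 (hH L)).2])
    (tendsto_atBot_add_const_right _ M tendsto_id)

/-- The properties common to the approximate super- and subcorrectors: zero initial value, the bound
`C`, and the regularity in the last variable. -/
structure IsSmoothCorrector {N : ℕ} (C κ B : ℝ) (V : ℝ → EN N → ℝ → ℝ) : Prop
    extends HasRegularSlope κ B V where
  zero : ∀ y b, V 0 y b = 0
  abs_le : ∀ τ y b, |V τ y b| ≤ C

variable {N : ℕ} {s : ℝ} {g : EN N → ℝ} {f : ℝ → ℝ} {σ : ℝ → EN N → ℝ} {K Kσ M : ℝ} {p : EN N}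
  {L lam lam' C Co δ B h κ : ℝ} {T n : ℕ} {U : ℝ → EN N × ℝ → ℝ} {D : ℕ → EN N × ℝ → ℝ}
  {w : ℝ → EN N → ℝ}

lemma IsSmoothApprox.isSmoothCorrector_glue {k : EN N → ℝ} (hT : 0 < T)
    (A : IsSmoothApprox k f σ K M p L T Co δ B n h U D) (hκ : Real.exp (K * T) - 1 ≤ κ)
    (hU : ∀ t ∈ Icc (0 : ℝ) T, ∀ Y, |U t Y - lam * t| ≤ C) (hlam : |lam - lam'| ≤ C / T) :
    IsSmoothCorrector (2 * C) κ B (glue U T lam' (lam' * T)) := by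
  have hT' : (0 : ℝ) < T := Nat.cast_pos.2 hT
  refine ⟨hasRegularSlope_glue hT' A.c2BoundedBy (fun t ht y b b' hb ↦ ?_) _ _,
    glue_zero hT' A.zero, abs_glue_le hT' hU hlam _⟩
  obtain ⟨hge, hle⟩ := A.slope t ht y b b' hb
  exact ⟨hge, hle.trans (mul_le_mul_of_nonneg_right hκ (sub_nonneg.2 hb))⟩

/- Changing the slope by `C / T` compensates the error `C` accumulated over a window. -/
theorem IsErgodicSolution.exists_smoothCorrectors {η : ℝ}
    (E : IsErgodicSolution (levyKernel N s g) f σ p L w lam)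
    (hC : IsCellData (levyKernel N s g) f σ K Kσ M) (hCo : 0 ≤ Co)
    (hS : HasSmoothApprox (levyKernel N s g) f σ K M Co) (hη : 0 < η) (hT : 0 < windowLen K η)
    (hCeq : 2 * Co + 3 + 2 * M = C) :
    ∃ B Vp Vm,
      IsSmoothCorrector (2 * C) (K / η) B Vp ∧ IsSmoothCorrector (2 * C) (K / η) B Vm ∧
      IsSupersolNp1 N s g
        (fun τ y b v _ _ I _ ↦ L + I - f (v + ⟪p, y⟫ + b + (lam + C / windowLen K η) * τ)
          + σ τ y - η - (lam + C / windowLen K η)) (fun _ _ ↦ 0) Vp ∧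
      IsSubsolNp1 N s g
        (fun τ y b v _ _ I _ ↦ L + I - f (v + ⟪p, y⟫ + b + (lam + -(C / windowLen K η)) * τ)
          + σ τ y + η - (lam + -(C / windowLen K η))) (fun _ _ ↦ 0) Vm := by
  have hηT := two_mul_mul_exp_windowLen_le_one hC.K_nonneg hη hT
  set T := windowLen K η
  have hT' : (0 : ℝ) < T := Nat.cast_pos.2 hT
  have hC₀ : 0 ≤ C / T := div_nonneg (by linarith [hC.M_nonneg]) hT'.le
  have hCT : C / T * T = C := div_mul_cancel₀ C hT'.ne'
  obtain ⟨B, n, h, U, D, A⟩ := hS p L T hT' η hη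
  have hU : ∀ t ∈ Icc (0 : ℝ) T, ∀ Y, |U t Y - lam * t| ≤ C := fun t ht Y ↦
    hCeq ▸ E.abs_approx_sub_le hC hCo hS A hη hηT ht Y
  have hUT (Y : EN N × ℝ) := abs_le.1 (hU T ⟨hT'.le, le_rfl⟩ Y)
  have hκ : Real.exp (K * T) - 1 ≤ K / η := by
    refine (exp_mul_sub_one_le hC.K_nonneg T).trans
      (mul_le_mul_of_nonneg_left ?_ hC.K_nonneg)
    rw [← one_div, le_div_iff₀' hη]
    nlinarith [Real.exp_pos ((K + 1) * T)]
  have hp := A.isSmoothCorrector_glue hT hκ hU (lam' := lam + C / T)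
    (by rw [sub_add_cancel_left, abs_neg, abs_of_nonneg hC₀])
  have hm := A.isSmoothCorrector_glue hT hκ hU (lam' := lam + -(C / T))
    (by rw [sub_add_cancel_left, neg_neg, abs_of_nonneg hC₀])
  exact ⟨B, _, _, hp, hm,
    A.isSupersolNp1_glue hC hT (fun Y ↦ by rw [add_mul, hCT]; linarith [(hUT Y).2]) hp.abs_le,
    A.isSubsolNp1_glue hC hT (fun Y ↦ by rw [add_mul, neg_mul, hCT]; linarith [(hUT Y).1])
      hm.abs_le⟩

lemma exists_forall_windowLen_pos {K : ℝ} (hK : 0 ≤ K) :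
    ∃ η₀ > 0, ∀ η, 0 < η → η < η₀ → 0 < windowLen K η := by
  obtain ⟨η₀, hη₀, hsub⟩ := (nhdsGT_basis (0 : ℝ)).eventually_iff.1
    ((tendsto_windowLen hK).eventually_gt_atTop 0)
  exact ⟨η₀, hη₀, fun η h₀ h₁ ↦ hsub ⟨h₀, h₁⟩⟩

lemma exists_forall_abs_div_windowLen_le {K ε : ℝ} (hK : 0 ≤ K) (C : ℝ) (hε : 0 < ε) :
    ∃ η₁ > 0, ∀ η, 0 < η → η < η₁ → |C / windowLen K η| ≤ ε := by
  have hlim : Tendsto (fun η ↦ |C / windowLen K η|) (nhdsWithin 0 (Ioi 0)) (nhds 0) := by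
    simpa using ((tendsto_natCast_atTop_atTop.comp (tendsto_windowLen hK)).const_div_atTop C).abs
  obtain ⟨η₁, hη₁, hsub⟩ := (nhdsGT_basis (0 : ℝ)).eventually_iff.1 (hlim.eventually_le_const hε)
  exact ⟨η₁, hη₁, fun η h₀ h₁ ↦ hsub ⟨h₀, h₁⟩⟩

end Correctors

/-- **Smooth approximate correctors (Proposition 3.3).** Under (H1)–(H4), for every small
`η > 0` there are `λ⁺_η(p,L)`, `λ⁻_η(p,L)` and bounded super/subcorrectors `V⁺_η, V⁻_η` of
`λ^±_η + ∂_τ V = L + I_s[V(τ,·,y_{N+1})] − W'(V + P·Y + λ^±_η τ) + σ(τ,y) ∓ o_η(1)`,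
`V(0,Y)=0`, with `λ^±_η → H̄(p,L)` locally uniformly, `λ^±_η` monotone and coercive in `L`,
`|V^±_η| ≤ C` with `C` independent of `η,p,L`, `V^±_η` of class `C²` in `y_{N+1}` with
`−1 ≤ ∂_{y_{N+1}}V^±_η ≤ ‖W''‖_∞/η`, bounded second derivative in `y_{N+1}`, and
`∂_{y_{N+1}}V^±_η` Hölder in `y` for every exponent `0 < α < min{1,2s}`. -/
theorem smooth_approximate_correctors
    (N : ℕ) (hN : 1 ≤ N) (s : ℝ) (hs : s ∈ Set.Ioo (0:ℝ) 1)
    (g : EN N → ℝ) (hg : H1 N g)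
    (W : ℝ → ℝ) (hW : H2 W)
    (σ : ℝ → EN N → ℝ) (hσ : H3 N σ)
    (u₀ : EN N → ℝ) (hu₀ : H4 N u₀)
    -- `H̄ = λ(p,L)` is the effective Hamiltonian given by the ergodicity theorem:
    (Hbar : EN N → ℝ → ℝ)
    (hHbar : ∀ (p : EN N) (L : ℝ), ∃ w : ℝ → EN N → ℝ,
      IsSol N s g (cellF N W σ p L) (fun _ => 0) w ∧ SlopeLim N w (Hbar p L)) :
    ∃ η₀ > (0:ℝ), ∃ lamP lamM : ℝ → EN N → ℝ → ℝ, ∃ oη : ℝ → ℝ, ∃ C > (0:ℝ),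
      -- `0 ≤ o_η(1) → 0` as `η → 0⁺`:
      (∀ η, 0 < η → η < η₀ → 0 ≤ oη η) ∧
      Tendsto oη (nhdsWithin 0 (Ioi 0)) (nhds 0) ∧
      -- `λ^±_η(p,L) → H̄(p,L)` as `η → 0⁺`, locally uniformly in `(p,L)`:
      (∀ ε > (0:ℝ), ∀ A > (0:ℝ), ∃ η₁ > (0:ℝ), ∀ η, 0 < η → η < η₁ →
        ∀ (p : EN N) (L : ℝ), ‖p‖ ≤ A → |L| ≤ A →
          |lamP η p L - Hbar p L| ≤ ε ∧ |lamM η p L - Hbar p L| ≤ ε) ∧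
      -- `λ^±_η` satisfy (i) and (ii) of the effective Hamiltonian properties:
      (∀ η, 0 < η → η < η₀ → ∀ p : EN N,
        Tendsto (lamP η p) atTop atTop ∧ Tendsto (lamP η p) atBot atBot ∧
        Monotone (lamP η p) ∧
        Tendsto (lamM η p) atTop atTop ∧ Tendsto (lamM η p) atBot atBot ∧
        Monotone (lamM η p)) ∧
      -- the approximate correctors:
      ∀ η, 0 < η → η < η₀ → ∀ (p : EN N) (L : ℝ),
        ∃ Vp Vm : ℝ → EN N → ℝ → ℝ,
          -- `V⁺_η` is a supersolution, `V⁻_η` a subsolution, both vanishing at `τ = 0`: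
          (∀ (y : EN N) (yn : ℝ), Vp 0 y yn = 0 ∧ Vm 0 y yn = 0) ∧
          IsSupersolNp1 N s g
            (fun τ y yn v _ _ I _ =>
              L + I - deriv W (v + ⟪p, y⟫ + yn + lamP η p L * τ) + σ τ y
                - oη η - lamP η p L)
            (fun _ _ => 0) Vp ∧
          IsSubsolNp1 N s g
            (fun τ y yn v _ _ I _ =>
              L + I - deriv W (v + ⟪p, y⟫ + yn + lamM η p L * τ) + σ τ y
                + oη η - lamM η p L)
            (fun _ _ => 0) Vm ∧
          -- uniform bound:
          (∀ (τ : ℝ) (y : EN N) (yn : ℝ), 0 ≤ τ → |Vp τ y yn| ≤ C ∧ |Vm τ y yn| ≤ C) ∧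
          -- `C²` regularity in `y_{N+1}`:
          (∀ (τ : ℝ) (y : EN N), ContDiff ℝ 2 (fun yn => Vp τ y yn) ∧
            ContDiff ℝ 2 (fun yn => Vm τ y yn)) ∧
          -- gradient bounds in `y_{N+1}`:
          (∀ (τ : ℝ) (y : EN N) (yn : ℝ), 0 ≤ τ →
            -1 ≤ deriv (fun z => Vp τ y z) yn ∧
            deriv (fun z => Vp τ y z) yn ≤ supW'' W / η ∧
            -1 ≤ deriv (fun z => Vm τ y z) yn ∧
            deriv (fun z => Vm τ y z) yn ≤ supW'' W / η) ∧
          -- bounded second derivative in `y_{N+1}`: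
          (∃ Cη : ℝ, ∀ (τ : ℝ) (y : EN N) (yn : ℝ), 0 ≤ τ →
            |deriv (deriv (fun z => Vp τ y z)) yn| ≤ Cη ∧
            |deriv (deriv (fun z => Vm τ y z)) yn| ≤ Cη) ∧
          -- Hölder continuity in `y` of `∂_{y_{N+1}}V^±_η`:
          (∀ α : ℝ, 0 < α → α < min 1 (2*s) →
            ∃ Cηα : ℝ, ∀ (τ : ℝ) (y y' : EN N) (yn : ℝ), 0 ≤ τ →
              |deriv (fun z => Vp τ y z) yn - deriv (fun z => Vp τ y' z) yn| ≤
                Cηα * ‖y - y'‖ ^ α ∧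
              |deriv (fun z => Vm τ y z) yn - deriv (fun z => Vm τ y' z) yn| ≤
                Cηα * ‖y - y'‖ ^ α) := by
  obtain ⟨Kσ, M, hC⟩ := exists_isCellData hN hs hg hW hσ
  obtain ⟨Co, hCo, hS⟩ := exists_hasSmoothApprox hC
  obtain ⟨C, hCeq⟩ : ∃ C, 2 * Co + 3 + 2 * M = C := ⟨_, rfl⟩
  obtain ⟨η₀, hη₀, hlen⟩ := exists_forall_windowLen_pos hC.K_nonneg
  choose w hw hlim using hHbar
  have E (p : EN N) (L : ℝ) := (hw p L).isErgodicSolution (hlim p L)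
  have hmono (p : EN N) : Monotone (Hbar p) := fun L L' ↦ (E p L).slope_mono (E p L') hC hS
  have hH (p : EN N) (L : ℝ) : |Hbar p L - L| ≤ M := (E p L).abs_slope_sub_le hC hS
  have htop (p : EN N) := tendsto_atTop_add_const_of_abs_sub_le (hH p)
  have hbot (p : EN N) := tendsto_atBot_add_const_of_abs_sub_le (hH p)
  refine ⟨η₀, hη₀, fun η p L ↦ Hbar p L + C / windowLen (supW'' W) η,
    fun η p L ↦ Hbar p L + -(C / windowLen (supW'' W) η), id, 2 * C, by linarith [hC.M_nonneg],
    fun η h₀ _ ↦ h₀.le, nhdsWithin_le_nhds, fun ε hε _ _ ↦ ?_, fun η _ _ p ↦ ⟨htop p _, hbot p _,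
      (hmono p).add_const _, htop p _, hbot p _, (hmono p).add_const _⟩, fun η h₀ h₁ p L ↦ ?_⟩
  · obtain ⟨η₁, hη₁, hsmall⟩ := exists_forall_abs_div_windowLen_le hC.K_nonneg C hε
    exact ⟨η₁, hη₁, fun η h₀ h₁ p L _ _ ↦ by simpa using hsmall η h₀ h₁⟩
  · obtain ⟨B, Vp, Vm, hp, hm, hsuper, hsub⟩ :=
      (E p L).exists_smoothCorrectors hC hCo hS h₀ (hlen η h₀ h₁) hCeq
    exact ⟨Vp, Vm, fun y b ↦ ⟨hp.zero y b, hm.zero y b⟩, hsuper, hsub,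
      fun τ y b _ ↦ ⟨hp.abs_le τ y b, hm.abs_le τ y b⟩,
      fun τ y ↦ ⟨hp.contDiff τ y, hm.contDiff τ y⟩,
      fun τ y b _ ↦ ⟨hp.neg_one_le_deriv τ y b, hp.deriv_le τ y b, hm.neg_one_le_deriv τ y b,
        hm.deriv_le τ y b⟩,
      ⟨B, fun τ y b _ ↦ ⟨hp.abs_deriv_deriv_le τ y b, hm.abs_deriv_deriv_le τ y b⟩⟩,
      fun α hα hα' ↦ have hα₁ : α ∈ Ioo 0 1 := ⟨hα, hα'.trans_le (min_le_left _ _)⟩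
        ⟨2 * B, fun τ y y' b _ ↦
          ⟨hp.abs_deriv_sub_le α hα₁ τ y y' b, hm.abs_deriv_sub_le α hα₁ τ y y' b⟩⟩⟩
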